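/- For n = 68533 = 5909 + 62624, the least index i with |a(68533,i)| = M_68533 is L(68533) = (68533·68534 - 2·3735)/4 - 19787. -/

import Mathlib

open Polynomial

/-- `a n i` is the coefficient of `q^i` in `(q;q)_n = ∏_{k=1}^n (1 - q^k)` over `ℤ`. -/
noncomputable def a (n i : ℕ) : ℤ :=
  (∏ k ∈ Finset.Icc 1 n, (1 - (X : Polynomial ℤ) ^ k)).coeff i

/-- `M n` is the maximum of `|a n i|` over `0 ≤ i ≤ n(n+1)/2`. -/
noncomputable def M (n : ℕ) : ℕ :=
  (Finset.range (n * (n + 1) / 2 + 1)).sup fun i => (a n i).natAbs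

/-- `L n` is the least index `i` with `|a n i| = M n`. -/
noncomputable def L (n : ℕ) : ℕ :=
  sInf {i : ℕ | (a n i).natAbs = M n}

/-!
At `q = exp (iθ)` the polynomial `(q;q)_n` is, up to a phase, the real product
`S(θ) = ∏_{k=1}^n 2 sin (kθ/2)`. Hence for `n ≡ 1 [MOD 4]` its coefficients are values of a sine
transform, `π a(n,i) = F(n(n+1)/4 - i)` with `F(x) = ∫₀^π S(θ) sin (xθ) dθ`, and for `n = 68533`
one has to show that `|F|`, restricted to the positive half-integers, is largest exactly at
`21654 + 1/2`.

Beyond its first zero `2π/n`, `|S|` is at most `e^{0.19 n}`, by a truncated expansion of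
`log |1 - e^{ikθ}|` whose terms are Dirichlet kernels, whereas `S(2π/86616) ≥ e^{0.192 n}`. So
only the arc `[0, 2π/n]` matters. There `S` is positive with a single sharp peak at some `τ`
between `2π/86620` and `2π/86616`, and its logarithmic derivative is a sum of values of `t cot t`,
which can be estimated closely. Integrating by parts against it gives the signs of the two first
differences of `F` at the peak. Up to `34266 + 1/2` the transform is positive and has negative
second differences, so these signs suffice. For larger `j`, bounds on the variance of `S` about
`τ` show that `sin ((21654 + 1/2) x)`, which is close to `1` near `τ`, has a larger integral
against `S` than `± sin (j x)`.
-/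

namespace SineProduct

open Real Finset

/-! ### Coefficients as values of a sine transform -/

/-- `S_n(θ) = ∏_{k=1}^n 2 sin (kθ/2)`: up to a phase, the value of `(q;q)_n` at `q = exp (iθ)`. -/
noncomputable def sineProd (n : ℕ) (θ : ℝ) : ℝ :=
  ∏ k ∈ range n, 2 * sin (((k : ℝ) + 1) * (θ / 2))

/-- The sine transform of `sineProd n` on `[0, π]`. Its values at the points `n (n + 1) / 4 - i` are
`π` times the coefficients `a n i` when `n ≡ 1 [MOD 4]`. -/
noncomputable def sineTransform (n : ℕ) (x : ℝ) : ℝ :=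
  ∫ θ in (0 : ℝ)..π, sineProd n θ * sin (x * θ)

@[fun_prop]
lemma continuous_sineProd (n : ℕ) : Continuous (sineProd n) := by
  unfold sineProd
  fun_prop

lemma sineProd_succ (n : ℕ) (θ : ℝ) :
    sineProd (n + 1) θ = sineProd n θ * (2 * sin (((n : ℝ) + 1) * (θ / 2))) :=
  prod_range_succ _ _

lemma one_sub_cexp_mul_I (x : ℝ) :
    (1 : ℂ) - Complex.exp (x * Complex.I) =
      Complex.exp (x / 2 * Complex.I) * (-Complex.I) * ((2 * sin (x / 2) : ℝ) : ℂ) := by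
  have half_angle : Complex.exp (x * Complex.I) = Complex.exp (x / 2 * Complex.I) ^ 2 := by
    rw [← Complex.exp_nat_mul]
    congr 1
    push_cast
    ring
  rw [half_angle, Complex.exp_mul_I]
  push_cast
  linear_combination (-1) * Complex.sin_sq_add_cos_sq ((x : ℂ) / 2) +
    Complex.sin ((x : ℂ) / 2) ^ 2 * Complex.I_sq

lemma prod_one_sub_cexp_pow (n : ℕ) (θ : ℝ) :
    ∏ k ∈ range n, (1 - Complex.exp (θ * Complex.I) ^ (k + 1)) =
      Complex.exp ((n * (n + 1) / 4 * θ : ℝ) * Complex.I) * (-Complex.I) ^ n * sineProd n θ := by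
  induction n with
  | zero => simp [sineProd]
  | succ n ih =>
    have factor := one_sub_cexp_mul_I (((n : ℝ) + 1) * θ)
    have phase : Complex.exp (((n + 1 : ℕ) * ((n + 1 : ℕ) + 1) / 4 * θ : ℝ) * Complex.I) =
        Complex.exp ((n * (n + 1) / 4 * θ : ℝ) * Complex.I) *
          Complex.exp (((((n : ℝ) + 1) * θ : ℝ) : ℂ) / 2 * Complex.I) := by
      rw [← Complex.exp_add]
      congr 1
      push_cast
      ring
    have power : Complex.exp (θ * Complex.I) ^ (n + 1) =
        Complex.exp ((((n : ℝ) + 1) * θ : ℝ) * Complex.I) := by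
      rw [← Complex.exp_nat_mul]
      congr 1
      push_cast
      ring
    rw [prod_range_succ, ih, power, factor, sineProd_succ, phase, ← mul_div_assoc]
    push_cast
    ring

lemma natDegree_prod_one_sub_X_pow_le (n : ℕ) :
    (∏ k ∈ Icc 1 n, (1 - (X : Polynomial ℤ) ^ k)).natDegree ≤ n * (n + 1) / 2 :=
  calc (∏ k ∈ Icc 1 n, (1 - (X : Polynomial ℤ) ^ k)).natDegree
      ≤ ∑ k ∈ Icc 1 n, (1 - (X : Polynomial ℤ) ^ k).natDegree := natDegree_prod_le _ _
    _ ≤ ∑ k ∈ Icc 1 n, k := sum_le_sum fun k _ =>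
        (natDegree_sub_le _ _).trans (by rw [natDegree_one, natDegree_X_pow, Nat.zero_max])
    _ = ∑ k ∈ range (n + 1), k := by
        rw [range_eq_Ico, sum_eq_sum_Ico_succ_bot n.succ_pos, zero_add, zero_add]
        rfl
    _ = n * (n + 1) / 2 := by rw [sum_range_id, Nat.add_sub_cancel, mul_comm]

lemma sum_a_mul_pow (n : ℕ) (z : ℂ) :
    ∑ k ∈ range (n * (n + 1) / 2 + 1), (a n k : ℂ) * z ^ k = ∏ k ∈ range n, (1 - z ^ (k + 1)) := by
  have eval_eq := eval₂_eq_sum_range' (Int.castRingHom ℂ)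
    (Nat.lt_succ_of_le (natDegree_prod_one_sub_X_pow_le n)) z
  simp only [eq_intCast] at eval_eq
  unfold a
  rw [← eval_eq, eval₂_finsetProd, show Icc 1 n = Ico 1 (n + 1) from rfl, prod_Ico_eq_prod_range]
  refine prod_congr (by rw [Nat.add_sub_cancel]) fun k _ => ?_
  rw [eval₂_sub, eval₂_one, eval₂_pow, eval₂_X, add_comm 1 k]

lemma sum_a_mul_cexp (n : ℕ) (x θ : ℝ) :
    ∑ k ∈ range (n * (n + 1) / 2 + 1), (a n k : ℝ) * Complex.exp (((k - x) * θ : ℝ) * Complex.I) =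
      sineProd n θ *
        ((-Complex.I) ^ n * Complex.exp (((n * (n + 1) / 4 - x) * θ : ℝ) * Complex.I)) := by
  have shift (y : ℝ) : Complex.exp (((y - x) * θ : ℝ) * Complex.I) =
      Complex.exp ((y * θ : ℝ) * Complex.I) * Complex.exp (-(x * θ : ℝ) * Complex.I) := by
    rw [← Complex.exp_add]
    congr 1
    push_cast
    ring
  have power (k : ℕ) : Complex.exp (((k : ℝ) * θ : ℝ) * Complex.I) =
      Complex.exp (θ * Complex.I) ^ k := by
    rw [← Complex.exp_nat_mul]
    congr 1
    push_cast
    ring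
  simp only [shift, power, ← mul_assoc, ← sum_mul, Complex.ofReal_intCast]
  rw [sum_a_mul_pow, prod_one_sub_cexp_pow]
  ring

lemma neg_I_pow_of_mod_four_eq_one {n : ℕ} (hn : n % 4 = 1) :
    (-Complex.I) ^ n = -Complex.I := by
  have period : (-Complex.I) ^ 4 = 1 := by rw [Even.neg_pow (by decide), Complex.I_pow_four]
  rw [← Nat.div_add_mod n 4, hn, pow_add, pow_mul, period, one_pow, one_mul, pow_one]

lemma sum_a_mul_cos {n : ℕ} (hn : n % 4 = 1) (x θ : ℝ) :
    ∑ k ∈ range (n * (n + 1) / 2 + 1), (a n k : ℝ) * cos ((k - x) * θ) =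
      sineProd n θ * sin ((n * (n + 1) / 4 - x) * θ) := by
  have real_part := congrArg Complex.re (sum_a_mul_cexp n x θ)
  simpa [Complex.re_sum, neg_I_pow_of_mod_four_eq_one hn, Complex.re_ofReal_mul,
    Complex.exp_ofReal_mul_I_re, Complex.exp_ofReal_mul_I_im, -Complex.ofReal_mul,
    -Complex.ofReal_sub, -Complex.ofReal_intCast] using real_part

lemma integral_cos_int_mul (m : ℤ) :
    ∫ θ in (0 : ℝ)..π, cos ((m : ℝ) * θ) = if m = 0 then π else 0 := by
  split_ifs with hm
  · simp [hm]
  · rw [intervalIntegral.integral_comp_mul_left cos (Int.cast_ne_zero.2 hm)]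
    simp [sin_int_mul_pi]

theorem a_mul_pi_eq_sineTransform {n i : ℕ} (hn : n % 4 = 1) (hi : i ≤ n * (n + 1) / 2) :
    (a n i : ℝ) * π = sineTransform n (n * (n + 1) / 4 - i) := by
  have orthogonality (k : ℕ) : ∫ θ in (0 : ℝ)..π, (a n k : ℝ) * cos ((k - i) * θ) =
      if k = i then (a n i : ℝ) * π else 0 := by
    have integral_eq := integral_cos_int_mul ((k : ℤ) - i)
    push_cast at integral_eq
    rw [intervalIntegral.integral_const_mul, integral_eq]
    by_cases hki : k = i
    · simp [hki]
    · rw [if_neg (by lia), if_neg hki, mul_zero]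
  simp_rw [sineTransform, ← sum_a_mul_cos hn]
  rw [intervalIntegral.integral_finsetSum
      fun k _ => Continuous.intervalIntegrable (by fun_prop) _ _,
    sum_congr rfl fun k _ => orthogonality k, sum_ite_eq', if_pos (mem_range.2 (by lia))]

/-! ### The product away from the main arc -/

/-- `∑_{k=1}^n cos (kφ)`, half of the Dirichlet kernel without its constant term. -/
noncomputable def cosSum (n : ℕ) (φ : ℝ) : ℝ := ∑ k ∈ range n, cos (((k : ℝ) + 1) * φ)

lemma cosSum_zero_right (n : ℕ) : cosSum n 0 = n := by simp [cosSum]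

lemma cosSum_neg (n : ℕ) (φ : ℝ) : cosSum n (-φ) = cosSum n φ := by simp [cosSum]

lemma cosSum_sub_int_mul_two_pi (n : ℕ) (φ : ℝ) (m : ℤ) :
    cosSum n (φ - m * (2 * π)) = cosSum n φ := by
  refine sum_congr rfl fun k _ => ?_
  have multiple : ((k : ℝ) + 1) * (φ - m * (2 * π)) =
      ((k : ℝ) + 1) * φ - (((k + 1) * m : ℤ) : ℝ) * (2 * π) := by
    push_cast
    ring
  rw [multiple, cos_sub_int_mul_two_pi]

lemma two_mul_sin_mul_cosSum (n : ℕ) (φ : ℝ) :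
    2 * sin (φ / 2) * cosSum n φ = sin ((n + 1 / 2) * φ) - sin (φ / 2) := by
  have upper : (n + 1 / 2 : ℝ) * φ = ((n : ℝ) + 1) / 2 * φ + n * φ / 2 := by ring
  have lower : φ / 2 = ((n : ℝ) + 1) / 2 * φ - n * φ / 2 := by ring
  have sum_eq : cosSum n φ = ∑ k ∈ range n, cos (φ * k + φ) :=
    sum_congr rfl fun k _ => by ring_nf
  have centre : ((n : ℝ) - 1) * φ / 2 + φ = ((n : ℝ) + 1) / 2 * φ := by ring
  rw [mul_assoc, sum_eq, sin_mul_sum_cos, centre, upper, lower, sin_add, sin_sub]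
  ring

lemma neg_cosSum_le {n : ℕ} {φ s p : ℝ} (hs : 0 < s) (hsin : s ≤ sin (φ / 2)) (hp : 0 ≤ p)
    (h : -sin ((n + 1 / 2) * φ) ≤ p) : -cosSum n φ ≤ 1 / 2 + p / (2 * s) := by
  have identity := two_mul_sin_mul_cosSum n φ
  rcases le_or_gt (-cosSum n φ - 1 / 2) 0 with small | large
  · have : 0 ≤ p / (2 * s) := by positivity
    linarith
  · have : -cosSum n φ - 1 / 2 ≤ p / (2 * s) := by
      rw [le_div_iff₀ (by positivity)]
      nlinarith
    linarith

lemma neg_cosSum_le_of_le_abs_sin (n : ℕ) {φ s : ℝ} (hs : 0 < s) (h : s ≤ |sin (φ / 2)|) :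
    -cosSum n φ ≤ 1 / 2 + 1 / (2 * s) := by
  rcases le_total 0 (sin (φ / 2)) with sin_nonneg | sin_nonpos
  · rw [abs_of_nonneg sin_nonneg] at h
    exact neg_cosSum_le hs h zero_le_one (neg_le.2 (neg_one_le_sin _))
  · rw [abs_of_nonpos sin_nonpos, ← sin_neg, ← neg_div] at h
    rw [← cosSum_neg]
    exact neg_cosSum_le hs h zero_le_one (neg_le.2 (neg_one_le_sin _))

lemma neg_cosSum_le_of_neg_sin_le {n : ℕ} {φ p : ℝ} (hφ₀ : 0 < φ) (hφ₁ : φ ≤ 0.21) (hp : 0 ≤ p)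
    (h : -sin ((n + 1 / 2) * φ) ≤ p) : -cosSum n φ ≤ 1 / 2 + 1.0019 * p / φ := by
  have cubic := sin_gt_sub_cube (half_pos hφ₀)
  have hsin : φ / 2 * (1 / 1.0019) ≤ sin (φ / 2) := by nlinarith [mul_pos hφ₀ hφ₀]
  refine (neg_cosSum_le (by positivity) hsin hp h).trans_eq ?_
  field_simp

lemma neg_sin_le_div {x : ℝ} (hx : 0 < x) : -sin x ≤ x / (π + 1) := by
  rw [le_div_iff₀ (by positivity)]
  rcases le_or_gt (π + 1) x with large | not_large
  · nlinarith [neg_one_le_sin x, pi_pos]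
  rcases le_or_gt π x with middle | small
  · have := sin_le (sub_nonneg.2 middle)
    rw [sin_sub_pi] at this
    nlinarith [pi_pos]
  · nlinarith [sin_pos_of_pos_of_lt_pi hx small, pi_pos]

lemma sub_cube_le_sin_of_le {x y : ℝ} (hx : 0 ≤ x) (hxy : x ≤ y) (hy : y ≤ π / 2) :
    x - x ^ 3 / 6 ≤ sin y :=
  (sin_ge_sub_cube hx).trans (sin_le_sin_of_le_of_le_pi_div_two (by linarith [pi_pos]) hy hxy)

lemma exists_cosSum_eq_of_mem_Icc (n : ℕ) (φ : ℝ) :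
    ∃ φ' ∈ Set.Icc 0 π, cosSum n φ' = cosSum n φ := by
  set m := round (φ / (2 * π))
  have reduced : |φ - m * (2 * π)| ≤ π := by
    have factor : φ - m * (2 * π) = (φ / (2 * π) - m) * (2 * π) := by field_simp
    rw [factor, abs_mul, abs_of_pos two_pi_pos]
    nlinarith [pi_pos, abs_sub_round (φ / (2 * π))]
  refine ⟨|φ - m * (2 * π)|, ⟨abs_nonneg _, reduced⟩, ?_⟩
  rcases abs_choice (φ - m * (2 * π)) with h | h
  · rw [h, cosSum_sub_int_mul_two_pi]
  · rw [h, cosSum_neg, cosSum_sub_int_mul_two_pi]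

lemma neg_cosSum_le_mul {n : ℕ} (hn : 10000 ≤ n) (φ : ℝ) : -cosSum n φ ≤ 0.243 * n := by
  have hn' : (10000 : ℝ) ≤ n := by exact_mod_cast hn
  obtain ⟨φ', ⟨nonneg, le_pi⟩, reduction⟩ := exists_cosSum_eq_of_mem_Icc n φ
  rw [← reduction]
  rcases nonneg.eq_or_lt with rfl | pos
  · rw [cosSum_zero_right]
    linarith
  rcases le_or_gt φ' 0.21 with small | large
  · refine (neg_cosSum_le_of_neg_sin_le pos small (by positivity)
      (neg_sin_le_div (by positivity))).trans ?_
    have cancel : 1.0019 * ((n + 1 / 2) * φ' / (π + 1)) / φ' = 1.0019 * (n + 1 / 2) / (π + 1) := by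
      field_simp
    have numeric : 1.0019 * (n + 1 / 2) / (π + 1) ≤ 0.24194 * (n + 1 / 2) := by
      rw [div_le_iff₀ (by positivity)]
      nlinarith [pi_gt_d6]
    rw [cancel]
    linarith
  · have hsin : (0.1 : ℝ) ≤ sin (φ' / 2) := le_trans (by norm_num)
      (sub_cube_le_sin_of_le (x := 0.105) (by norm_num) (by linarith) (by linarith))
    have := neg_cosSum_le_of_le_abs_sin n (by norm_num) (hsin.trans (le_abs_self _))
    norm_num at this
    linarith

lemma norm_one_sub_le_mul_norm_one_sub_mul {w : ℂ} (hw : ‖w‖ = 1) {ρ : ℝ} (hρ : 0 ≤ ρ) :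
    ‖1 - w‖ ≤ 2 / (1 + ρ) * ‖1 - ρ * w‖ := by
  rw [div_mul_eq_mul_div, le_div_iff₀ (by positivity)]
  refine (sq_le_sq₀ (by positivity) (by positivity)).1 ?_
  have circle : w.re * w.re + w.im * w.im = 1 := by
    rw [← Complex.normSq_apply, Complex.normSq_eq_norm_sq, hw, one_pow]
  have re_ge : -1 ≤ w.re := (abs_le.1 ((Complex.abs_re_le_norm w).trans hw.le)).1
  rw [mul_pow, mul_pow, ← Complex.normSq_eq_norm_sq, ← Complex.normSq_eq_norm_sq,
    Complex.normSq_apply, Complex.normSq_apply]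
  simp only [Complex.sub_re, Complex.one_re, Complex.sub_im, Complex.one_im, Complex.re_ofReal_mul,
    Complex.im_ofReal_mul]
  have gap : 0 ≤ 2 * (1 - ρ) ^ 2 * (1 + w.re) := by nlinarith [sq_nonneg (1 - ρ)]
  linear_combination gap + ((1 + ρ) ^ 2 - 4 * ρ ^ 2) * circle

lemma re_logTaylor_neg_mul_cexp (N : ℕ) (ρ φ : ℝ) :
    (Complex.logTaylor (N + 1) (-(ρ * Complex.exp (φ * Complex.I)))).re =
      -∑ m ∈ range N, ρ ^ (m + 1) / (m + 1) * cos (((m : ℝ) + 1) * φ) := by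
  have term (m : ℕ) : (-1 : ℂ) ^ (m + 1 + 1) * (-(ρ * Complex.exp (φ * Complex.I))) ^ (m + 1) /
      ((m + 1 : ℕ) : ℂ) = ((-(ρ ^ (m + 1) / (m + 1)) : ℝ) : ℂ) *
        Complex.exp ((((m : ℝ) + 1) * φ : ℝ) * Complex.I) := by
    have signs : (-1 : ℂ) ^ (m + 1) * (-1) ^ (m + 1) = 1 := by rw [← mul_pow]; simp
    have angle : ((m + 1 : ℕ) : ℂ) * (φ * Complex.I) =
        (((m : ℝ) + 1) * φ : ℝ) * Complex.I := by
      push_cast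
      ring
    rw [neg_pow (_ * _), mul_pow, ← Complex.exp_nat_mul, pow_succ (-1 : ℂ) (m + 1), angle]
    push_cast
    linear_combination (-(ρ : ℂ) ^ (m + 1) *
      Complex.exp (((m : ℂ) + 1) * φ * Complex.I) / (m + 1)) * signs
  rw [Complex.logTaylor, sum_range_succ', Complex.add_re, Complex.re_sum, ← sum_neg_distrib]
  simp only [Nat.cast_zero, div_zero, Complex.zero_re, add_zero]
  refine sum_congr rfl fun m _ => ?_
  rw [term, Complex.re_ofReal_mul, Complex.exp_ofReal_mul_I_re]
  ring

lemma log_norm_one_sub_mul_cexp_le (N : ℕ) {ρ : ℝ} (hρ₀ : 0 ≤ ρ) (hρ₁ : ρ < 1) (φ : ℝ) :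
    log ‖(1 : ℂ) - ρ * Complex.exp (φ * Complex.I)‖ ≤
      ρ ^ (N + 1) * (1 - ρ)⁻¹ / (N + 1) -
        ∑ m ∈ range N, ρ ^ (m + 1) / (m + 1) * cos (((m : ℝ) + 1) * φ) := by
  set z : ℂ := -(ρ * Complex.exp (φ * Complex.I)) with hz
  have norm_z : ‖z‖ = ρ := by
    rw [hz, norm_neg, norm_mul, Complex.norm_exp_ofReal_mul_I, Complex.norm_real, mul_one,
      norm_of_nonneg hρ₀]
  have remainder := (Complex.re_le_norm _).trans
    (Complex.norm_log_sub_logTaylor_le N (norm_z.trans_lt hρ₁))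
  rw [norm_z, Complex.sub_re, Complex.log_re, hz, re_logTaylor_neg_mul_cexp] at remainder
  rw [sub_eq_add_neg (1 : ℂ)]
  linarith

lemma abs_two_mul_sin_le_exp (N : ℕ) {ρ : ℝ} (hρ₀ : 0 ≤ ρ) (hρ₁ : ρ < 1) (φ : ℝ) :
    |2 * sin (φ / 2)| ≤ exp (log (2 / (1 + ρ)) + ρ ^ (N + 1) * (1 - ρ)⁻¹ / (N + 1) -
      ∑ m ∈ range N, ρ ^ (m + 1) / (m + 1) * cos (((m : ℝ) + 1) * φ)) := by
  have norm_exp := Complex.norm_exp_ofReal_mul_I φ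
  have norm_pos : 0 < ‖(1 : ℂ) - ρ * Complex.exp (φ * Complex.I)‖ := by
    refine lt_of_lt_of_le ?_ (norm_sub_norm_le _ _)
    rw [norm_one, norm_mul, norm_exp, mul_one, Complex.norm_real, norm_of_nonneg hρ₀]
    linarith
  calc |2 * sin (φ / 2)|
      = ‖1 - Complex.exp (φ * Complex.I)‖ := by
        rw [norm_sub_rev, mul_comm (φ : ℂ), Complex.norm_exp_I_mul_ofReal_sub_one, Real.norm_eq_abs]
    _ ≤ 2 / (1 + ρ) * ‖(1 : ℂ) - ρ * Complex.exp (φ * Complex.I)‖ :=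
        norm_one_sub_le_mul_norm_one_sub_mul norm_exp hρ₀
    _ = exp (log (2 / (1 + ρ)) + log ‖(1 : ℂ) - ρ * Complex.exp (φ * Complex.I)‖) := by
        rw [exp_add, exp_log (by positivity), exp_log norm_pos]
    _ ≤ _ := by
        rw [add_sub_assoc]
        gcongr
        exact log_norm_one_sub_mul_cexp_le N hρ₀ hρ₁ φ

lemma abs_sineProd_le_exp (n N : ℕ) {ρ : ℝ} (hρ₀ : 0 ≤ ρ) (hρ₁ : ρ < 1) (θ : ℝ) :
    |sineProd n θ| ≤ exp (n * (log (2 / (1 + ρ)) + ρ ^ (N + 1) * (1 - ρ)⁻¹ / (N + 1)) +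
      ∑ m ∈ range N, ρ ^ (m + 1) / (m + 1) * -cosSum n (((m : ℝ) + 1) * θ)) := by
  have factor (k : ℕ) : |2 * sin (((k : ℝ) + 1) * (θ / 2))| ≤
      exp (log (2 / (1 + ρ)) + ρ ^ (N + 1) * (1 - ρ)⁻¹ / (N + 1) -
        ∑ m ∈ range N, ρ ^ (m + 1) / (m + 1) * cos (((k : ℝ) + 1) * (((m : ℝ) + 1) * θ))) := by
    simp only [mul_left_comm ((k : ℝ) + 1), ← mul_div_assoc]
    simpa only [mul_div_assoc] using abs_two_mul_sin_le_exp N hρ₀ hρ₁ (((k : ℝ) + 1) * θ)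
  rw [sineProd, abs_prod]
  refine (prod_le_prod (fun _ _ => abs_nonneg _) fun k _ => factor k).trans_eq ?_
  rw [← exp_sum, sum_sub_distrib, sum_const, card_range, nsmul_eq_mul, sum_comm, sub_eq_add_neg,
    ← sum_neg_distrib]
  simp only [cosSum, mul_neg, mul_sum]

/-- The `m`-th coefficient (counted from `0`) of `-log (1 - 17/20 · x)`. The radius `17/20` and the
truncation at `32` terms make the error in `abs_sineProd_le_exp_of_neg_cosSum_le` at most `0.079`
per factor. -/
noncomputable def logWeight (m : ℕ) : ℝ := (17 / 20) ^ (m + 1) / (m + 1)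

lemma logWeight_nonneg (m : ℕ) : 0 ≤ logWeight m := by
  unfold logWeight
  positivity

lemma antitone_logWeight : Antitone logWeight := antitone_nat_of_succ_le fun m => by
  unfold logWeight
  gcongr ?_ / ?_
  · exact pow_le_pow_of_le_one (by norm_num) (by norm_num) (Nat.le_succ _)
  · push_cast
    linarith

lemma sum_logWeight_le : ∑ m ∈ range 32, logWeight m ≤ 1.9 := by
  norm_num [logWeight, sum_range_succ]

lemma abs_sineProd_le_exp_of_neg_cosSum_le {n : ℕ} {θ C : ℝ} {c : ℕ → ℝ}
    (h : ∀ m : ℕ, m < 32 → -cosSum n (((m : ℝ) + 1) * θ) ≤ c m)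
    (hC : 0.079 * n + ∑ m ∈ range 32, logWeight m * c m ≤ C) :
    |sineProd n θ| ≤ exp C := by
  refine (abs_sineProd_le_exp n 32 (ρ := 17 / 20) (by norm_num) (by norm_num) θ).trans
    (exp_le_exp.2 (le_trans ?_ hC))
  have constant : log (2 / (1 + 17 / 20)) ≤ 0.078 := by
    rw [log_le_iff_le_exp (by norm_num)]
    refine le_trans ?_ (sum_le_exp_of_nonneg (x := 0.078) (by norm_num) 4)
    norm_num [sum_range_succ, Nat.factorial]
  have remainder : (17 / 20 : ℝ) ^ (32 + 1) * (1 - 17 / 20)⁻¹ / ((32 : ℕ) + 1) ≤ 0.001 := by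
    norm_num
  rw [mul_comm (0.079 : ℝ)]
  gcongr ?_ * ?_ + ?_
  · linarith [remainder]
  · exact sum_le_sum fun m hm =>
      mul_le_mul_of_nonneg_left (h m (mem_range.1 hm)) (logWeight_nonneg m)

lemma neg_cosSum_mul_le {n m : ℕ} {θ Y₀ p : ℝ} (hY₀ : 0 < Y₀) (hY : Y₀ ≤ (n + 1 / 2) * θ)
    (hθ : ((m : ℝ) + 1) * θ ≤ 0.21) (hp : 0 ≤ p)
    (h : -sin (((m : ℝ) + 1) * ((n + 1 / 2) * θ)) ≤ p) :
    -cosSum n (((m : ℝ) + 1) * θ) ≤ 1 / 2 + 1.0019 * (n + 1 / 2) / Y₀ * (p / (m + 1)) := by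
  have hθ₀ : 0 < θ := pos_of_mul_pos_right (hY₀.trans_le hY) (by positivity)
  rw [mul_left_comm] at h
  refine (neg_cosSum_le_of_neg_sin_le (by positivity) hθ hp h).trans ?_
  have rescale : 1.0019 * p / (((m : ℝ) + 1) * θ) =
      1.0019 * (n + 1 / 2) / ((n + 1 / 2) * θ) * (p / (m + 1)) := by
    field_simp
  rw [rescale]
  gcongr

section NearZero

variable {n : ℕ} {θ : ℝ}

lemma abs_sineProd_le_exp_of_neg_sin_le {Y₀ C : ℝ} (hY₀ : 0 < Y₀) (hY : Y₀ ≤ (n + 1 / 2) * θ)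
    (hθ : θ ≤ 0.0041) {p : ℕ → ℝ} (hp : ∀ m, 0 ≤ p m)
    (h : ∀ m : ℕ, -sin (((m : ℝ) + 1) * ((n + 1 / 2) * θ)) ≤ p m)
    (hC : 0.079 * n + 0.95 + 1.0019 * (n + 1 / 2) / Y₀ *
      ∑ m ∈ range 32, logWeight m * (p m / (m + 1)) ≤ C) :
    |sineProd n θ| ≤ exp C := by
  have hθ₀ : 0 < θ := pos_of_mul_pos_right (hY₀.trans_le hY) (by positivity)
  refine abs_sineProd_le_exp_of_neg_cosSum_le (fun m hm => neg_cosSum_mul_le hY₀ hY ?_ (hp m) (h m))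
    (le_trans ?_ hC)
  · have : (m : ℝ) + 1 ≤ 32 := by exact_mod_cast hm
    nlinarith [hθ₀]
  · simp only [mul_add, sum_add_distrib, mul_left_comm (logWeight _), ← mul_sum, ← sum_mul]
    linarith [sum_logWeight_le]

lemma abs_sineProd_le_exp_near_zero (hn : 68000 ≤ n) (hθ : 2 * π / n ≤ θ) (hθ' : θ ≤ 0.0041) :
    |sineProd n θ| ≤ exp (0.19 * n) := by
  have hn' : (68000 : ℝ) ≤ n := by exact_mod_cast hn
  have hpi := pi_gt_d6
  have hθ₀ : 0 < θ := lt_of_lt_of_le (by positivity) hθ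
  set Y := (n + 1 / 2) * θ with hY
  have two_pi_le : 2 * π ≤ Y := by
    rw [div_le_iff₀ (by positivity)] at hθ
    linarith
  have neg_sin_le_one (m : ℕ) : -sin (((m : ℝ) + 1) * Y) ≤ 1 := neg_le.2 (neg_one_le_sin _)
  rcases le_or_gt Y (3 * π) with first | not_first
  · refine abs_sineProd_le_exp_of_neg_sin_le (Y₀ := 6.28) (p := fun m => if m = 0 then 0 else 1)
      (by norm_num) (by linarith) hθ' (fun m => by positivity) (fun m => ?_) ?_
    · split_ifs with hm
      · have : 0 ≤ sin (Y - 2 * π) := sin_nonneg_of_nonneg_of_le_pi (by linarith) (by linarith)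
        rw [sin_sub_two_pi] at this
        rwa [hm, Nat.cast_zero, zero_add, one_mul, neg_nonpos]
      · exact neg_sin_le_one m
    · norm_num [logWeight, sum_range_succ]
      linarith
  rcases le_or_gt Y (3.5 * π) with second | third
  · refine abs_sineProd_le_exp_of_neg_sin_le (Y₀ := 9.4247) (p := fun m => if m = 1 then 0 else 1)
      (by norm_num) (by linarith) hθ' (fun m => by positivity) (fun m => ?_) ?_
    · split_ifs with hm
      · have : 0 ≤ sin (2 * Y - (3 : ℤ) * (2 * π)) :=
          sin_nonneg_of_nonneg_of_le_pi (by push_cast; linarith) (by push_cast; linarith)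
        rw [sin_sub_int_mul_two_pi] at this
        rw [hm, neg_nonpos]
        norm_num
        exact this
      · exact neg_sin_le_one m
    · norm_num [logWeight, sum_range_succ]
      linarith
  · refine abs_sineProd_le_exp_of_neg_sin_le (Y₀ := 10.995) (p := fun _ => 1)
      (by norm_num) (by linarith) hθ' (fun _ => zero_le_one) neg_sin_le_one ?_
    norm_num [logWeight, sum_range_succ]
    linarith

end NearZero

section NearPi

variable {n : ℕ} {ψ : ℝ}

lemma neg_cosSum_even_mul_pi_sub_le (hψ₀ : 0 ≤ ψ) (hψ : ψ ≤ 0.0041) {l : ℕ} (hl : l < 16) :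
    -cosSum n ((((2 * l : ℕ) : ℝ) + 1) * (π - ψ)) ≤ 2 := by
  have hl' : (l : ℝ) + 1 ≤ 16 := by exact_mod_cast hl
  have cos_ge : (1 / 2 : ℝ) ≤ |cos (((2 * l : ℝ) + 1) * ψ / 2)| := by
    refine le_trans ?_ (le_abs_self _)
    have nonneg : 0 ≤ ((2 * l : ℝ) + 1) * ψ / 2 := by positivity
    have le : ((2 * l : ℝ) + 1) * ψ / 2 ≤ 0.07 := by nlinarith
    nlinarith [one_sub_sq_div_two_le_cos (x := ((2 * l : ℝ) + 1) * ψ / 2)]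
  have shift : (((2 * l : ℕ) : ℝ) + 1) * (π - ψ) / 2 =
      (π / 2 - ((2 * l : ℝ) + 1) * ψ / 2) + (l : ℕ) * π := by
    push_cast
    ring
  have sin_ge : (1 / 2 : ℝ) ≤ |sin ((((2 * l : ℕ) : ℝ) + 1) * (π - ψ) / 2)| := by
    rwa [shift, sin_add_nat_mul_pi, abs_mul, abs_neg_one_pow, one_mul, sin_pi_div_two_sub]
  exact (neg_cosSum_le_of_le_abs_sin n one_half_pos sin_ge).trans (by norm_num)

lemma cosSum_odd_mul_pi_sub (n l : ℕ) (ψ : ℝ) :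
    cosSum n ((((2 * l + 1 : ℕ) : ℝ) + 1) * (π - ψ)) = cosSum n (((l : ℝ) + 1) * (2 * ψ)) := by
  rw [← cosSum_neg, ← cosSum_sub_int_mul_two_pi n _ (-(l + 1))]
  congr 1
  push_cast
  ring

lemma abs_sineProd_pi_sub_le_exp_of_neg_cosSum_le (hψ₀ : 0 ≤ ψ) (hψ : ψ ≤ 0.0041) {C : ℝ}
    {c : ℕ → ℝ} (h : ∀ l : ℕ, l < 16 → -cosSum n (((l : ℝ) + 1) * (2 * ψ)) ≤ c l)
    (hC : 0.079 * n + 4 + ∑ l ∈ range 16, logWeight (2 * l + 1) * c l ≤ C) :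
    |sineProd n (π - ψ)| ≤ exp C := by
  refine abs_sineProd_le_exp_of_neg_cosSum_le
    (c := fun m => if Even m then 2 else c (m / 2)) (fun m hm => ?_) (le_trans ?_ hC)
  · rcases Nat.even_or_odd' m with ⟨l, rfl | rfl⟩
    · rw [if_pos (even_two_mul l)]
      exact neg_cosSum_even_mul_pi_sub_le hψ₀ hψ (by lia)
    · rw [if_neg (Nat.not_even_bit1 l), cosSum_odd_mul_pi_sub, show (2 * l + 1) / 2 = l by lia]
      exact h l (by lia)
  · have split (f : ℕ → ℝ) (K : ℕ) : ∑ m ∈ range (2 * K), f m =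
        ∑ l ∈ range K, f (2 * l) + ∑ l ∈ range K, f (2 * l + 1) := by
      induction K with
      | zero => simp
      | succ K ih =>
        rw [Nat.mul_succ, sum_range_succ, sum_range_succ, ih, sum_range_succ, sum_range_succ]
        ring
    have odd_part (l : ℕ) : (2 * l + 1) / 2 = l := by lia
    have even_weights := split logWeight 16
    have odd_weights : 0 ≤ ∑ l ∈ range 16, logWeight (2 * l + 1) :=
      sum_nonneg fun _ _ => logWeight_nonneg _
    rw [show 32 = 2 * 16 from rfl, split]
    simp only [even_two_mul, if_true, Nat.not_even_bit1, if_false, odd_part, ← sum_mul]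
    linarith [sum_logWeight_le]

lemma succ_mul_two_mul_le (hψ₀ : 0 ≤ ψ) (hψ : ψ ≤ 0.0041) {l : ℕ} (hl : l < 16) :
    ((l : ℝ) + 1) * (2 * ψ) ≤ 0.21 := by
  have : (l : ℝ) + 1 ≤ 16 := by exact_mod_cast hl
  calc ((l : ℝ) + 1) * (2 * ψ) ≤ 16 * (2 * 0.0041) := by gcongr
    _ ≤ 0.21 := by norm_num

lemma abs_sineProd_le_exp_near_pi_of_le_pi (hn : 68000 ≤ n) (hψ₀ : 0 ≤ ψ) (hψ : ψ ≤ 0.0041)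
    (hY : (n + 1 / 2) * (2 * ψ) ≤ π) : |sineProd n (π - ψ)| ≤ exp (0.19 * n) := by
  have hn' : (68000 : ℝ) ≤ n := by exact_mod_cast hn
  refine abs_sineProd_pi_sub_le_exp_of_neg_cosSum_le hψ₀ hψ
    (c := fun l => if l = 0 then 1 / 2 else 0.243 * n) (fun l hl => ?_) ?_
  · split_ifs with hl₀
    · subst hl₀
      rcases hψ₀.eq_or_lt with rfl | hψ_pos
      · rw [mul_zero, mul_zero, cosSum_zero_right]
        linarith
      · refine (neg_cosSum_le_of_neg_sin_le (by positivity)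
          (succ_mul_two_mul_le hψ₀ hψ hl) le_rfl ?_).trans_eq (by norm_num)
        rw [Nat.cast_zero, zero_add, one_mul, neg_nonpos]
        exact sin_nonneg_of_nonneg_of_le_pi (by positivity) hY
    · exact neg_cosSum_le_mul (by lia) _
  · norm_num [logWeight, sum_range_succ]
    linarith

lemma abs_sineProd_le_exp_near_pi_of_mem_Icc (hn : 68000 ≤ n) (hψ₀ : 0 ≤ ψ) (hψ : ψ ≤ 0.0041)
    (hY : (n + 1 / 2) * (2 * ψ) ∈ Set.Icc π (1.5 * π)) :
    |sineProd n (π - ψ)| ≤ exp (0.19 * n) := by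
  have hn' : (68000 : ℝ) ≤ n := by exact_mod_cast hn
  have := pi_gt_d6
  refine abs_sineProd_pi_sub_le_exp_of_neg_cosSum_le hψ₀ hψ
    (c := fun l => if l = 0 then 0.243 * n else
      1 / 2 + 1.0019 * (n + 1 / 2) / 3.1415 * ((if l = 1 then 0 else 1) / ((l : ℝ) + 1)))
    (fun l hl => ?_) ?_
  · have small := succ_mul_two_mul_le hψ₀ hψ hl
    split_ifs with hl₀ hl₁
    · exact neg_cosSum_le_mul (by lia) _
    · refine neg_cosSum_mul_le (by norm_num) (by linarith [hY.1]) small le_rfl ?_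
      have sin_nonneg : 0 ≤ sin (2 * ((n + 1 / 2) * (2 * ψ)) - 2 * π) :=
        sin_nonneg_of_nonneg_of_le_pi (by linarith [hY.1]) (by linarith [hY.2])
      rw [sin_sub_two_pi] at sin_nonneg
      rw [hl₁, neg_nonpos]
      norm_num
      exact sin_nonneg
    · exact neg_cosSum_mul_le (by norm_num) (by linarith [hY.1]) small zero_le_one
        (neg_le.2 (neg_one_le_sin _))
  · norm_num [logWeight, sum_range_succ]
    linarith

lemma abs_sineProd_le_exp_near_pi_of_ge (hn : 68000 ≤ n) (hψ₀ : 0 ≤ ψ) (hψ : ψ ≤ 0.0041)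
    (hY : 1.5 * π ≤ (n + 1 / 2) * (2 * ψ)) : |sineProd n (π - ψ)| ≤ exp (0.19 * n) := by
  have hn' : (68000 : ℝ) ≤ n := by exact_mod_cast hn
  refine abs_sineProd_pi_sub_le_exp_of_neg_cosSum_le hψ₀ hψ
    (fun l hl => neg_cosSum_mul_le (Y₀ := 4.71) (by norm_num) (by linarith [pi_gt_d6])
      (succ_mul_two_mul_le hψ₀ hψ hl) zero_le_one (neg_le.2 (neg_one_le_sin _))) ?_
  norm_num [logWeight, sum_range_succ]
  linarith

lemma abs_sineProd_le_exp_near_pi (hn : 68000 ≤ n) (hψ₀ : 0 ≤ ψ) (hψ : ψ ≤ 0.0041) :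
    |sineProd n (π - ψ)| ≤ exp (0.19 * n) := by
  rcases le_total ((n + 1 / 2) * (2 * ψ)) π with first | not_first
  · exact abs_sineProd_le_exp_near_pi_of_le_pi hn hψ₀ hψ first
  rcases le_total ((n + 1 / 2) * (2 * ψ)) (1.5 * π) with second | third
  · exact abs_sineProd_le_exp_near_pi_of_mem_Icc hn hψ₀ hψ ⟨not_first, second⟩
  · exact abs_sineProd_le_exp_near_pi_of_ge hn hψ₀ hψ third

end NearPi

section Generic

variable {n : ℕ} {θ : ℝ}

lemma abs_sin_sub_lt {x y s : ℝ} (hx : |sin x| < s) (hy : |sin y| < s) : |sin (x - y)| < 2 * s := by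
  rw [sin_sub]
  refine (abs_sub _ _).trans_lt ?_
  rw [abs_mul, abs_mul]
  nlinarith [abs_cos_le_one x, abs_cos_le_one y, abs_nonneg (sin x), abs_nonneg (sin y),
    abs_nonneg (cos x), abs_nonneg (cos y)]

/-- The indicator that `(m + 1) θ / 2` is so close to `πℤ` that `cosSum n ((m + 1) θ)` may be
large. -/
noncomputable def resonance (θ : ℝ) (m : ℕ) : ℝ :=
  open scoped Classical in if |sin (((m : ℝ) + 1) * θ / 2)| < 0.001 then 1 else 0

lemma resonance_nonneg (θ : ℝ) (m : ℕ) : 0 ≤ resonance θ m := by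
  unfold resonance
  split_ifs <;> norm_num

lemma resonance_add_resonance_le_one {x : ℝ} {k m : ℕ} (hx : 0.002 ≤ |sin x|)
    (hkm : x = ((m : ℝ) + 1) * θ / 2 - ((k : ℝ) + 1) * θ / 2) :
    resonance θ k + resonance θ m ≤ 1 := by
  unfold resonance
  split_ifs with hk hm
  · rw [hkm] at hx
    linarith [abs_sin_sub_lt hm hk]
  all_goals norm_num

lemma sum_mul_le_of_antitone {w b : ℕ → ℝ} (hw : Antitone w) (hw₀ : ∀ m, 0 ≤ w m)
    (hb₀ : ∀ m, 0 ≤ b m) (hb : ∀ m, b m + b (m + 1) + b (m + 2) ≤ 1) (K : ℕ) :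
    ∑ m ∈ range (3 * K), w m * b m ≤ ∑ j ∈ range K, w (3 * j) := by
  induction K with
  | zero => simp
  | succ K ih =>
    rw [Nat.mul_succ, sum_range_succ, sum_range_succ, sum_range_succ, sum_range_succ]
    have block : w (3 * K) * b (3 * K) + w (3 * K + 1) * b (3 * K + 1) +
        w (3 * K + 2) * b (3 * K + 2) ≤ w (3 * K) :=
      calc _ ≤ w (3 * K) * b (3 * K) + w (3 * K) * b (3 * K + 1) + w (3 * K) * b (3 * K + 2) := by
            gcongr
            · exact hb₀ _
            · exact hw (by lia)
            · exact hb₀ _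
            · exact hw (by lia)
        _ = w (3 * K) * (b (3 * K) + b (3 * K + 1) + b (3 * K + 2)) := by ring
        _ ≤ w (3 * K) := mul_le_of_le_one_right (hw₀ _) (hb _)
    linarith

lemma sum_logWeight_mul_resonance_le (h₁ : 0.002 ≤ |sin (θ / 2)|) (h₂ : 0.002 ≤ |sin θ|) :
    ∑ m ∈ range 32, logWeight m * resonance θ m ≤ 0.35 := by
  have vanish_zero : resonance θ 0 = 0 := by
    rw [resonance, if_neg]
    push_cast
    rw [zero_add, one_mul]
    linarith
  have vanish_one : resonance θ 1 = 0 := by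
    rw [resonance, if_neg]
    push_cast
    rw [show ((1 : ℝ) + 1) * θ / 2 = θ by ring]
    linarith
  have adjacent (m : ℕ) : resonance θ m + resonance θ (m + 1) ≤ 1 :=
    resonance_add_resonance_le_one h₁ (by push_cast; ring)
  have alternate (m : ℕ) : resonance θ m + resonance θ (m + 2) ≤ 1 :=
    resonance_add_resonance_le_one h₂ (by push_cast; ring)
  have triple (m : ℕ) : resonance θ m + resonance θ (m + 1) + resonance θ (m + 2) ≤ 1 := by
    have zero_or_one : resonance θ m = 0 ∨ resonance θ m = 1 := by
      unfold resonance
      split_ifs <;> simp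
    rcases zero_or_one with h | h
    · rw [h, zero_add]
      exact adjacent (m + 1)
    · linarith [adjacent m, alternate m]
  have shifted := sum_mul_le_of_antitone (w := fun m => logWeight (m + 2))
    (fun _ _ h => antitone_logWeight (by lia)) (fun m => logWeight_nonneg _)
    (fun m => resonance_nonneg θ (m + 2)) (fun m => triple (m + 2)) 10
  have weights : ∑ j ∈ range 10, logWeight (3 * j + 2) ≤ 0.35 := by
    norm_num [logWeight, sum_range_succ]
  rw [sum_range_succ', sum_range_succ', vanish_zero, zero_add, vanish_one]
  linarith

lemma abs_sineProd_le_exp_of_le_abs_sin (hn : 68000 ≤ n) (h₁ : 0.002 ≤ |sin (θ / 2)|)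
    (h₂ : 0.002 ≤ |sin θ|) : |sineProd n θ| ≤ exp (0.19 * n) := by
  have hn' : (68000 : ℝ) ≤ n := by exact_mod_cast hn
  refine abs_sineProd_le_exp_of_neg_cosSum_le
    (c := fun m => 501 + 0.243 * n * resonance θ m) (fun m _ => ?_) ?_
  · by_cases h : |sin (((m : ℝ) + 1) * θ / 2)| < 0.001
    · rw [resonance, if_pos h]
      linarith [neg_cosSum_le_mul (by lia : 10000 ≤ n) (((m : ℝ) + 1) * θ)]
    · rw [resonance, if_neg h]
      have := neg_cosSum_le_of_le_abs_sin n (by norm_num) (not_lt.1 h)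
      norm_num at this
      linarith
  · simp only [mul_add, mul_left_comm (logWeight _), sum_add_distrib, ← mul_sum, ← sum_mul]
    nlinarith [sum_logWeight_le, sum_logWeight_mul_resonance_le h₁ h₂]

end Generic

theorem abs_sineProd_le_exp_of_two_pi_div_le {n : ℕ} (hn : 68000 ≤ n) {θ : ℝ}
    (hθ : 2 * π / n ≤ θ) (hθ' : θ ≤ π) : |sineProd n θ| ≤ exp (0.19 * n) := by
  rcases le_or_gt θ 0.0041 with near_zero | not_near_zero
  · exact abs_sineProd_le_exp_near_zero hn hθ near_zero
  rcases le_or_gt (π - θ) 0.0041 with near_pi | not_near_pi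
  · rw [← sub_sub_cancel π θ]
    exact abs_sineProd_le_exp_near_pi hn (by linarith) near_pi
  have sin_ge {x : ℝ} (hx : 0.00205 ≤ x) (hx' : x ≤ π / 2) : 0.002 ≤ sin x :=
    le_trans (by norm_num) (sub_cube_le_sin_of_le (x := 0.00205) (by norm_num) hx hx')
  refine abs_sineProd_le_exp_of_le_abs_sin hn
    ((sin_ge (by linarith) (by linarith)).trans (le_abs_self _)) (le_trans ?_ (le_abs_self _))
  rcases le_or_gt θ (π / 2) with acute | obtuse
  · exact sin_ge (by linarith) acute
  · rw [← sin_pi_sub]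
    exact sin_ge (by linarith) (by linarith)

/-! ### The size of the product on the main arc -/

lemma sineProd_pos {n : ℕ} {θ : ℝ} (hθ : 0 < θ) (h : n * θ < 2 * π) : 0 < sineProd n θ := by
  refine prod_pos fun k hk => mul_pos two_pos (sin_pos_of_pos_of_lt_pi (by positivity) ?_)
  have hk' : (k : ℝ) + 1 ≤ n := by exact_mod_cast mem_range.1 hk
  nlinarith

lemma sineProd_two_pi_div (n : ℕ) : sineProd n (2 * π / (n + 1)) = n + 1 := by
  set θ := 2 * π / ((n : ℝ) + 1) with hθ
  have pos : 0 < sineProd n θ := by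
    refine sineProd_pos (by positivity) ?_
    rw [hθ, mul_div_assoc', div_lt_iff₀ (by positivity)]
    linarith [pi_pos]
  have root : Complex.exp (2 * π * Complex.I / (n + 1 : ℕ)) = Complex.exp (θ * Complex.I) := by
    rw [hθ]
    congr 1
    push_cast
    ring
  have product := (Complex.isPrimitiveRoot_exp (n + 1) n.succ_ne_zero).prod_one_sub_pow_eq_order
  rw [root, prod_one_sub_cexp_pow] at product
  have norms := congrArg norm product
  rwa [norm_mul, norm_mul, norm_pow, norm_neg, Complex.norm_I, Complex.norm_exp_ofReal_mul_I,
    one_pow, one_mul, one_mul, Complex.norm_real, norm_of_nonneg pos.le, ← Nat.cast_add_one,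
    Complex.norm_natCast, Nat.cast_add_one] at norms

lemma sineProd_add {n r : ℕ} {θ : ℝ} (hθ : (n + r + 1) * θ = 2 * π) :
    sineProd (n + r) θ = sineProd n θ * sineProd r θ := by
  rw [sineProd, prod_range_add]
  refine congrArg (sineProd n θ * ·) ?_
  rw [← prod_range_reflect]
  refine prod_congr rfl fun k hk => ?_
  have reflected : ((n + (r - 1 - k) : ℕ) : ℝ) = n + r - 1 - k := by
    have : k < r := mem_range.1 hk
    rw [Nat.sub_sub, Nat.cast_add, Nat.cast_sub (by lia)]
    push_cast
    ring
  rw [← sin_pi_sub, reflected]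
  congr 2
  linear_combination -hθ / 2

lemma sineProd_mul_sineProd (n r : ℕ) :
    sineProd n (2 * π / (n + r + 1)) * sineProd r (2 * π / (n + r + 1)) = n + r + 1 := by
  rw [← sineProd_add (by field_simp), ← Nat.cast_add, sineProd_two_pi_div]

lemma sineProd_le_factorial_mul_pow {r : ℕ} {θ : ℝ} (hθ : 0 < θ) (h : r * θ < 2 * π) :
    sineProd r θ ≤ r.factorial * θ ^ r := by
  induction r with
  | zero => simp [sineProd]
  | succ r ih =>
    push_cast at h
    have factor : 2 * sin (((r : ℝ) + 1) * (θ / 2)) ≤ (r + 1) * θ := by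
      linarith [sin_le (x := ((r : ℝ) + 1) * (θ / 2)) (by positivity)]
    have previous_pos : 0 < sineProd r θ := sineProd_pos hθ (by linarith)
    calc sineProd (r + 1) θ = sineProd r θ * (2 * sin (((r : ℝ) + 1) * (θ / 2))) :=
          sineProd_succ r θ
      _ ≤ (r.factorial * θ ^ r) * ((r + 1) * θ) :=
          mul_le_mul_of_nonneg (ih (by linarith)) factor previous_pos.le (by positivity)
      _ = (r + 1).factorial * θ ^ (r + 1) := by
          rw [Nat.factorial_succ]
          push_cast
          ring

lemma factorial_le_exp_one_mul_sqrt_mul_pow {r : ℕ} (hr : r ≠ 0) :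
    (r.factorial : ℝ) ≤ exp 1 * √r * (r / exp 1) ^ r := by
  obtain ⟨r, rfl⟩ := Nat.exists_eq_succ_of_ne_zero hr
  have h := Stirling.stirlingSeq'_antitone (Nat.zero_le r)
  simp only [Function.comp_apply, Nat.succ_eq_add_one, zero_add, Stirling.stirlingSeq_one] at h
  unfold Stirling.stirlingSeq at h
  rw [div_le_iff₀ (by positivity)] at h
  refine h.trans_eq ?_
  rw [sqrt_mul zero_le_two]
  field_simp

lemma sineProd_le_sqrt_mul_pow {r : ℕ} (hr : r ≠ 0) {θ : ℝ} (hθ : 0 < θ) (h : r * θ < 2 * π) :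
    sineProd r θ ≤ exp 1 * √r * (r * θ / exp 1) ^ r :=
  calc sineProd r θ ≤ r.factorial * θ ^ r := sineProd_le_factorial_mul_pow hθ h
    _ ≤ exp 1 * √r * (r / exp 1) ^ r * θ ^ r := by
        gcongr
        exact factorial_le_exp_one_mul_sqrt_mul_pow hr
    _ = exp 1 * √r * (r * θ / exp 1) ^ r := by
        rw [mul_assoc, ← mul_pow, div_mul_eq_mul_div]

-- `86616 = 68533 + 18082 + 1`, so the complementary product has `18082` factors.
lemma exp_le_sineProd {n : ℕ} (hn : n = 68533) :
    exp (0.192 * n) ≤ sineProd n (2 * π / 86616) := by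
  obtain ⟨r, hr⟩ : ∃ r : ℕ, r = 18082 := ⟨_, rfl⟩
  have hn' : (n : ℝ) = 68533 := by exact_mod_cast hn
  have hr' : (r : ℝ) = 18082 := by exact_mod_cast hr
  have product := sineProd_mul_sineProd n r
  rw [show (n : ℝ) + r + 1 = 86616 by rw [hn', hr']; norm_num] at product
  set θ := 2 * π / 86616 with hθ
  have hθ₀ : 0 < θ := by positivity
  have hrθ : r * θ < 2 * π := by
    rw [hr', hθ]
    linarith [pi_pos]
  have base : r * θ / exp 1 ≤ exp (-0.7278) := by
    rw [div_le_iff₀ (exp_pos 1), ← exp_add, hr', hθ]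
    refine le_trans ?_ (sum_le_exp_of_nonneg (x := -0.7278 + 1) (by norm_num) 6)
    norm_num [sum_range_succ, Nat.factorial]
    linarith [pi_lt_d4]
  have complementary : sineProd r θ ≤ 86616 * exp (-0.7278 * r) :=
    calc sineProd r θ ≤ exp 1 * √r * (r * θ / exp 1) ^ r :=
          sineProd_le_sqrt_mul_pow (by lia) hθ₀ hrθ
      _ ≤ exp 1 * 135 * exp (-0.7278) ^ r := by
          gcongr
          rw [hr', sqrt_le_left (by norm_num)]
          norm_num
      _ ≤ 86616 * exp (-0.7278 * r) := by
          rw [← exp_nat_mul, mul_comm (r : ℝ)]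
          gcongr
          linarith [exp_one_lt_d9]
  refine le_of_mul_le_mul_right ?_ (sineProd_pos hθ₀ hrθ)
  calc exp (0.192 * n) * sineProd r θ ≤ exp (0.7278 * r) * (86616 * exp (-0.7278 * r)) := by
        refine mul_le_mul (exp_le_exp.2 ?_) complementary (sineProd_pos hθ₀ hrθ).le (exp_pos _).le
        rw [hn', hr']
        norm_num
    _ = 86616 := by
        rw [mul_left_comm, ← exp_add]
        norm_num
    _ = sineProd n θ * sineProd r θ := product.symm

/-! ### The logarithmic derivative of the product -/

lemma sub_le_sub_of_hasDerivAt_le {f f' g g' : ℝ → ℝ} {p q : ℝ} (hpq : p ≤ q)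
    (hf : ContinuousOn f (Set.Icc p q)) (hg : ContinuousOn g (Set.Icc p q))
    (hf' : ∀ x ∈ Set.Ioo p q, HasDerivAt f (f' x) x)
    (hg' : ∀ x ∈ Set.Ioo p q, HasDerivAt g (g' x) x) (h : ∀ x ∈ Set.Ioo p q, f' x ≤ g' x) :
    f q - f p ≤ g q - g p := by
  have monotone : MonotoneOn (g - f) (Set.Icc p q) :=
    monotoneOn_of_hasDerivWithinAt_nonneg (convex_Icc p q) (hg.sub hf) (f' := g' - f')
      (by
        rw [interior_Icc]
        exact fun x hx => ((hg' x hx).sub (hf' x hx)).hasDerivWithinAt)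
      (by
        rw [interior_Icc]
        exact fun x hx => sub_nonneg.2 (h x hx))
  have := monotone (Set.left_mem_Icc.2 hpq) (Set.right_mem_Icc.2 hpq) hpq
  simp only [Pi.sub_apply] at this
  linarith

lemma le_taylor_of_deriv2_le {f f' f'' : ℝ → ℝ} {C t u : ℝ} {D : Set ℝ} (hD : Convex ℝ D)
    (hf : ContinuousOn f D) (hf' : ∀ x ∈ interior D, HasDerivAt f (f' x) x)
    (hf'' : ∀ x ∈ interior D, HasDerivAt f' (f'' x) x) (hC : ∀ x ∈ interior D, f'' x ≤ C)
    (ht : t ∈ D) (ht' : HasDerivAt f (f' t) t) (hu : u ∈ D) :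
    f u ≤ f t + f' t * (u - t) + C / 2 * (u - t) ^ 2 := by
  set defect : ℝ → ℝ := fun x => C / 2 * (x - t) ^ 2 - f x with defect_def
  have defect_deriv {x : ℝ} (h : HasDerivAt f (f' x) x) :
      HasDerivAt defect (C * (x - t) - f' x) x := by
    refine (((((hasDerivAt_id x).sub_const t).pow 2).const_mul (C / 2)).sub h).congr_deriv ?_
    simp only [id_eq]
    ring
  have defect_convex : ConvexOn ℝ D defect := by
    refine convexOn_of_hasDerivWithinAt2_nonneg hD (f'' := fun x => C - f'' x)
      ((by fun_prop : Continuous fun x => C / 2 * (x - t) ^ 2).continuousOn.sub hf)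
      (fun x hx => (defect_deriv (hf' x hx)).hasDerivWithinAt) (fun x hx => ?_)
      (fun x hx => sub_nonneg.2 (hC x hx))
    exact ((((hasDerivAt_id x).sub_const t).const_mul C).sub (hf'' x hx)).congr_deriv
      (by rw [mul_one]) |>.hasDerivWithinAt
  have slope_bound := defect_deriv ht'
  rw [sub_self, mul_zero, zero_sub] at slope_bound
  rcases lt_trichotomy u t with left | rfl | right
  · have := defect_convex.slope_le_of_hasDerivAt hu ht left slope_bound
    rw [slope_def_field, div_le_iff₀ (by linarith), defect_def] at this
    linarith
  · linarith
  · have := defect_convex.le_slope_of_hasDerivAt ht hu right slope_bound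
    rw [slope_def_field, le_div_iff₀ (by linarith), defect_def] at this
    linarith

/-- The function `t cot t`, written as `cos t / sinc t` so that its value at `0` is `1`. -/
noncomputable def mulCot (t : ℝ) : ℝ := cos t / sinc t

/-- The derivative of `mulCot` on `(0, π)`. -/
noncomputable def mulCotDeriv (t : ℝ) : ℝ := (sin t * cos t - t) / sin t ^ 2

/-- The second derivative of `mulCot` on `(0, π)`. -/
noncomputable def mulCotDeriv₂ (t : ℝ) : ℝ := -2 * (sin t - t * cos t) / sin t ^ 3

section MulCot

variable {t u : ℝ}

lemma mulCot_of_ne_zero (h : t ≠ 0) : mulCot t = t * cos t / sin t := by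
  rw [mulCot, sinc_of_ne_zero h, div_div_eq_mul_div, mul_comm]

lemma mulCot_zero : mulCot 0 = 1 := by simp [mulCot]

lemma sinc_pos (h₀ : 0 ≤ t) (h₁ : t < π) : 0 < sinc t := by
  rcases h₀.eq_or_lt with rfl | h
  · simp
  · rw [sinc_of_ne_zero h.ne']
    exact div_pos (sin_pos_of_pos_of_lt_pi h h₁) h

lemma continuousOn_mulCot : ContinuousOn mulCot (Set.Ico 0 π) :=
  continuous_cos.continuousOn.div continuous_sinc.continuousOn fun _ hx => (sinc_pos hx.1 hx.2).ne'

lemma hasDerivAt_mulCot (h₀ : 0 < t) (h₁ : t < π) : HasDerivAt mulCot (mulCotDeriv t) t := by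
  have sin_ne_zero := (sin_pos_of_pos_of_lt_pi h₀ h₁).ne'
  have quotient : HasDerivAt (fun t => t * cos t / sin t) (mulCotDeriv t) t := by
    refine (((hasDerivAt_id t).mul (hasDerivAt_cos t)).div (hasDerivAt_sin t)
      sin_ne_zero).congr_deriv ?_
    rw [mulCotDeriv]
    simp only [id_eq, one_mul, Pi.mul_apply]
    congr 1
    linear_combination -t * sin_sq_add_cos_sq t
  refine quotient.congr_of_eventuallyEq ?_
  filter_upwards [lt_mem_nhds h₀] with x hx
  exact mulCot_of_ne_zero hx.ne'

lemma hasDerivAt_mulCotDeriv (h₀ : 0 < t) (h₁ : t < π) :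
    HasDerivAt mulCotDeriv (mulCotDeriv₂ t) t := by
  have sin_ne_zero := (sin_pos_of_pos_of_lt_pi h₀ h₁).ne'
  refine ((((hasDerivAt_sin t).mul (hasDerivAt_cos t)).sub (hasDerivAt_id t)).div
    ((hasDerivAt_sin t).pow 2) (pow_ne_zero 2 sin_ne_zero)).congr_deriv ?_
  rw [mulCotDeriv₂]
  simp only [id_eq, Pi.mul_apply, Pi.sub_apply, Pi.pow_apply]
  field_simp
  linear_combination -sin t ^ 2 * sin_sq_add_cos_sq t

lemma hasDerivAt_mulCotDeriv₂ (h₀ : 0 < t) (h₁ : t < π) :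
    HasDerivAt mulCotDeriv₂
      ((6 * sin t * cos t - 2 * t - 4 * t * cos t ^ 2) / sin t ^ 4) t := by
  have sin_ne_zero := (sin_pos_of_pos_of_lt_pi h₀ h₁).ne'
  refine ((((hasDerivAt_sin t).sub ((hasDerivAt_id t).mul (hasDerivAt_cos t))).const_mul
    (-2)).div ((hasDerivAt_sin t).pow 3) (pow_ne_zero 3 sin_ne_zero)).congr_deriv ?_
  simp only [id_eq, Pi.mul_apply, Pi.sub_apply, Pi.pow_apply]
  field_simp
  linear_combination -2 * t * sin t ^ 2 * sin_sq_add_cos_sq t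

lemma mul_cos_le_sin (h₀ : 0 ≤ t) (h₁ : t ≤ π) : t * cos t ≤ sin t := by
  have := sub_le_sub_of_hasDerivAt_le (f := fun y => y * cos y) (f' := fun y => cos y - y * sin y)
    (g := sin) (g' := cos) h₀ (by fun_prop) (by fun_prop)
    (fun y _ => ((hasDerivAt_id y).mul (hasDerivAt_cos y)).congr_deriv (by
      simp only [id_eq]
      ring))
    (fun y _ => hasDerivAt_sin y)
    (fun y hy => sub_le_self _ (mul_nonneg hy.1.le
      (sin_nonneg_of_nonneg_of_le_pi hy.1.le (hy.2.le.trans h₁))))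
  simpa using this

lemma mul_sin_le_two_mul_one_sub_cos (h₀ : 0 ≤ t) (h₁ : t ≤ π) :
    t * sin t ≤ 2 * (1 - cos t) := by
  have := sub_le_sub_of_hasDerivAt_le (f := fun y => y * sin y) (f' := fun y => sin y + y * cos y)
    (g := fun y => 2 * (1 - cos y)) (g' := fun y => 2 * sin y) h₀ (by fun_prop) (by fun_prop)
    (fun y _ => ((hasDerivAt_id y).mul (hasDerivAt_sin y)).congr_deriv (by simp))
    (fun y _ => (((hasDerivAt_cos y).const_sub 1).const_mul 2).congr_deriv (by simp))
    (fun y hy => by linarith [mul_cos_le_sin hy.1.le (hy.2.le.trans h₁)])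
  simpa using this

lemma three_mul_sin_le (h₀ : 0 ≤ t) : 3 * sin t ≤ t * (2 + cos t) := by
  rcases le_or_gt t π with h₁ | h₁
  · have := sub_le_sub_of_hasDerivAt_le (f := fun y => 3 * sin y) (f' := fun y => 3 * cos y)
      (g := fun y => y * (2 + cos y)) (g' := fun y => 2 + cos y - y * sin y) h₀ (by fun_prop)
      (by fun_prop) (fun y _ => (hasDerivAt_sin y).const_mul 3)
      (fun y _ => ((hasDerivAt_id y).mul ((hasDerivAt_cos y).const_add 2)).congr_deriv (by
        simp only [id_eq]
        ring))
      (fun y hy => by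
        linarith [mul_sin_le_two_mul_one_sub_cos hy.1.le (hy.2.le.trans h₁)])
    simpa using this
  · nlinarith [pi_gt_three, sin_le_one t, neg_one_le_cos t]

lemma sin_mul_cos_le (h₀ : 0 ≤ t) : sin t * cos t ≤ t := by
  have := sin_le (x := 2 * t) (by linarith)
  rw [sin_two_mul] at this
  linarith

lemma sin_pow_three_div_three_le (h₀ : 0 ≤ t) (h₁ : t ≤ π) :
    sin t ^ 3 / 3 ≤ sin t - t * cos t := by
  have := sub_le_sub_of_hasDerivAt_le (f := fun y => sin y ^ 3 / 3)
    (f' := fun y => sin y * (sin y * cos y)) (g := fun y => sin y - y * cos y)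
    (g' := fun y => sin y * y) h₀ (by fun_prop) (by fun_prop)
    (fun y _ => (((hasDerivAt_sin y).pow 3).div_const 3).congr_deriv (by
      push_cast
      ring))
    (fun y _ => ((hasDerivAt_sin y).sub ((hasDerivAt_id y).mul (hasDerivAt_cos y))).congr_deriv
      (by
        simp only [id_eq]
        ring))
    (fun y hy => mul_le_mul_of_nonneg_left (sin_mul_cos_le hy.1.le)
      (sin_nonneg_of_nonneg_of_le_pi hy.1.le (hy.2.le.trans h₁)))
  simpa using this

lemma mulCotDeriv₂_le (h₀ : 0 < t) (h₁ : t < π) : mulCotDeriv₂ t ≤ -2 / 3 := by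
  have sin_pos := sin_pos_of_pos_of_lt_pi h₀ h₁
  rw [mulCotDeriv₂, div_le_iff₀ (by positivity)]
  linarith [sin_pow_three_div_three_le h₀.le h₁.le]

lemma mulCotDeriv_nonpos (h₀ : 0 ≤ t) : mulCotDeriv t ≤ 0 :=
  div_nonpos_of_nonpos_of_nonneg (by linarith [sin_mul_cos_le h₀]) (sq_nonneg _)

lemma antitoneOn_mulCotDeriv₂ : AntitoneOn mulCotDeriv₂ (Set.Ioo 0 π) := by
  refine antitoneOn_of_hasDerivWithinAt_nonpos (convex_Ioo 0 π)
    (fun x hx => (hasDerivAt_mulCotDeriv₂ hx.1 hx.2).continuousAt.continuousWithinAt)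
    (f' := fun t => (6 * sin t * cos t - 2 * t - 4 * t * cos t ^ 2) / sin t ^ 4) ?_ ?_ <;>
  rw [interior_Ioo]
  · exact fun x hx => (hasDerivAt_mulCotDeriv₂ hx.1 hx.2).hasDerivWithinAt
  · refine fun x hx => div_nonpos_of_nonpos_of_nonneg ?_ (by positivity)
    have cusa := three_mul_sin_le (t := 2 * x) (by linarith [hx.1])
    rw [sin_two_mul, cos_two_mul] at cusa
    linarith

lemma antitoneOn_mulCotDeriv : AntitoneOn mulCotDeriv (Set.Ioo 0 π) := by
  refine antitoneOn_of_hasDerivWithinAt_nonpos (convex_Ioo 0 π)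
    (fun x hx => (hasDerivAt_mulCotDeriv hx.1 hx.2).continuousAt.continuousWithinAt)
    (f' := mulCotDeriv₂) ?_ ?_ <;>
  rw [interior_Ioo]
  · exact fun x hx => (hasDerivAt_mulCotDeriv hx.1 hx.2).hasDerivWithinAt
  · exact fun x hx => (mulCotDeriv₂_le hx.1 hx.2).trans (by norm_num)

lemma antitoneOn_mulCot : AntitoneOn mulCot (Set.Ico 0 π) := by
  refine antitoneOn_of_hasDerivWithinAt_nonpos (convex_Ico 0 π) continuousOn_mulCot
    (f' := mulCotDeriv) ?_ ?_ <;>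
  rw [interior_Ico]
  · exact fun x hx => (hasDerivAt_mulCot hx.1 hx.2).hasDerivWithinAt
  · exact fun x hx => mulCotDeriv_nonpos hx.1.le

lemma concaveOn_mulCot : ConcaveOn ℝ (Set.Ico 0 π) mulCot := by
  refine concaveOn_of_hasDerivWithinAt2_nonpos (convex_Ico 0 π) continuousOn_mulCot
    (f' := mulCotDeriv) (f'' := mulCotDeriv₂) ?_ ?_ ?_ <;>
  rw [interior_Ico]
  · exact fun x hx => (hasDerivAt_mulCot hx.1 hx.2).hasDerivWithinAt
  · exact fun x hx => (hasDerivAt_mulCotDeriv hx.1 hx.2).hasDerivWithinAt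
  · exact fun x hx => (mulCotDeriv₂_le hx.1 hx.2).trans (by norm_num)

lemma mulCot_le_one (h₀ : 0 ≤ t) (h₁ : t < π) : mulCot t ≤ 1 :=
  mulCot_zero ▸ antitoneOn_mulCot (Set.left_mem_Ico.2 pi_pos) ⟨h₀, h₁⟩ h₀

lemma mulCot_le_taylor (hu : u ∈ Set.Ico 0 π) (ht : t ∈ Set.Ioo 0 π) :
    mulCot u ≤ mulCot t + mulCotDeriv t * (u - t) - (u - t) ^ 2 / 3 := by
  have := le_taylor_of_deriv2_le (f := mulCot) (f' := mulCotDeriv) (f'' := mulCotDeriv₂)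
    (C := -2 / 3) (convex_Ico 0 π) continuousOn_mulCot
    (fun x hx => by
      rw [interior_Ico] at hx
      exact hasDerivAt_mulCot hx.1 hx.2)
    (fun x hx => by
      rw [interior_Ico] at hx
      exact hasDerivAt_mulCotDeriv hx.1 hx.2)
    (fun x hx => by
      rw [interior_Ico] at hx
      exact mulCotDeriv₂_le hx.1 hx.2)
    (Set.Ioo_subset_Ico_self ht) (hasDerivAt_mulCot ht.1 ht.2) hu
  linarith

lemma taylor_le_mulCot {T : ℝ} (hT : T < π) (hu : u ∈ Set.Ioc 0 T) (ht : t ∈ Set.Ioc 0 T) :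
    mulCot t + mulCotDeriv t * (u - t) + mulCotDeriv₂ T / 2 * (u - t) ^ 2 ≤ mulCot u := by
  have deriv {x : ℝ} (hx : x ∈ Set.Ioc 0 T) : HasDerivAt (-mulCot) ((-mulCotDeriv) x) x :=
    (hasDerivAt_mulCot hx.1 (hx.2.trans_lt hT)).neg
  have := le_taylor_of_deriv2_le (f := -mulCot) (f' := -mulCotDeriv) (f'' := -mulCotDeriv₂)
    (C := -mulCotDeriv₂ T) (convex_Ioc 0 T)
    (fun x hx => (deriv hx).continuousAt.continuousWithinAt)
    (fun x hx => deriv (interior_subset hx))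
    (fun x hx => (hasDerivAt_mulCotDeriv (interior_subset hx).1
      ((interior_subset hx).2.trans_lt hT)).neg)
    (fun x hx => neg_le_neg (antitoneOn_mulCotDeriv₂
      ⟨(interior_subset hx).1, (interior_subset hx).2.trans_lt hT⟩
      ⟨hu.1.trans_le hu.2, hT⟩ (interior_subset hx).2)) ht (deriv ht) hu
  simp only [Pi.neg_apply] at this
  linarith

end MulCot

/-- The Maclaurin polynomial of `cos` with `n` nonzero terms. -/
noncomputable def cosTaylor (n : ℕ) (x : ℝ) : ℝ :=
  ∑ k ∈ range n, (-1) ^ k * (x ^ (2 * k) / (2 * k).factorial)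

/-- The Maclaurin polynomial of `sin` with `n` nonzero terms. -/
noncomputable def sinTaylor (n : ℕ) (x : ℝ) : ℝ :=
  ∑ k ∈ range n, (-1) ^ k * (x ^ (2 * k + 1) / (2 * k + 1).factorial)

lemma hasDerivAt_pow_div_factorial (k : ℕ) (x : ℝ) :
    HasDerivAt (fun x : ℝ => x ^ (k + 1) / (k + 1).factorial) (x ^ k / k.factorial) x := by
  refine ((hasDerivAt_pow (k + 1) x).div_const _).congr_deriv ?_
  rw [Nat.factorial_succ, Nat.add_sub_cancel]
  push_cast
  field_simp

lemma hasDerivAt_sinTaylor (n : ℕ) (x : ℝ) : HasDerivAt (sinTaylor n) (cosTaylor n x) x :=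
  HasDerivAt.fun_sum fun k _ => (hasDerivAt_pow_div_factorial (2 * k) x).const_mul _

lemma hasDerivAt_cosTaylor_succ (n : ℕ) (x : ℝ) :
    HasDerivAt (cosTaylor (n + 1)) (-sinTaylor n x) x := by
  have shifted : cosTaylor (n + 1) = fun x => (∑ k ∈ range n,
      (-1 : ℝ) ^ (k + 1) * (x ^ (2 * k + 1 + 1) / (2 * k + 1 + 1).factorial)) + 1 := by
    funext x
    simp [cosTaylor, sum_range_succ', mul_add]
  rw [shifted, sinTaylor, ← sum_neg_distrib]
  refine (HasDerivAt.fun_sum fun k _ =>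
    (hasDerivAt_pow_div_factorial (2 * k + 1) x).const_mul ((-1) ^ (k + 1))).add_const 1
      |>.congr_deriv (sum_congr rfl fun k _ => ?_)
  rw [pow_succ]
  ring

lemma cosTaylor_sub_cos_and_sinTaylor_sub_sin_alternate (n : ℕ) :
    ∀ x : ℝ, 0 ≤ x → 0 ≤ (-1) ^ n * (cosTaylor (n + 1) x - cos x) ∧
      0 ≤ (-1) ^ n * (sinTaylor (n + 1) x - sin x) := by
  have sin_of_cos (n : ℕ) (h : ∀ x : ℝ, 0 ≤ x → 0 ≤ (-1) ^ n * (cosTaylor (n + 1) x - cos x))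
      (x : ℝ) (hx : 0 ≤ x) : 0 ≤ (-1) ^ n * (sinTaylor (n + 1) x - sin x) := by
    have deriv (y : ℝ) := ((hasDerivAt_sinTaylor (n + 1) y).sub (hasDerivAt_sin y)).const_mul
      ((-1) ^ n)
    have := sub_le_sub_of_hasDerivAt_le hx continuousOn_const
      (fun y _ => (deriv y).continuousAt.continuousWithinAt)
      (fun y _ => hasDerivAt_const y (0 : ℝ)) (fun y _ => deriv y) (fun y hy => h y hy.1.le)
    simpa [sinTaylor] using this
  induction n with
  | zero =>
    have cos_case (x : ℝ) (_ : 0 ≤ x) : 0 ≤ (-1) ^ 0 * (cosTaylor (0 + 1) x - cos x) := by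
      simp [cosTaylor, cos_le_one]
    exact fun x hx => ⟨cos_case x hx, sin_of_cos 0 cos_case x hx⟩
  | succ n ih =>
    have cos_case (x : ℝ) (hx : 0 ≤ x) :
        0 ≤ (-1) ^ (n + 1) * (cosTaylor (n + 1 + 1) x - cos x) := by
      have deriv (y : ℝ) : HasDerivAt _ ((-1) ^ n * (sinTaylor (n + 1) y - sin y)) y :=
        ((hasDerivAt_cosTaylor_succ (n + 1) y).sub (hasDerivAt_cos y)).const_mul
          ((-1) ^ (n + 1)) |>.congr_deriv (by ring)
      have := sub_le_sub_of_hasDerivAt_le hx continuousOn_const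
        (fun y _ => (deriv y).continuousAt.continuousWithinAt)
        (fun y _ => hasDerivAt_const y (0 : ℝ)) (fun y _ => deriv y) (fun y hy => (ih y hy.1.le).2)
      simpa [cosTaylor, sum_range_succ'] using this
    exact fun x hx => ⟨cos_case x hx, sin_of_cos (n + 1) cos_case x hx⟩

section Taylor

variable {x : ℝ}

lemma taylor_six_le_cos (hx : 0 ≤ x) : 1 - x ^ 2 / 2 + x ^ 4 / 24 - x ^ 6 / 720 ≤ cos x := by
  have := (cosTaylor_sub_cos_and_sinTaylor_sub_sin_alternate 3 x hx).1
  norm_num [cosTaylor, sum_range_succ, Nat.factorial] at this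
  linarith

lemma taylor_seven_le_sin (hx : 0 ≤ x) :
    x - x ^ 3 / 6 + x ^ 5 / 120 - x ^ 7 / 5040 ≤ sin x := by
  have := (cosTaylor_sub_cos_and_sinTaylor_sub_sin_alternate 3 x hx).2
  norm_num [sinTaylor, sum_range_succ, Nat.factorial] at this
  linarith

lemma cos_le_taylor_eight (hx : 0 ≤ x) :
    cos x ≤ 1 - x ^ 2 / 2 + x ^ 4 / 24 - x ^ 6 / 720 + x ^ 8 / 40320 := by
  have := (cosTaylor_sub_cos_and_sinTaylor_sub_sin_alternate 4 x hx).1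
  norm_num [cosTaylor, sum_range_succ, Nat.factorial] at this
  linarith

lemma sin_le_taylor_nine (hx : 0 ≤ x) :
    sin x ≤ x - x ^ 3 / 6 + x ^ 5 / 120 - x ^ 7 / 5040 + x ^ 9 / 362880 := by
  have := (cosTaylor_sub_cos_and_sinTaylor_sub_sin_alternate 4 x hx).2
  norm_num [sinTaylor, sum_range_succ, Nat.factorial] at this
  linarith

end Taylor

/-- The logarithmic derivative `θ S'(θ) / S(θ)` of `S = sineProd n`. -/
noncomputable def scaledLogDeriv (n : ℕ) (θ : ℝ) : ℝ :=
  ∑ k ∈ range n, mulCot (((k : ℝ) + 1) * (θ / 2))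

lemma scaledLogDeriv_succ (n : ℕ) (θ : ℝ) :
    scaledLogDeriv (n + 1) θ = scaledLogDeriv n θ + mulCot ((n + 1) * (θ / 2)) :=
  sum_range_succ _ _

lemma hasDerivAt_sineProd (n : ℕ) {θ : ℝ} (h₀ : 0 < θ) (h₁ : n * (θ / 2) < π) :
    HasDerivAt (sineProd n) (sineProd n θ * scaledLogDeriv n θ / θ) θ := by
  induction n with
  | zero =>
    rw [show sineProd 0 = fun _ => 1 from funext fun _ => by simp [sineProd]]
    simpa [scaledLogDeriv] using hasDerivAt_const θ (1 : ℝ)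
  | succ n ih =>
    push_cast at h₁
    rw [show sineProd (n + 1) = fun θ => sineProd n θ * (2 * sin ((n + 1) * (θ / 2))) from
      funext (sineProd_succ n)]
    have angle_pos : 0 < ((n : ℝ) + 1) * (θ / 2) := by positivity
    have sin_ne_zero := (sin_pos_of_pos_of_lt_pi angle_pos h₁).ne'
    have angle_deriv := ((hasDerivAt_id θ).div_const 2).const_mul ((n : ℝ) + 1)
    refine ((ih (by nlinarith)).mul (angle_deriv.sin.const_mul 2)).congr_deriv ?_
    rw [scaledLogDeriv_succ, mulCot_of_ne_zero angle_pos.ne']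
    simp only [id_eq]
    generalize sin ((n + 1) * (θ / 2)) = s at sin_ne_zero ⊢
    field_simp

/-- The primitive of `mulCot` that vanishes at `0`. -/
noncomputable def mulCotPrimitive (t : ℝ) : ℝ := ∫ x in (0 : ℝ)..t, mulCot x

section MulCotPrimitive

variable {t y : ℝ}

lemma intervalIntegrable_mulCot (h₀ : 0 ≤ y) (h₁ : y < π) :
    IntervalIntegrable mulCot MeasureTheory.volume 0 y := by
  refine ContinuousOn.intervalIntegrable (continuousOn_mulCot.mono ?_)
  rw [Set.uIcc_of_le h₀]
  exact Set.Icc_subset_Ico_right h₁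

lemma hasDerivAt_mulCotPrimitive (h₀ : 0 < t) (h₁ : t < π) :
    HasDerivAt mulCotPrimitive (mulCot t) t :=
  intervalIntegral.integral_hasDerivAt_right (intervalIntegrable_mulCot h₀.le h₁)
    (continuous_cos.measurable.div
      continuous_sinc.measurable).stronglyMeasurable.stronglyMeasurableAtFilter
    (hasDerivAt_mulCot h₀ h₁).continuousAt

lemma mulCotPrimitive_zero : mulCotPrimitive 0 = 0 := intervalIntegral.integral_same

lemma continuousOn_mulCotPrimitive (h₀ : 0 ≤ y) (h₁ : y < π) :
    ContinuousOn mulCotPrimitive (Set.Icc 0 y) := by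
  rw [← Set.uIcc_of_le h₀]
  exact intervalIntegral.continuousOn_primitive_interval
    ((intervalIntegrable_iff' (by finiteness)).1 (intervalIntegrable_mulCot h₀ h₁))

lemma mulCotPrimitive_pi_div_two : mulCotPrimitive (π / 2) = π / 2 * log 2 := by
  have sinc_ne_zero (x : ℝ) (hx : x ∈ Set.Icc 0 (π / 2)) : sinc x ≠ 0 :=
    (sinc_pos hx.1 (by linarith [hx.2, pi_pos])).ne'
  -- `x * log (sin x)`, extended continuously by `0` at `x = 0`
  have continuous_extension :
      ContinuousOn (fun x => 1 / sinc x * (sin x * log (sin x))) (Set.Icc 0 (π / 2)) :=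
    (continuousOn_const.div continuous_sinc.continuousOn sinc_ne_zero).mul
      (continuous_mul_log.comp continuous_sin).continuousOn
  have deriv : ∀ x ∈ Set.Ioo 0 (π / 2), HasDerivAt
      (fun x => 1 / sinc x * (sin x * log (sin x))) (log (sin x) + mulCot x) x := by
    intro x hx
    have sin_pos {w : ℝ} (h : 0 < w) (h' : w < π / 2) : 0 < sin w :=
      sin_pos_of_pos_of_lt_pi h (by linarith [pi_pos])
    have : HasDerivAt (fun x => x * log (sin x)) (log (sin x) + mulCot x) x := by
      refine ((hasDerivAt_id x).mul
        ((hasDerivAt_sin x).log (sin_pos hx.1 hx.2).ne')).congr_deriv ?_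
      rw [mulCot_of_ne_zero hx.1.ne', one_mul, id_eq, mul_div_assoc]
    refine this.congr_of_eventuallyEq ?_
    filter_upwards [Ioo_mem_nhds hx.1 hx.2] with w hw
    have := (sin_pos hw.1 hw.2).ne'
    rw [sinc_of_ne_zero hw.1.ne']
    field_simp
  have mulCot_integrable := intervalIntegrable_mulCot (y := π / 2) (by positivity)
    (by linarith [pi_pos])
  have log_sin_integrable : IntervalIntegrable (fun x => log (sin x)) MeasureTheory.volume
      0 (π / 2) := intervalIntegrable_log_sin
  have parts := intervalIntegral.integral_eq_sub_of_hasDerivAt_of_le (by positivity)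
    continuous_extension deriv (log_sin_integrable.add mulCot_integrable)
  rw [intervalIntegral.integral_add log_sin_integrable mulCot_integrable,
    integral_log_sin_zero_pi_div_two] at parts
  simp only [sin_pi_div_two, log_one, sin_zero, mul_zero, zero_mul, sub_self] at parts
  rw [mulCotPrimitive]
  linarith

lemma mulCotPrimitive_pi_sub (h₀ : 0 < t) (h₁ : t ≤ π / 2) :
    mulCotPrimitive (π - t) = π * log (2 * sin t) - mulCotPrimitive t := by
  set defect : ℝ → ℝ := fun x => mulCotPrimitive (π - x) + mulCotPrimitive x - π * log (sin x)
    with defect_def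
  have deriv : ∀ x ∈ Set.Icc t (π / 2), HasDerivAt defect 0 x := by
    intro x hx
    have x_pos : 0 < x := h₀.trans_le hx.1
    have x_lt : x < π := by linarith [hx.2, pi_pos]
    have sin_ne_zero := (sin_pos_of_pos_of_lt_pi x_pos x_lt).ne'
    have reflected : HasDerivAt (fun x => mulCotPrimitive (π - x)) (mulCot (π - x) * (-1)) x :=
      (hasDerivAt_mulCotPrimitive (sub_pos.2 x_lt) (by linarith)).comp x
        ((hasDerivAt_id x).const_sub π)
    refine ((reflected.add (hasDerivAt_mulCotPrimitive x_pos x_lt)).sub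
      (((hasDerivAt_sin x).log sin_ne_zero).const_mul π)).congr_deriv ?_
    rw [mulCot_of_ne_zero (sub_pos.2 x_lt).ne', mulCot_of_ne_zero x_pos.ne', sin_pi_sub,
      cos_pi_sub]
    field_simp
    ring
  have constant : defect t = defect (π / 2) := by
    refine (constant_of_has_deriv_right_zero
      (fun x hx => (deriv x hx).continuousAt.continuousWithinAt)
      (fun x hx => (deriv x (Set.Ico_subset_Icc_self hx)).hasDerivWithinAt)
      _ (Set.right_mem_Icc.2 h₁)).symm
  rw [defect_def] at constant
  simp only [sin_pi_div_two, log_one, sub_half, mulCotPrimitive_pi_div_two] at constant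
  rw [log_mul two_ne_zero (sin_pos_of_pos_of_lt_pi h₀ (by linarith [pi_pos])).ne']
  linarith

end MulCotPrimitive

section SmallArgument

variable {u : ℝ}

lemma mulCot_le_of_le (h₀ : 0 < u) (h₁ : u ≤ 0.66) :
    mulCot u ≤ 1 - u ^ 2 / 3 - u ^ 4 / 45 - 0.0021 * u ^ 6 := by
  rw [mulCot_of_ne_zero h₀.ne',
    div_le_iff₀ (sin_pos_of_pos_of_lt_pi h₀ (by linarith [pi_gt_three]))]
  obtain ⟨v, v_def⟩ : ∃ v, u ^ 2 = v := ⟨_, rfl⟩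
  have v_nonneg : 0 ≤ v := v_def ▸ sq_nonneg u
  have v_le : v ≤ 0.44 := by nlinarith
  have bound_nonneg : 0 ≤ 1 - u ^ 2 / 3 - u ^ 4 / 45 - 0.0021 * u ^ 6 := by
    rw [show u ^ 4 = (u ^ 2) ^ 2 by ring, show u ^ 6 = (u ^ 2) ^ 3 by ring, v_def]
    nlinarith [pow_le_pow_left₀ v_nonneg v_le 3]
  refine (mul_le_mul_of_nonneg_left (cos_le_taylor_eight h₀.le) h₀.le).trans
    (le_trans ?_ (mul_le_mul_of_nonneg_left (taylor_seven_le_sin h₀.le) bound_nonneg))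
  have even_part : (1 - v / 2 + v ^ 2 / 24 - v ^ 3 / 720 + v ^ 4 / 40320) ≤
      (1 - v / 3 - v ^ 2 / 45 - 0.0021 * v ^ 3) * (1 - v / 6 + v ^ 2 / 120 - v ^ 3 / 5040) := by
    have : 0 ≤ v ^ 3 * (1.6 / 100000 + v * (0.0002 - 0.00002 * v)) :=
      mul_nonneg (by positivity) (by nlinarith)
    nlinarith [pow_nonneg v_nonneg 3, pow_nonneg v_nonneg 4, pow_nonneg v_nonneg 5,
      pow_nonneg v_nonneg 6]
  have := mul_le_mul_of_nonneg_left even_part h₀.le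
  rw [← v_def] at this
  linarith

lemma le_mulCot_of_le (h₀ : 0 < u) (h₁ : u ≤ 0.66) :
    1 - u ^ 2 / 3 - u ^ 4 / 45 - 0.0023 * u ^ 6 ≤ mulCot u := by
  rw [mulCot_of_ne_zero h₀.ne',
    le_div_iff₀ (sin_pos_of_pos_of_lt_pi h₀ (by linarith [pi_gt_three]))]
  obtain ⟨v, v_def⟩ : ∃ v, u ^ 2 = v := ⟨_, rfl⟩
  have v_nonneg : 0 ≤ v := v_def ▸ sq_nonneg u
  have v_le : v ≤ 0.44 := by nlinarith
  have bound_nonneg : 0 ≤ 1 - u ^ 2 / 3 - u ^ 4 / 45 - 0.0023 * u ^ 6 := by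
    rw [show u ^ 4 = (u ^ 2) ^ 2 by ring, show u ^ 6 = (u ^ 2) ^ 3 by ring, v_def]
    nlinarith [pow_le_pow_left₀ v_nonneg v_le 3]
  refine (mul_le_mul_of_nonneg_left (sin_le_taylor_nine h₀.le) bound_nonneg).trans
    (le_trans ?_ (mul_le_mul_of_nonneg_left (taylor_six_le_cos h₀.le) h₀.le))
  have even_part : (1 - v / 3 - v ^ 2 / 45 - 0.0023 * v ^ 3) *
      (1 - v / 6 + v ^ 2 / 120 - v ^ 3 / 5040 + v ^ 4 / 362880) ≤
      1 - v / 2 + v ^ 2 / 24 - v ^ 3 / 720 := by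
    have v4_le : v ^ 4 ≤ 0.44 * v ^ 3 := by nlinarith [pow_nonneg v_nonneg 3]
    have v5_le : v ^ 5 ≤ v ^ 4 := by nlinarith [pow_nonneg v_nonneg 4]
    have v6_le : v ^ 6 ≤ v ^ 5 := by nlinarith [pow_nonneg v_nonneg 5]
    nlinarith [pow_nonneg v_nonneg 3, pow_nonneg v_nonneg 4, pow_nonneg v_nonneg 5,
      pow_nonneg v_nonneg 6, pow_nonneg v_nonneg 7]
  have := mul_le_mul_of_nonneg_left even_part h₀.le
  rw [← v_def] at this
  linarith

lemma hasDerivAt_septic (c x : ℝ) :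
    HasDerivAt (fun x => x - x ^ 3 / 9 - x ^ 5 / 225 - c / 7 * x ^ 7)
      (1 - x ^ 2 / 3 - x ^ 4 / 45 - c * x ^ 6) x := by
  refine ((((hasDerivAt_id x).sub ((hasDerivAt_pow 3 x).div_const 9)).sub
    ((hasDerivAt_pow 5 x).div_const 225)).sub
    ((hasDerivAt_pow 7 x).const_mul (c / 7))).congr_deriv ?_
  push_cast
  ring

lemma mulCotPrimitive_le_of_le (h₀ : 0 < u) (h₁ : u ≤ 0.66) :
    mulCotPrimitive u ≤ u - u ^ 3 / 9 - u ^ 5 / 225 - 0.0003 * u ^ 7 := by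
  have pi_gt := pi_gt_three
  have := sub_le_sub_of_hasDerivAt_le h₀.le (continuousOn_mulCotPrimitive h₀.le (by linarith))
    (by fun_prop) (fun y hy => hasDerivAt_mulCotPrimitive hy.1 (by linarith [hy.2]))
    (fun y _ => hasDerivAt_septic 0.0021 y) fun y hy =>
      mulCot_le_of_le hy.1 (by linarith [hy.2])
  norm_num [mulCotPrimitive_zero] at this
  linarith

lemma le_mulCotPrimitive_of_le (h₀ : 0 < u) (h₁ : u ≤ 0.66) :
    u - u ^ 3 / 9 - u ^ 5 / 225 - 0.0023 / 7 * u ^ 7 ≤ mulCotPrimitive u := by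
  have pi_gt := pi_gt_three
  have := sub_le_sub_of_hasDerivAt_le h₀.le (by fun_prop)
    (continuousOn_mulCotPrimitive h₀.le (by linarith)) (fun y _ => hasDerivAt_septic 0.0023 y)
    (fun y hy => hasDerivAt_mulCotPrimitive hy.1 (by linarith [hy.2])) fun y hy =>
      le_mulCot_of_le hy.1 (by linarith [hy.2])
  norm_num [mulCotPrimitive_zero] at this
  linarith

end SmallArgument

/-- `-θ` times the derivative of `scaledLogDeriv n` at `θ`. -/
noncomputable def scaledLogDerivSlope (n : ℕ) (θ : ℝ) : ℝ :=
  ∑ k ∈ range n, -(((k + 1) * (θ / 2)) * mulCotDeriv ((k + 1) * (θ / 2)))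

/-- `-θ²` times the second derivative of `scaledLogDeriv n` at `θ`. -/
noncomputable def scaledLogDerivCurvature (n : ℕ) (θ : ℝ) : ℝ :=
  ∑ k ∈ range n, -(((k + 1) * (θ / 2)) ^ 2 * mulCotDeriv₂ ((k + 1) * (θ / 2)))

section RiemannSum

variable {g G : ℝ → ℝ} {p q C h : ℝ}

lemma sub_le_mul_of_hasDerivAt_le (hpq : p ≤ q) (hG : ContinuousOn G (Set.Icc p q))
    (hG' : ∀ x ∈ Set.Ioo p q, HasDerivAt G (g x) x) (hg : ∀ x ∈ Set.Ioo p q, g x ≤ C) :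
    G q - G p ≤ (q - p) * C := by
  have := sub_le_sub_of_hasDerivAt_le hpq hG (by fun_prop) hG'
    (fun x _ => hasDerivAt_mul_const C) hg
  linarith

lemma mul_le_sub_of_le_hasDerivAt (hpq : p ≤ q) (hG : ContinuousOn G (Set.Icc p q))
    (hG' : ∀ x ∈ Set.Ioo p q, HasDerivAt G (g x) x) (hg : ∀ x ∈ Set.Ioo p q, C ≤ g x) :
    (q - p) * C ≤ G q - G p := by
  have := sub_le_sub_of_hasDerivAt_le hpq (by fun_prop) hG (fun x _ => hasDerivAt_mul_const C)
    hG' hg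
  linarith

lemma sub_le_mul_sum_and_mul_sum_le_of_monotoneOn (hh : 0 ≤ h) (n : ℕ)
    (hG : ContinuousOn G (Set.Icc 0 (n * h)))
    (hG' : ∀ x ∈ Set.Ioo 0 (n * h), HasDerivAt G (g x) x)
    (hg : MonotoneOn g (Set.Icc 0 (n * h))) :
    G (n * h) - G 0 ≤ h * ∑ k ∈ range n, g ((k + 1) * h) ∧
      h * ∑ k ∈ range n, g ((k + 1) * h) ≤ G (n * h) - G 0 + h * (g (n * h) - g 0) := by
  induction n with
  | zero => simp
  | succ n ih =>
    push_cast at hG hG' hg ⊢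
    have start_nonneg : 0 ≤ n * h := by positivity
    have step : n * h ≤ (n + 1) * h := by linarith
    obtain ⟨lower, upper⟩ := ih (hG.mono (Set.Icc_subset_Icc_right step))
      (fun x hx => hG' x (Set.Ioo_subset_Ioo_right step hx))
      (hg.mono (Set.Icc_subset_Icc_right step))
    have hG_step := hG.mono (Set.Icc_subset_Icc_left start_nonneg)
    have hG'_step := fun x hx => hG' x (Set.Ioo_subset_Ioo_left start_nonneg hx)
    have step_upper := sub_le_mul_of_hasDerivAt_le step hG_step hG'_step fun x hx =>
      hg ⟨start_nonneg.trans hx.1.le, hx.2.le⟩ ⟨start_nonneg.trans step, le_rfl⟩ hx.2.le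
    have step_lower := mul_le_sub_of_le_hasDerivAt step hG_step hG'_step fun x hx =>
      hg ⟨start_nonneg, step⟩ ⟨start_nonneg.trans hx.1.le, hx.2.le⟩ hx.1.le
    rw [show (n + 1) * h - n * h = h by ring] at step_upper step_lower
    rw [sum_range_succ, mul_add]
    constructor <;> linarith

end RiemannSum

section Comparison

variable {n : ℕ} {θ : ℝ}

lemma le_mul_scaledLogDeriv (h₀ : 0 ≤ θ) (h₁ : n * (θ / 2) < π) :
    mulCotPrimitive (n * (θ / 2)) - θ / 2 * (1 - mulCot (n * (θ / 2))) ≤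
      θ / 2 * scaledLogDeriv n θ := by
  have := (sub_le_mul_sum_and_mul_sum_le_of_monotoneOn (g := -mulCot) (G := -mulCotPrimitive)
    (by positivity) n (continuousOn_mulCotPrimitive (by positivity) h₁).neg
    (fun x hx => (hasDerivAt_mulCotPrimitive hx.1 (hx.2.trans h₁)).neg)
    (antitoneOn_mulCot.mono (Set.Icc_subset_Ico_right h₁)).neg).2
  simp only [Pi.neg_apply, mulCotPrimitive_zero, mulCot_zero, sum_neg_distrib] at this
  rw [scaledLogDeriv]
  linarith

lemma mul_mulCot_add_mulCot_le {p q : ℝ} (hp : 0 ≤ p) (hpq : p ≤ q) (hq : q < π) :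
    (q - p) * ((mulCot p + mulCot q) / 2) ≤ mulCotPrimitive q - mulCotPrimitive p := by
  have sub_Ico : Set.Icc p q ⊆ Set.Ico 0 π := fun x hx => ⟨hp.trans hx.1, hx.2.trans_lt hq⟩
  have := sub_le_sub_of_hasDerivAt_le (f := fun x => (x - p) * ((mulCot p + mulCot x) / 2))
    (f' := fun x => (mulCot p + mulCot x) / 2 + (x - p) * (mulCotDeriv x / 2)) hpq
    (ContinuousOn.mul (by fun_prop)
      ((continuousOn_const.add (continuousOn_mulCot.mono sub_Ico)).div_const 2))
    ((continuousOn_mulCotPrimitive (hp.trans hpq) hq).mono (Set.Icc_subset_Icc_left hp))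
    (fun x hx => by
      refine (((hasDerivAt_id x).sub_const p).mul (((hasDerivAt_mulCot (hp.trans_lt hx.1)
        (hx.2.trans hq)).const_add (mulCot p)).div_const 2)).congr_deriv ?_
      rw [one_mul, id_eq])
    (fun x hx => hasDerivAt_mulCotPrimitive (hp.trans_lt hx.1) (hx.2.trans hq))
    (fun x hx => by
      have := mulCot_le_taylor ⟨hp, hpq.trans_lt hq⟩ ⟨hp.trans_lt hx.1, hx.2.trans hq⟩
      nlinarith [sq_nonneg (p - x)])
  simpa using this

lemma mul_scaledLogDeriv_le (h₀ : 0 ≤ θ) (h₁ : n * (θ / 2) < π) :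
    θ / 2 * scaledLogDeriv n θ ≤
      mulCotPrimitive (n * (θ / 2)) + θ / 2 * (mulCot (n * (θ / 2)) - 1) / 2 := by
  induction n with
  | zero => simp [scaledLogDeriv, mulCotPrimitive_zero, mulCot_zero]
  | succ n ih =>
    push_cast at h₁ ⊢
    have step := mul_mulCot_add_mulCot_le (p := n * (θ / 2)) (q := (n + 1) * (θ / 2))
      (by positivity) (by linarith) h₁
    have previous := ih (by linarith)
    rw [show (n + 1) * (θ / 2) - n * (θ / 2) = θ / 2 by ring] at step
    rw [scaledLogDeriv_succ]
    linarith

lemma monotoneOn_neg_mul_mulCotDeriv :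
    MonotoneOn (fun t => -(t * mulCotDeriv t)) (Set.Ico 0 π) := by
  intro u hu t ht hut
  have u_deriv_nonpos := mulCotDeriv_nonpos hu.1
  have t_deriv_nonpos := mulCotDeriv_nonpos ht.1
  rcases hu.1.eq_or_lt with rfl | u_pos
  · simpa using mul_nonpos_of_nonneg_of_nonpos ht.1 t_deriv_nonpos
  · have := antitoneOn_mulCotDeriv ⟨u_pos, hu.2⟩ ⟨u_pos.trans_le hut, ht.2⟩ hut
    nlinarith

lemma monotoneOn_neg_sq_mul_mulCotDeriv₂ :
    MonotoneOn (fun t => -(t ^ 2 * mulCotDeriv₂ t)) (Set.Ico 0 π) := by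
  intro u hu t ht hut
  rcases hu.1.eq_or_lt with rfl | u_pos
  · rcases hut.eq_or_lt with rfl | t_pos
    · rfl
    · have := mulCotDeriv₂_le t_pos ht.2
      have := mul_nonneg (sq_nonneg t) (by linarith : 0 ≤ -mulCotDeriv₂ t)
      simpa using this
  · have deriv_le := antitoneOn_mulCotDeriv₂ ⟨u_pos, hu.2⟩ ⟨u_pos.trans_le hut, ht.2⟩ hut
    have deriv_neg := mulCotDeriv₂_le u_pos hu.2
    have := mul_le_mul (pow_le_pow_left₀ hu.1 hut 2) (neg_le_neg deriv_le) (by linarith)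
      (sq_nonneg t)
    linarith

lemma mul_scaledLogDerivSlope_bounds (h₀ : 0 ≤ θ) (h₁ : n * (θ / 2) < π) :
    mulCotPrimitive (n * (θ / 2)) - n * (θ / 2) * mulCot (n * (θ / 2)) ≤
        θ / 2 * scaledLogDerivSlope n θ ∧
      θ / 2 * scaledLogDerivSlope n θ ≤
        mulCotPrimitive (n * (θ / 2)) - n * (θ / 2) * mulCot (n * (θ / 2)) +
          θ / 2 * -(n * (θ / 2) * mulCotDeriv (n * (θ / 2))) := by
  have := sub_le_mul_sum_and_mul_sum_le_of_monotoneOn (g := fun t => -(t * mulCotDeriv t))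
    (G := fun t => mulCotPrimitive t - t * mulCot t) (by positivity) n
    ((continuousOn_mulCotPrimitive (by positivity) h₁).sub
      (continuousOn_id.mul (continuousOn_mulCot.mono (Set.Icc_subset_Ico_right h₁))))
    (fun x hx => ((hasDerivAt_mulCotPrimitive hx.1 (hx.2.trans h₁)).sub
      ((hasDerivAt_id x).mul (hasDerivAt_mulCot hx.1 (hx.2.trans h₁)))).congr_deriv (by
        simp only [id_eq]
        ring))
    (monotoneOn_neg_mul_mulCotDeriv.mono (Set.Icc_subset_Ico_right h₁))
  simpa only [scaledLogDerivSlope, mulCotPrimitive_zero, zero_mul, sub_zero, neg_zero] using this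

lemma continuousOn_sq_mul_mulCotDeriv :
    ContinuousOn (fun t => t ^ 2 * mulCotDeriv t) (Set.Ico 0 π) := by
  have : ContinuousOn (fun t => (sin t * cos t - t) / sinc t ^ 2) (Set.Ico 0 π) :=
    ContinuousOn.div (by fun_prop) (continuous_sinc.continuousOn.pow 2)
      fun x hx => pow_ne_zero 2 (sinc_pos hx.1 hx.2).ne'
  refine this.congr fun x hx => ?_
  rcases hx.1.eq_or_lt with rfl | x_pos
  · simp
  · simp only [mulCotDeriv, sinc_of_ne_zero x_pos.ne', div_pow, div_div_eq_mul_div]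
    ring

lemma mul_scaledLogDerivCurvature_le (h₀ : 0 ≤ θ) (h₁ : n * (θ / 2) < π) :
    θ / 2 * scaledLogDerivCurvature n θ ≤
      2 * (n * (θ / 2)) * mulCot (n * (θ / 2)) - 2 * mulCotPrimitive (n * (θ / 2)) -
        (n * (θ / 2)) ^ 2 * mulCotDeriv (n * (θ / 2)) +
        θ / 2 * -((n * (θ / 2)) ^ 2 * mulCotDeriv₂ (n * (θ / 2))) := by
  have sub_Ico : Set.Icc 0 (n * (θ / 2)) ⊆ Set.Ico 0 π := Set.Icc_subset_Ico_right h₁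
  have := (sub_le_mul_sum_and_mul_sum_le_of_monotoneOn
    (g := fun t => -(t ^ 2 * mulCotDeriv₂ t))
    (G := fun t => 2 * t * mulCot t - 2 * mulCotPrimitive t - t ^ 2 * mulCotDeriv t)
    (by positivity) n
    ((((continuousOn_const.mul continuousOn_id).mul (continuousOn_mulCot.mono sub_Ico)).sub
      (continuousOn_const.mul (continuousOn_mulCotPrimitive (by positivity) h₁))).sub
      (continuousOn_sq_mul_mulCotDeriv.mono sub_Ico))
    (fun x hx => by
      have x_lt := hx.2.trans h₁
      refine (((((hasDerivAt_id x).const_mul 2).mul (hasDerivAt_mulCot hx.1 x_lt)).sub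
        ((hasDerivAt_mulCotPrimitive hx.1 x_lt).const_mul 2)).sub
        ((hasDerivAt_pow 2 x).mul (hasDerivAt_mulCotDeriv hx.1 x_lt))).congr_deriv ?_
      simp only [id_eq]
      push_cast
      ring)
    (monotoneOn_neg_sq_mul_mulCotDeriv₂.mono sub_Ico)).2
  simpa only [scaledLogDerivCurvature, mulCotPrimitive_zero, zero_mul, mul_zero, sub_zero,
    neg_zero, zero_pow two_ne_zero] using this

end Comparison

section ReflectedBounds

variable {z zl zu s c sl su cl cu yl yu l u : ℝ}

lemma sin_cos_taylor_bounds (hzl : 0 ≤ zl) (hl : zl ≤ z) (hu : z ≤ zu) (hzu : zu ≤ 1) :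
    zl - zl ^ 3 / 6 + zl ^ 5 / 120 - zl ^ 7 / 5040 ≤ sin z ∧
      sin z ≤ zu - zu ^ 3 / 6 + zu ^ 5 / 120 - zu ^ 7 / 5040 + zu ^ 9 / 362880 ∧
      1 - zu ^ 2 / 2 + zu ^ 4 / 24 - zu ^ 6 / 720 ≤ cos z ∧
      cos z ≤ 1 - zl ^ 2 / 2 + zl ^ 4 / 24 - zl ^ 6 / 720 + zl ^ 8 / 40320 := by
  have pi_gt := pi_gt_three
  exact ⟨(taylor_seven_le_sin hzl).trans
      (sin_le_sin_of_le_of_le_pi_div_two (by linarith) (by linarith) hl),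
    (sin_le_sin_of_le_of_le_pi_div_two (by linarith) (by linarith) hu).trans
      (sin_le_taylor_nine (by linarith)),
    (taylor_six_le_cos (by linarith)).trans
      (cos_le_cos_of_nonneg_of_le_pi (by linarith) (by linarith) hu),
    (cos_le_cos_of_nonneg_of_le_pi hzl (by linarith) hl).trans (cos_le_taylor_eight hzl)⟩

lemma mulCotPrimitive_pi_sub_bounds (hzl : 0 < zl) (h₁ : zl ≤ z) (h₂ : z ≤ zu) (hzu : zu ≤ 0.66)
    (hl : exp l ≤ 2 * sin z) (hu : 2 * sin z ≤ exp u) :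
    π * l - (zu - zl ^ 3 / 9 - zl ^ 5 / 225 - 0.0003 * zl ^ 7) ≤ mulCotPrimitive (π - z) ∧
      mulCotPrimitive (π - z) ≤
        π * u - (zl - zu ^ 3 / 9 - zu ^ 5 / 225 - 0.0023 / 7 * zu ^ 7) := by
  have z_pos := hzl.trans_le h₁
  have two_sin_pos := (exp_pos l).trans_le hl
  rw [mulCotPrimitive_pi_sub z_pos (by linarith [pi_gt_three])]
  have log_lower := mul_le_mul_of_nonneg_left ((le_log_iff_exp_le two_sin_pos).2 hl) pi_pos.le
  have log_upper := mul_le_mul_of_nonneg_left ((log_le_iff_le_exp two_sin_pos).2 hu) pi_pos.le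
  have primitive_lower := le_mulCotPrimitive_of_le z_pos (h₂.trans hzu)
  have primitive_upper := mulCotPrimitive_le_of_le z_pos (h₂.trans hzu)
  have lower_pow (k : ℕ) : zl ^ k ≤ z ^ k := pow_le_pow_left₀ hzl.le h₁ k
  have upper_pow (k : ℕ) : z ^ k ≤ zu ^ k := pow_le_pow_left₀ z_pos.le h₂ k
  constructor
  · linarith [lower_pow 3, lower_pow 5, lower_pow 7]
  · linarith [upper_pow 3, upper_pow 5, upper_pow 7]

lemma mulCot_pi_sub_bounds (hyl : 0 < yl) (hcl : 0 < cl) (hsl : 0 < sl) (hy : yl ≤ π - z)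
    (hy' : π - z ≤ yu) (hc : cl ≤ cos z) (hc' : cos z ≤ cu) (hs : sl ≤ sin z)
    (hs' : sin z ≤ su) :
    yl * cl / su ≤ -mulCot (π - z) ∧ -mulCot (π - z) ≤ yu * cu / sl ∧
      -((π - z) * mulCotDeriv (π - z)) ≤ yu * ((su * cu + yu) / sl ^ 2) ∧
      -((π - z) ^ 2 * mulCotDeriv₂ (π - z)) ≤ yu ^ 2 * (2 * (su + yu * cu) / sl ^ 3) := by
  have y_pos := hyl.trans_le hy
  have cos_pos := hcl.trans_le hc
  have sin_pos := hsl.trans_le hs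
  have yu_pos := y_pos.trans_le hy'
  have cu_pos := cos_pos.trans_le hc'
  have su_pos := sin_pos.trans_le hs'
  have value : -mulCot (π - z) = (π - z) * cos z / sin z := by
    rw [mulCot_of_ne_zero y_pos.ne', sin_pi_sub, cos_pi_sub]
    ring
  have deriv : -((π - z) * mulCotDeriv (π - z)) =
      (π - z) * ((sin z * cos z + (π - z)) / sin z ^ 2) := by
    rw [mulCotDeriv, sin_pi_sub, cos_pi_sub]
    ring
  have deriv₂ : -((π - z) ^ 2 * mulCotDeriv₂ (π - z)) =
      (π - z) ^ 2 * (2 * (sin z + (π - z) * cos z) / sin z ^ 3) := by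
    rw [mulCotDeriv₂, sin_pi_sub, cos_pi_sub]
    ring
  rw [value, deriv, deriv₂]
  refine ⟨?_, ?_, ?_, ?_⟩ <;> gcongr

end ReflectedBounds

lemma exp_le_taylor_seven {x : ℝ} (h₀ : 0 ≤ x) (h₁ : x ≤ 1) :
    exp x ≤ 1 + x + x ^ 2 / 2 + x ^ 3 / 6 + x ^ 4 / 24 + x ^ 5 / 120 + x ^ 6 / 720 +
      x ^ 7 / 4410 := by
  have := exp_bound' h₀ h₁ (n := 7) (by norm_num)
  norm_num [sum_range_succ, Nat.factorial] at this
  linarith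

lemma taylor_six_le_exp {x : ℝ} (h₀ : 0 ≤ x) :
    1 + x + x ^ 2 / 2 + x ^ 3 / 6 + x ^ 4 / 24 + x ^ 5 / 120 + x ^ 6 / 720 ≤ exp x := by
  have := sum_le_exp_of_nonneg h₀ 7
  norm_num [sum_range_succ, Nat.factorial] at this
  linarith

section Enclosures

variable {y : ℝ}

lemma enclosure_68533_div_86616 (hy : y = 68533 * (π / 86616)) :
    (-0.001 ≤ mulCotPrimitive y ∧ mulCotPrimitive y ≤ -0.000011) ∧
      (3.23 ≤ -mulCot y ∧ -mulCot y ≤ 3.2305) ∧ -(y * mulCotDeriv y) ≤ 30 := by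
  have pi_lower := pi_gt_d20
  have pi_upper := pi_lt_d20
  obtain ⟨z, rfl⟩ : ∃ z, y = π - z := ⟨π - y, by ring⟩
  have z_lower : 0.655876742 ≤ z := by linarith
  have z_upper : z ≤ 0.655876743 := by linarith
  obtain ⟨sin_lower, sin_upper, cos_lower, cos_upper⟩ :
      0.609854 ≤ sin z ∧ sin z ≤ 0.60985431 ∧ 0.79251 ≤ cos z ∧ cos z ≤ 0.79252 := by
    have := sin_cos_taylor_bounds (by norm_num) z_lower z_upper (by norm_num)
    norm_num at this ⊢
    refine ⟨?_, ?_, ?_, ?_⟩ <;> linarith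
  have primitive := mulCotPrimitive_pi_sub_bounds (l := 0.1986) (u := 0.1986125) (by norm_num)
    z_lower z_upper (by norm_num)
    ((exp_le_taylor_seven (by norm_num) (by norm_num)).trans (by linarith))
    (le_trans (by linarith) (taylor_six_le_exp (by norm_num)))
  have cot := mulCot_pi_sub_bounds (yl := 2.4857159) (yu := 2.4857160) (by norm_num)
    (by norm_num) (by norm_num) (by linarith) (by linarith) cos_lower cos_upper sin_lower sin_upper
  norm_num at primitive cot ⊢
  refine ⟨⟨?_, ?_⟩, ⟨?_, ?_⟩, ?_⟩ <;> linarith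

lemma enclosure_68533_div_86620 (hy : y = 68533 * (π / 86620)) :
    (0.0003535 ≤ mulCotPrimitive y ∧ mulCotPrimitive y ≤ 0.00036) ∧
      (3.2291 ≤ -mulCot y ∧ -mulCot y ≤ 3.2294) ∧ -(y * mulCotDeriv y) ≤ 20 := by
  have pi_lower := pi_gt_d20
  have pi_upper := pi_lt_d20
  obtain ⟨z, rfl⟩ : ∃ z, y = π - z := ⟨π - y, by ring⟩
  have z_lower : 0.6559915299 ≤ z := by linarith
  have z_upper : z ≤ 0.6559915300 := by linarith
  obtain ⟨sin_lower, sin_upper, cos_lower, cos_upper⟩ :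
      0.6099452 ≤ sin z ∧ sin z ≤ 0.60994528 ∧ 0.79244 ≤ cos z ∧ cos z ≤ 0.792444 := by
    have := sin_cos_taylor_bounds (by norm_num) z_lower z_upper (by norm_num)
    norm_num at this ⊢
    refine ⟨?_, ?_, ?_, ?_⟩ <;> linarith
  have primitive := mulCotPrimitive_pi_sub_bounds (l := 0.1987606) (u := 0.1987614)
    (by norm_num) z_lower z_upper (by norm_num)
    ((exp_le_taylor_seven (by norm_num) (by norm_num)).trans (by linarith))
    (le_trans (by linarith) (taylor_six_le_exp (by norm_num)))
  have cot := mulCot_pi_sub_bounds (yl := 2.4856011) (yu := 2.4856012) (by norm_num)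
    (by norm_num) (by norm_num) (by linarith) (by linarith) cos_lower cos_upper sin_lower sin_upper
  norm_num at primitive cot ⊢
  refine ⟨⟨?_, ?_⟩, ⟨?_, ?_⟩, ?_⟩ <;> linarith

lemma enclosure_68533_mul_102_div_86620 (hy : y = 68533 * (1.02 * (π / 86620))) :
    (-0.172 ≤ mulCotPrimitive y ∧ mulCotPrimitive y ≤ -0.165) ∧
      (3.6563 ≤ -mulCot y ∧ -mulCot y ≤ 3.6566) ∧ -(y * mulCotDeriv y) ≤ 23.454 ∧
      -(y ^ 2 * mulCotDeriv₂ y) ≤ 200 := by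
  have pi_lower := pi_gt_d20
  have pi_upper := pi_lt_d20
  obtain ⟨z, rfl⟩ : ∃ z, y = π - z := ⟨π - y, by ring⟩
  have z_lower : 0.606279 ≤ z := by linarith
  have z_upper : z ≤ 0.60628 := by linarith
  obtain ⟨sin_lower, sin_upper, cos_lower, cos_upper⟩ :
      0.56981 ≤ sin z ∧ sin z ≤ 0.569817 ∧ 0.821772 ≤ cos z ∧ cos z ≤ 0.821775 := by
    have := sin_cos_taylor_bounds (by norm_num) z_lower z_upper (by norm_num)
    norm_num at this ⊢
    refine ⟨?_, ?_, ?_, ?_⟩ <;> linarith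
  have primitive := mulCotPrimitive_pi_sub_bounds (l := 0.1306) (u := 0.1308) (by norm_num)
    z_lower z_upper (by norm_num)
    ((exp_le_taylor_seven (by norm_num) (by norm_num)).trans (by linarith))
    (le_trans (by linarith) (taylor_six_le_exp (by norm_num)))
  have cot := mulCot_pi_sub_bounds (yl := 2.53531) (yu := 2.535315) (by norm_num)
    (by norm_num) (by norm_num) (by linarith) (by linarith) cos_lower cos_upper sin_lower sin_upper
  norm_num at primitive cot ⊢
  refine ⟨⟨?_, ?_⟩, ⟨?_, ?_⟩, ?_, ?_⟩ <;> linarith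

end Enclosures

section EnclosedAngle

variable {n : ℕ} {θ h Φl Φu Xl Xu g v : ℝ}

lemma mul_scaledLogDeriv_bounds_of_enclosure (hh : θ / 2 = h) (h_pos : 0 < h) (h_lt : n * h < π)
    (hΦ : Φl ≤ mulCotPrimitive (n * h) ∧ mulCotPrimitive (n * h) ≤ Φu)
    (hX : Xl ≤ -mulCot (n * h) ∧ -mulCot (n * h) ≤ Xu) :
    Φl - h * (1 + Xu) ≤ h * scaledLogDeriv n θ ∧
      h * scaledLogDeriv n θ ≤ Φu - h * (1 + Xl) / 2 := by
  subst hh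
  have lower := le_mul_scaledLogDeriv (by linarith) h_lt
  have upper := mul_scaledLogDeriv_le (by linarith) h_lt
  have cot_lower := mul_le_mul_of_nonneg_left hX.1 h_pos.le
  have cot_upper := mul_le_mul_of_nonneg_left hX.2 h_pos.le
  constructor <;> linarith

lemma mul_scaledLogDerivSlope_bounds_of_enclosure (hh : θ / 2 = h) (h_pos : 0 < h)
    (h_lt : n * h < π) (hΦ : Φl ≤ mulCotPrimitive (n * h) ∧ mulCotPrimitive (n * h) ≤ Φu)
    (hX : Xl ≤ -mulCot (n * h) ∧ -mulCot (n * h) ≤ Xu)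
    (hg : -(n * h * mulCotDeriv (n * h)) ≤ g) :
    Φl + n * h * Xl ≤ h * scaledLogDerivSlope n θ ∧
      h * scaledLogDerivSlope n θ ≤ Φu + n * h * Xu + h * g := by
  subst hh
  obtain ⟨lower, upper⟩ := mul_scaledLogDerivSlope_bounds (by linarith) h_lt
  have y_nonneg : 0 ≤ n * (θ / 2) := by positivity
  have cot_lower := mul_le_mul_of_nonneg_left hX.1 y_nonneg
  have cot_upper := mul_le_mul_of_nonneg_left hX.2 y_nonneg
  have deriv_le := mul_le_mul_of_nonneg_left hg h_pos.le
  constructor <;> linarith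

lemma mul_scaledLogDerivCurvature_le_of_enclosure (hh : θ / 2 = h) (h_pos : 0 < h)
    (h_lt : n * h < π) (hΦ : Φl ≤ mulCotPrimitive (n * h)) (hX : Xl ≤ -mulCot (n * h))
    (hg : -(n * h * mulCotDeriv (n * h)) ≤ g) (hv : -((n * h) ^ 2 * mulCotDeriv₂ (n * h)) ≤ v) :
    h * scaledLogDerivCurvature n θ ≤ n * h * (g - 2 * Xl) - 2 * Φl + h * v := by
  subst hh
  have upper := mul_scaledLogDerivCurvature_le (by linarith) h_lt
  have y_nonneg : 0 ≤ n * (θ / 2) := by positivity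
  have cot_lower := mul_le_mul_of_nonneg_left hX y_nonneg
  have deriv_le := mul_le_mul_of_nonneg_left hg y_nonneg
  have deriv₂_le := mul_le_mul_of_nonneg_left hv h_pos.le
  linarith

lemma scaledLogDeriv_at_86616 (hn : n = 68533) :
    scaledLogDeriv n (2 * π / 86616) ≤ -2.4 ∧
      3.229 * n ≤ scaledLogDerivSlope n (2 * π / 86616) ∧
      scaledLogDerivSlope n (2 * π / 86616) ≤ 3.231 * n := by
  have hn' : (n : ℝ) = 68533 := by exact_mod_cast hn
  obtain ⟨Φ_bounds, cot_bounds, deriv_le⟩ := enclosure_68533_div_86616 (congrArg (· * _) hn')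
  have half_angle : 2 * π / 86616 / 2 = π / 86616 := by ring
  have h_pos : 0 < π / 86616 := by positivity
  have h_lt : n * (π / 86616) < π := by rw [hn']; linarith [pi_pos]
  have value := mul_scaledLogDeriv_bounds_of_enclosure half_angle h_pos h_lt Φ_bounds cot_bounds
  have slope := mul_scaledLogDerivSlope_bounds_of_enclosure half_angle h_pos h_lt Φ_bounds
    cot_bounds deriv_le
  rw [hn'] at slope ⊢
  refine ⟨le_of_mul_le_mul_left ?_ h_pos, le_of_mul_le_mul_left ?_ h_pos,
    le_of_mul_le_mul_left ?_ h_pos⟩ <;> linarith [pi_gt_three, pi_lt_d2]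

lemma scaledLogDeriv_at_86620 (hn : n = 68533) :
    (5.5 ≤ scaledLogDeriv n (2 * π / 86620) ∧ scaledLogDeriv n (2 * π / 86620) ≤ 10) ∧
      3.229 * n ≤ scaledLogDerivSlope n (2 * π / 86620) ∧
      scaledLogDerivSlope n (2 * π / 86620) ≤ 3.23 * n := by
  have hn' : (n : ℝ) = 68533 := by exact_mod_cast hn
  obtain ⟨Φ_bounds, cot_bounds, deriv_le⟩ := enclosure_68533_div_86620 (congrArg (· * _) hn')
  have half_angle : 2 * π / 86620 / 2 = π / 86620 := by ring
  have h_pos : 0 < π / 86620 := by positivity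
  have h_lt : n * (π / 86620) < π := by rw [hn']; linarith [pi_pos]
  have value := mul_scaledLogDeriv_bounds_of_enclosure half_angle h_pos h_lt Φ_bounds cot_bounds
  have slope := mul_scaledLogDerivSlope_bounds_of_enclosure half_angle h_pos h_lt Φ_bounds
    cot_bounds deriv_le
  rw [hn'] at slope ⊢
  refine ⟨⟨le_of_mul_le_mul_left ?_ h_pos, le_of_mul_le_mul_left ?_ h_pos⟩,
    le_of_mul_le_mul_left ?_ h_pos, le_of_mul_le_mul_left ?_ h_pos⟩ <;>
  linarith [pi_gt_three, pi_lt_d4]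

lemma scaledLogDerivSlope_and_curvature_at_102_div_86620 (hn : n = 68533) :
    scaledLogDerivSlope n (1.02 * (2 * π / 86620)) ≤ 3.6 * n ∧
      scaledLogDerivCurvature n (1.02 * (2 * π / 86620)) ≤ 16.3 * n := by
  have hn' : (n : ℝ) = 68533 := by exact_mod_cast hn
  obtain ⟨Φ_bounds, cot_bounds, deriv_le, deriv₂_le⟩ :=
    enclosure_68533_mul_102_div_86620 (congrArg (· * _) hn')
  have half_angle : 1.02 * (2 * π / 86620) / 2 = 1.02 * (π / 86620) := by ring
  have h_pos : 0 < 1.02 * (π / 86620) := by positivity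
  have h_lt : n * (1.02 * (π / 86620)) < π := by rw [hn']; linarith [pi_pos]
  have slope := (mul_scaledLogDerivSlope_bounds_of_enclosure half_angle h_pos h_lt Φ_bounds
    cot_bounds deriv_le).2
  have curvature := mul_scaledLogDerivCurvature_le_of_enclosure half_angle h_pos h_lt
    Φ_bounds.1 cot_bounds.1 deriv_le deriv₂_le
  rw [hn'] at slope curvature ⊢
  refine ⟨le_of_mul_le_mul_left ?_ h_pos, le_of_mul_le_mul_left ?_ h_pos⟩ <;>
  linarith [pi_gt_three, pi_lt_d2]

end EnclosedAngle

section ScaledLogDerivBounds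

variable {n k : ℕ} {θ θ' s T : ℝ}

lemma succ_mul_half_mem_Ioc (hk : k ∈ range n) (hθ : 0 < θ) :
    ((k : ℝ) + 1) * (θ / 2) ∈ Set.Ioc 0 (n * (θ / 2)) := by
  have : (k : ℝ) + 1 ≤ n := by exact_mod_cast mem_range.1 hk
  exact ⟨by positivity, by gcongr⟩

lemma pow_three_div_three_le_sum_sq (n : ℕ) :
    (n : ℝ) ^ 3 / 3 ≤ ∑ k ∈ range n, ((k : ℝ) + 1) ^ 2 := by
  induction n with
  | zero => simp
  | succ n ih =>
    rw [sum_range_succ]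
    push_cast
    linarith [n.cast_nonneg (α := ℝ)]

lemma scaledLogDeriv_le_taylor (hθ : 0 < θ) (h : n * (θ / 2) < π) (hs : θ' = θ * (1 + s))
    (hθ' : 0 < θ') (h' : n * (θ' / 2) < π) :
    scaledLogDeriv n θ' ≤ scaledLogDeriv n θ - scaledLogDerivSlope n θ * s -
      (n * (θ / 2)) ^ 2 * n / 9 * s ^ 2 := by
  have termwise : scaledLogDeriv n θ' ≤ ∑ k ∈ range n, (mulCot ((k + 1) * (θ / 2)) -
      -((k + 1) * (θ / 2) * mulCotDeriv ((k + 1) * (θ / 2))) * s -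
      (θ / 2) ^ 2 * s ^ 2 / 3 * ((k : ℝ) + 1) ^ 2) := by
    refine sum_le_sum fun k hk => ?_
    have mem := succ_mul_half_mem_Ioc hk hθ
    have mem' := succ_mul_half_mem_Ioc hk hθ'
    refine (mulCot_le_taylor ⟨mem'.1.le, mem'.2.trans_lt h'⟩ ⟨mem.1, mem.2.trans_lt h⟩).trans_eq ?_
    rw [hs]
    ring
  rw [sum_sub_distrib, sum_sub_distrib, ← mul_sum, ← sum_mul] at termwise
  have quadratic := mul_le_mul_of_nonneg_left (pow_three_div_three_le_sum_sq n)
    (show 0 ≤ (θ / 2) ^ 2 * s ^ 2 / 3 by positivity)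
  unfold scaledLogDeriv scaledLogDerivSlope at *
  linarith

lemma taylor_le_scaledLogDeriv (hθ : 0 < θ) (hs : θ' = θ * (1 + s)) (hθ' : 0 < θ')
    (hT : n * (T / 2) < π) (hθT : θ ≤ T) (hθT' : θ' ≤ T) :
    scaledLogDeriv n θ - scaledLogDerivSlope n θ * s -
      scaledLogDerivCurvature n T * (θ / T) ^ 2 / 2 * s ^ 2 ≤ scaledLogDeriv n θ' := by
  have T_pos : 0 < T := hθ.trans_le hθT
  have termwise : ∑ k ∈ range n, (mulCot ((k + 1) * (θ / 2)) -
      -((k + 1) * (θ / 2) * mulCotDeriv ((k + 1) * (θ / 2))) * s -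
      -(((k + 1) * (T / 2)) ^ 2 * mulCotDeriv₂ ((k + 1) * (T / 2))) * ((θ / T) ^ 2 / 2 * s ^ 2)) ≤
      scaledLogDeriv n θ' := by
    refine sum_le_sum fun k hk => ?_
    have lt_pi := (succ_mul_half_mem_Ioc hk T_pos).2.trans_lt hT
    refine (Eq.le ?_).trans (taylor_le_mulCot (t := (k + 1) * (θ / 2)) lt_pi
      ⟨(succ_mul_half_mem_Ioc hk hθ').1, by gcongr⟩
      ⟨(succ_mul_half_mem_Ioc hk hθ).1, by gcongr⟩)
    rw [hs]
    field_simp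
    ring
  rw [sum_sub_distrib, sum_sub_distrib, ← sum_mul, ← sum_mul] at termwise
  unfold scaledLogDeriv scaledLogDerivSlope scaledLogDerivCurvature at *
  linarith

lemma scaledLogDeriv_le_of_le (hθ : 0 < θ) (h : θ ≤ θ') (h' : n * (θ' / 2) < π) :
    scaledLogDeriv n θ' ≤ scaledLogDeriv n θ := by
  refine sum_le_sum fun k hk => ?_
  have mem := succ_mul_half_mem_Ioc hk hθ
  have mem' := succ_mul_half_mem_Ioc hk (hθ.trans_le h)
  have le : (k + 1) * (θ / 2) ≤ (k + 1) * (θ' / 2) := by gcongr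
  have lt_pi := mem'.2.trans_lt h'
  exact antitoneOn_mulCot ⟨mem.1.le, le.trans_lt lt_pi⟩ ⟨mem'.1.le, lt_pi⟩ le

lemma scaledLogDeriv_sub_le (hθ : 0 < θ) (h : θ ≤ θ') (hT : θ' ≤ T) (h' : n * (T / 2) < π) :
    scaledLogDeriv n θ - scaledLogDeriv n θ' ≤ scaledLogDerivSlope n T * ((θ' - θ) / T) := by
  have T_pos : 0 < T := hθ.trans_le (h.trans hT)
  unfold scaledLogDeriv scaledLogDerivSlope
  rw [← sum_sub_distrib, sum_mul]
  refine sum_le_sum fun k hk => ?_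
  have mem := succ_mul_half_mem_Ioc hk hθ
  have lt_pi := (succ_mul_half_mem_Ioc hk T_pos).2.trans_lt h'
  have le : ((k : ℝ) + 1) * (θ / 2) ≤ (k + 1) * (θ' / 2) := by gcongr
  have le' : ((k : ℝ) + 1) * (θ' / 2) ≤ (k + 1) * (T / 2) := by gcongr
  have increment := mul_le_sub_of_le_hasDerivAt le
    (continuousOn_mulCot.mono fun x hx => ⟨mem.1.le.trans hx.1, hx.2.trans_lt (le'.trans_lt lt_pi)⟩)
    (fun x hx => hasDerivAt_mulCot (mem.1.trans hx.1) (hx.2.trans_le le' |>.trans lt_pi))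
    (fun x hx => antitoneOn_mulCotDeriv ⟨mem.1.trans hx.1, hx.2.trans_le le' |>.trans lt_pi⟩
      ⟨mem.1.trans_le (le.trans le'), lt_pi⟩ (hx.2.le.trans le'))
  have rescale : -((k + 1) * (T / 2) * mulCotDeriv ((k + 1) * (T / 2))) * ((θ' - θ) / T) =
      -(((k + 1) * (θ' / 2) - (k + 1) * (θ / 2)) * mulCotDeriv ((k + 1) * (T / 2))) := by
    field_simp
  rw [rescale]
  linarith

lemma chord_le_scaledLogDeriv {l : ℝ} (hθ : 0 < θ) (h : n * (θ / 2) < π) (hl₀ : 0 ≤ l)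
    (hl₁ : l ≤ 1) : (1 - l) * n + l * scaledLogDeriv n θ ≤ scaledLogDeriv n (l * θ) := by
  have expand : (1 - l) * n + l * scaledLogDeriv n θ =
      ∑ k ∈ range n, ((1 - l) * mulCot 0 + l * mulCot ((k + 1) * (θ / 2))) := by
    simp only [scaledLogDeriv, mul_sum, sum_add_distrib, mulCot_zero, sum_const, card_range,
      nsmul_eq_mul]
    ring
  rw [expand]
  refine sum_le_sum fun k hk => ?_
  have mem := succ_mul_half_mem_Ioc hk hθ
  refine (concaveOn_mulCot.2 ⟨le_rfl, pi_pos⟩ ⟨mem.1.le, mem.2.trans_lt h⟩ (sub_nonneg.2 hl₁) hl₀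
    (by ring)).trans_eq ?_
  congr 1
  simp only [smul_eq_mul]
  ring

lemma scaledLogDeriv_le_natCast (hθ : 0 < θ) (h : n * (θ / 2) < π) : scaledLogDeriv n θ ≤ n := by
  have termwise : scaledLogDeriv n θ ≤ ∑ _ ∈ range n, (1 : ℝ) := sum_le_sum fun _ hk =>
    have mem := succ_mul_half_mem_Ioc hk hθ
    mulCot_le_one mem.1.le (mem.2.trans_lt h)
  simpa using termwise

end ScaledLogDerivBounds

section MainArcMass

variable {n : ℕ} {θ t : ℝ}

lemma sineProd_mul_div_pow_le (hθ : 0 ≤ θ) (hθt : θ ≤ t) (ht : 0 < t) (h : n * (t / 2) < π) :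
    sineProd n t * (θ / t) ^ n ≤ sineProd n θ := by
  have ratio_le_one : θ / t ≤ 1 := (div_le_one ht).2 hθt
  rw [sineProd, ← card_range n, ← prod_const, card_range, ← prod_mul_distrib]
  refine prod_le_prod (fun _ hk => ?_) fun k hk => ?_ <;>
  have mem := succ_mul_half_mem_Ioc hk ht
  · have := sin_pos_of_pos_of_lt_pi mem.1 (mem.2.trans_lt h)
    positivity
  · have concave := strictConcaveOn_sin_Icc.concaveOn.2 ⟨le_rfl, pi_pos.le⟩
      ⟨mem.1.le, (mem.2.trans_lt h).le⟩ (sub_nonneg.2 ratio_le_one) (div_nonneg hθ ht.le) (by ring)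
    have angle : θ / t * ((k + 1) * (t / 2)) = (k + 1) * (θ / 2) := by field_simp
    simp only [smul_eq_mul, mul_zero, sin_zero, zero_add, angle] at concave
    linarith

lemma sineProd_nonneg (hθ : 0 ≤ θ) (h : n * (θ / 2) ≤ π) : 0 ≤ sineProd n θ := by
  refine prod_nonneg fun k hk => ?_
  have : (k : ℝ) + 1 ≤ n := by exact_mod_cast mem_range.1 hk
  have := sin_nonneg_of_nonneg_of_le_pi (x := (k + 1) * (θ / 2)) (by positivity)
    (le_trans (by gcongr) h)
  positivity

lemma mul_half_le_pi (h : θ ≤ 2 * π / n) : n * (θ / 2) ≤ π := by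
  rcases n.eq_zero_or_pos with rfl | n_pos
  · simpa using pi_pos.le
  · rw [le_div_iff₀ (by positivity)] at h
    linarith

lemma mul_half_lt_pi (h : θ < 2 * π / n) : n * (θ / 2) < π := by
  rcases n.eq_zero_or_pos with rfl | n_pos
  · simpa using pi_pos
  · rw [lt_div_iff₀ (by positivity)] at h
    linarith

lemma integral_sineProd_mul_pow_le {W : ℝ → ℝ} {c : ℝ} {m : ℕ} (hc : 0 ≤ c) (ht : 0 < t)
    (h : n * (t / 2) < π) (hW : Continuous W) (hW' : ∀ x ∈ Set.Icc 0 t, (c * x) ^ m ≤ W x) :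
    sineProd n t * (c ^ m * t ^ (m + 1) / (n + m + 1)) ≤ ∫ x in (0 : ℝ)..t, sineProd n x * W x := by
  have integral_power : ∫ x in (0 : ℝ)..t, sineProd n t * c ^ m / t ^ n * x ^ (n + m) =
      sineProd n t * (c ^ m * t ^ (m + 1) / (n + m + 1)) := by
    rw [intervalIntegral.integral_const_mul, integral_pow, zero_pow (Nat.succ_ne_zero _), add_assoc,
      pow_add t n]
    push_cast
    field_simp
    ring
  rw [← integral_power]
  refine intervalIntegral.integral_mono_on ht.le
    (Continuous.intervalIntegrable (by fun_prop) _ _)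
    (Continuous.intervalIntegrable (by fun_prop) _ _) fun x hx => ?_
  have x_nonneg := hx.1
  have half_le : n * (x / 2) ≤ n * (t / 2) := by gcongr; exact hx.2
  calc sineProd n t * c ^ m / t ^ n * x ^ (n + m)
      = sineProd n t * (x / t) ^ n * (c * x) ^ m := by
        rw [div_pow, mul_pow, pow_add]
        field_simp
    _ ≤ sineProd n x * W x :=
        mul_le_mul (sineProd_mul_div_pow_le hx.1 hx.2 ht h) (hW' x hx) (by positivity)
          (sineProd_nonneg hx.1 (half_le.trans h.le))

lemma ten_pow_le_exp : (10 : ℝ) ^ 46 ≤ exp (0.002 * 68533) := by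
  have two_le : 2 ≤ exp 0.6932 := by
    rw [← log_le_iff_le_exp two_pos]
    linarith [log_two_lt_d9]
  calc (10 : ℝ) ^ 46 ≤ 2 ^ 160 := by norm_num
    _ ≤ exp 0.6932 ^ 160 := by gcongr
    _ = exp (160 * 0.6932) := by rw [← exp_nat_mul]; norm_num
    _ ≤ exp (0.002 * 68533) := exp_le_exp.2 (by norm_num)

lemma pi_mul_exp_le_integral_sineProd_mul (hn : n = 68533) {W : ℝ → ℝ} (hW : Continuous W)
    (hW₁ : ∀ x ∈ Set.Icc 0 (2 * π / 86616), (x / π) ^ 3 ≤ W x)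
    (hW₀ : ∀ x ∈ Set.Icc 0 (2 * π / n), 0 ≤ W x) :
    π * exp (0.19 * n) ≤ 1 / 10 ^ 20 * ∫ x in (0 : ℝ)..(2 * π / n), sineProd n x * W x := by
  have hn' : (n : ℝ) = 68533 := by exact_mod_cast hn
  have main_arc : 2 * π / 86616 ≤ 2 * π / n := by rw [hn']; gcongr; norm_num
  have half_lt : n * (2 * π / 86616 / 2) < π := by rw [hn']; linarith [pi_pos]
  have power := integral_sineProd_mul_pow_le (m := 3) (inv_pos.2 pi_pos).le (by positivity)
    half_lt hW fun x hx => by rw [inv_mul_eq_div]; exact hW₁ x hx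
  have extend := intervalIntegral.integral_mono_interval (f := fun x => sineProd n x * W x)
    (μ := MeasureTheory.volume) le_rfl (by positivity) main_arc
    (MeasureTheory.ae_restrict_of_forall_mem measurableSet_Ioc
      fun x hx => mul_nonneg (sineProd_nonneg hx.1.le (mul_half_le_pi hx.2))
        (hW₀ x ⟨hx.1.le, hx.2⟩))
    (Continuous.intervalIntegrable (by fun_prop) _ _)
  have factor : (1 / 10 ^ 24 : ℝ) ≤ π⁻¹ ^ 3 * (2 * π / 86616) ^ (3 + 1) / (n + (3 : ℕ) + 1) := by
    have : π⁻¹ ^ 3 * (2 * π / 86616) ^ (3 + 1) / (n + (3 : ℕ) + 1) =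
        π * ((2 / 86616) ^ 4 / 68537) := by
      simp only [hn', mul_pow, div_pow, inv_pow]
      push_cast
      field_simp
      ring
    linarith [pi_gt_three]
  have split : exp (0.192 * n) = exp (0.19 * n) * exp (0.002 * n) := by rw [← exp_add]; ring_nf
  have gap := ten_pow_le_exp
  rw [← hn'] at gap
  calc π * exp (0.19 * n) ≤ 1 / 10 ^ 20 * (exp (0.19 * n) * 10 ^ 46 * (1 / 10 ^ 24)) := by
        linarith [mul_le_mul_of_nonneg_right (pi_le_four.trans (by norm_num : (4 : ℝ) ≤ 100))
          (exp_pos (0.19 * n)).le]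
    _ ≤ 1 / 10 ^ 20 * (exp (0.192 * n) * (1 / 10 ^ 24)) := by rw [split]; gcongr
    _ ≤ 1 / 10 ^ 20 * ∫ x in (0 : ℝ)..(2 * π / n), sineProd n x * W x := by
        gcongr
        refine le_trans ?_ (power.trans extend)
        have := exp_le_sineProd hn
        gcongr
        exact (exp_pos _).le.trans this

lemma abs_integral_tail_le (hn : 68000 ≤ n) {V : ℝ → ℝ} {A : ℝ} (hA : 0 ≤ A)
    (hV : ∀ x, |V x| ≤ A) :
    |∫ x in (2 * π / n)..π, sineProd n x * V x| ≤ A * (π * exp (0.19 * n)) := by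
  have hn' : (2 : ℝ) ≤ n := by exact_mod_cast (by omega : 2 ≤ n)
  have start_le : 2 * π / n ≤ π := by
    rw [div_le_iff₀ (by positivity), mul_comm]
    gcongr
  have bound := intervalIntegral.norm_integral_le_of_norm_le_const (a := 2 * π / n) (b := π)
    (C := exp (0.19 * n) * A) (f := fun x => sineProd n x * V x) fun x hx => by
      rw [Set.uIoc_of_le start_le] at hx
      rw [norm_mul]
      exact mul_le_mul (abs_sineProd_le_exp_of_two_pi_div_le hn hx.1.le hx.2) (hV x)
        (norm_nonneg _) (exp_pos _).le
  rw [norm_eq_abs, abs_of_nonneg (sub_nonneg.2 start_le)] at bound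
  calc |∫ x in (2 * π / n)..π, sineProd n x * V x| ≤ exp (0.19 * n) * A * (π - 2 * π / n) := bound
    _ ≤ exp (0.19 * n) * A * π := by gcongr; exact sub_le_self _ (by positivity)
    _ = A * (π * exp (0.19 * n)) := by ring

end MainArcMass

/-! ### First differences of the transform at the peak -/

section IntegrationByParts

variable {n : ℕ} {p p' g K : ℝ → ℝ} {u e c μ : ℝ}

lemma sineProd_zero (hn : 0 < n) : sineProd n 0 = 0 :=
  prod_eq_zero (mem_range.2 hn) (by simp)

lemma sineProd_two_pi_div_self (hn : 0 < n) : sineProd n (2 * π / n) = 0 := by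
  refine prod_eq_zero (mem_range.2 (Nat.sub_lt hn one_pos)) ?_
  have angle : (((n - 1 : ℕ) : ℝ) + 1) * (2 * π / n / 2) = π := by
    rw [Nat.cast_pred hn]
    field_simp
    ring
  rw [angle, sin_pi, mul_zero]

lemma mul_sineProd_sub_le_integral (hn : 0 < n) (hu : 0 ≤ u) (hue : u ≤ e)
    (he : n * (e / 2) ≤ π) (hg : Continuous g) (hp : Continuous p)
    (hp' : ∀ x ∈ Set.Ioo u e, HasDerivAt p (p' x) x)
    (h : ∀ x ∈ Set.Ioo u e,
      p' x * sineProd n x + p x * (sineProd n x * scaledLogDeriv n x / x) ≤ g x) :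
    p e * sineProd n e - p u * sineProd n u ≤ ∫ x in u..e, g x := by
  have primitive (x : ℝ) : HasDerivAt (fun y => ∫ v in u..y, g v) (g x) x :=
    intervalIntegral.integral_hasDerivAt_right (hg.intervalIntegrable u x)
      (hg.stronglyMeasurableAtFilter _ _) hg.continuousAt
  have increment := sub_le_sub_of_hasDerivAt_le hue (f := fun x => p x * sineProd n x)
    (by fun_prop)
    (continuous_iff_continuousAt.2 fun x => (primitive x).continuousAt).continuousOn
    (fun x hx => (hp' x hx).mul (hasDerivAt_sineProd n (hu.trans_lt hx.1) (lt_of_lt_of_le (by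
      have := hx.2
      gcongr) he))) (fun x _ => primitive x) h
  simpa using increment

lemma mul_sineProd_le_integral (hn : 0 < n) (he : 0 ≤ e) (he' : n * (e / 2) ≤ π)
    (hg : Continuous g) (hp : Continuous p) (hp' : ∀ x ∈ Set.Ioo 0 e, HasDerivAt p (p' x) x)
    (h : ∀ x ∈ Set.Ioo 0 e,
      p' x * sineProd n x + p x * (sineProd n x * scaledLogDeriv n x / x) ≤ g x) :
    p e * sineProd n e ≤ ∫ x in (0 : ℝ)..e, g x := by
  simpa [sineProd_zero hn] using mul_sineProd_sub_le_integral hn le_rfl he he' hg hp hp' h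

lemma mul_integral_sin_half_le (hn : 0 < n) (hμ : 0 ≤ μ) (hK : Continuous K)
    (h : ∀ x ∈ Set.Ioo 0 (2 * π / n), μ * (scaledLogDeriv n x + c) ≤ K x) :
    (c - 2) * μ * ∫ x in (0 : ℝ)..(2 * π / n), sineProd n x * sin (x / 2) ≤
      ∫ x in (0 : ℝ)..(2 * π / n), sineProd n x * (sin (x / 2) * K x) := by
  have arc_le : 2 * π / n ≤ 2 * π := div_le_self two_pi_pos.le (by exact_mod_cast hn)
  have boundary := mul_sineProd_le_integral (p := fun x => μ * (x * sin (x / 2)))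
    (p' := fun x => μ * (sin (x / 2) + x / 2 * cos (x / 2)))
    (g := fun x => sineProd n x * (sin (x / 2) * K x) -
      (c - 2) * μ * (sineProd n x * sin (x / 2)))
    hn (by positivity) (mul_half_le_pi le_rfl) (by fun_prop) (by fun_prop)
    (fun x _ => (((hasDerivAt_id x).mul
      ((hasDerivAt_id x).div_const 2).sin).const_mul μ).congr_deriv (by simp only [id]; ring))
    fun x hx => by
      have x_pos := hx.1
      have S_pos := sineProd_pos hx.1 (by linarith [mul_half_lt_pi hx.2])
      have sin_pos : 0 < sin (x / 2) :=
        sin_pos_of_pos_of_lt_pi (by linarith) (by linarith [hx.2])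
      have mul_cos_le := mul_cos_le_sin (t := x / 2) (by linarith) (by linarith [hx.2])
      calc μ * (sin (x / 2) + x / 2 * cos (x / 2)) * sineProd n x +
            μ * (x * sin (x / 2)) * (sineProd n x * scaledLogDeriv n x / x)
          = μ * (sin (x / 2) + x / 2 * cos (x / 2)) * sineProd n x +
            sineProd n x * (sin (x / 2) * (μ * scaledLogDeriv n x)) := by field_simp
        _ ≤ μ * (sin (x / 2) + sin (x / 2)) * sineProd n x +
            sineProd n x * (sin (x / 2) * (K x - μ * c)) := by
          gcongr
          linarith [h x hx]
        _ = sineProd n x * (sin (x / 2) * K x) -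
            (c - 2) * μ * (sineProd n x * sin (x / 2)) := by ring
  rw [sineProd_two_pi_div_self hn, mul_zero, intervalIntegral.integral_sub
    (Continuous.intervalIntegrable (by fun_prop) _ _)
    (Continuous.intervalIntegrable (by fun_prop) _ _),
    intervalIntegral.integral_const_mul] at boundary
  linarith

end IntegrationByParts

section MainArcToFull

variable {n : ℕ} {V W K : ℝ → ℝ} {A κ x : ℝ}

lemma div_pi_le_sin_half (h₀ : 0 ≤ x) (h₁ : x ≤ π) : x / π ≤ sin (x / 2) :=
  (show x / π = 2 / π * (x / 2) by ring).trans_le (mul_le_sin (by linarith) (by linarith))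

lemma two_pi_div_le_of_eq (hn : n = 68533) : 2 * π / n ≤ 0.001 := by
  rw [hn, div_le_iff₀ (by norm_num)]
  norm_num
  linarith [pi_lt_four]

lemma integral_pos_of_mul_integral_le (hn : n = 68533) (hV : Continuous V) (hW : Continuous W)
    (hW₁ : ∀ x ∈ Set.Icc 0 (2 * π / 86616), (x / π) ^ 3 ≤ W x)
    (hW₀ : ∀ x ∈ Set.Icc 0 (2 * π / n), 0 ≤ W x) (hVA : ∀ x, |V x| ≤ A)
    (hκ : A * (1 / 10 ^ 20) < κ)
    (h : κ * ∫ x in (0 : ℝ)..(2 * π / n), sineProd n x * W x ≤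
      ∫ x in (0 : ℝ)..(2 * π / n), sineProd n x * V x) :
    0 < ∫ x in (0 : ℝ)..π, sineProd n x * V x := by
  have hA : 0 ≤ A := (abs_nonneg _).trans (hVA 0)
  have weight := pi_mul_exp_le_integral_sineProd_mul hn hW hW₁ hW₀
  have tail := neg_le_of_abs_le (abs_integral_tail_le (by omega : 68000 ≤ n) hA hVA)
  have weight_pos : 0 < ∫ x in (0 : ℝ)..(2 * π / n), sineProd n x * W x := by
    linarith [mul_pos pi_pos (exp_pos (0.19 * n))]
  rw [← intervalIntegral.integral_add_adjacent_intervals (b := 2 * π / n)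
    (Continuous.intervalIntegrable (by fun_prop) _ _)
    (Continuous.intervalIntegrable (by fun_prop) _ _)]
  linarith [mul_le_mul_of_nonneg_left weight hA, mul_lt_mul_of_pos_right hκ weight_pos]

lemma integral_sin_half_mul_pos (hn : n = 68533) (hK : Continuous K) (hK₁ : ∀ x, |K x| ≤ 1)
    (hκ : 1 / 10 ^ 20 < κ)
    (h : κ * ∫ x in (0 : ℝ)..(2 * π / n), sineProd n x * sin (x / 2) ≤
      ∫ x in (0 : ℝ)..(2 * π / n), sineProd n x * (sin (x / 2) * K x)) :
    0 < ∫ x in (0 : ℝ)..π, sineProd n x * (sin (x / 2) * K x) := by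
  have arc := two_pi_div_le_of_eq hn
  have := pi_gt_three
  refine integral_pos_of_mul_integral_le hn (by fun_prop) (by fun_prop) (fun x hx => ?_)
    (fun x hx => sin_nonneg_of_nonneg_of_le_pi (by linarith [hx.1]) (by linarith [hx.2])) (A := 1)
    (fun x => ?_) (by linarith) h
  · have x_le_pi : x ≤ π := by linarith [hx.2]
    refine le_trans (pow_le_of_le_one (div_nonneg hx.1 pi_pos.le) ?_ three_ne_zero)
      (div_pi_le_sin_half hx.1 x_le_pi)
    exact (div_le_one pi_pos).2 x_le_pi
  · rw [abs_mul]
    exact mul_le_one₀ (abs_sin_le_one _) (abs_nonneg _) (hK₁ x)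

end MainArcToFull

section FirstDifferenceBelowPeak

variable {n : ℕ} {x s μ Q Y : ℝ}

lemma neg_sub_sq_le_neg_sin (h : -1 / 2 ≤ s) :
    -(π * s / 2) - 0.3324 * s ^ 2 ≤ -sin (π * s / 2) := by
  rcases le_total 0 s with s_nonneg | s_nonpos
  · have := sin_le (x := π * s / 2) (by positivity)
    linarith [sq_nonneg s]
  · have angle_nonneg : 0 ≤ -(π * s / 2) := by
      linarith [mul_nonneg pi_pos.le (neg_nonneg.2 s_nonpos)]
    have taylor := sub_cube_le_sin_of_le angle_nonneg le_rfl
      (by linarith [mul_le_mul_of_nonneg_left h pi_pos.le])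
    have pi_cube : π ^ 3 ≤ 3.1416 ^ 3 := by gcongr; linarith [pi_lt_d6]
    have cubic : (-(π * s / 2)) ^ 3 / 6 ≤ 0.3324 * s ^ 2 :=
      calc (-(π * s / 2)) ^ 3 / 6 = π ^ 3 / 48 * -s * s ^ 2 := by ring
        _ ≤ 3.1416 ^ 3 / 48 * (1 / 2) * s ^ 2 := by gcongr <;> linarith
        _ ≤ 0.3324 * s ^ 2 := by gcongr; norm_num
    rw [sin_neg] at taylor
    linarith

lemma mul_quadratic_le_neg_sin {N : ℝ} (hμ : 0 < μ) (hμQ : μ * Q = π / 2) (hQ : Q ≤ 3.231 * N)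
    (hN : 0 < N) (hY : 6.17 ≤ Y) (h : -1 / 2 ≤ s) :
    μ * (-(Q * s) - Y * N / 9 * s ^ 2) ≤ -sin (π * s / 2) := by
  have μN_ge : 0.485 ≤ μ * N := by linarith [mul_le_mul_of_nonneg_left hQ hμ.le, pi_gt_d2]
  calc μ * (-(Q * s) - Y * N / 9 * s ^ 2) = -(μ * Q * s) - μ * N * Y / 9 * s ^ 2 := by ring
    _ ≤ -(π / 2 * s) - 0.485 * 6.17 / 9 * s ^ 2 := by rw [hμQ]; gcongr
    _ ≤ -(π * s / 2) - 0.3324 * s ^ 2 := by linarith [sq_nonneg s]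
    _ ≤ -sin (π * s / 2) := neg_sub_sq_le_neg_sin h

lemma half_le_neg_sin (h₀ : -1 ≤ s) (h₁ : s ≤ -1 / 2) : 1 / 2 ≤ -sin (π * s / 2) := by
  have := mul_le_mul_of_nonneg_left h₀ pi_pos.le
  have := mul_le_mul_of_nonneg_left h₁ pi_pos.le
  rw [← sin_pi_div_six, ← sin_neg]
  exact sin_le_sin_of_le_of_le_pi_div_two (by linarith [pi_pos]) (by linarith) (by linarith)

lemma mul_scaledLogDeriv_add_le_cos (hn : n = 68533) (hx : x ∈ Set.Ioo 0 (2 * π / n)) (hμ : 0 < μ)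
    (hμQ : μ * scaledLogDerivSlope n (2 * π / 86616) = π / 2) :
    μ * (scaledLogDeriv n x + 2.4) ≤ cos (21654 * x) := by
  obtain ⟨value, slope_lower, slope_upper⟩ := scaledLogDeriv_at_86616 hn
  have hn' : (n : ℝ) = 68533 := by exact_mod_cast hn
  obtain ⟨s, rfl⟩ : ∃ s, x = 2 * π / 86616 * (1 + s) :=
    ⟨x / (2 * π / 86616) - 1, by field_simp; ring⟩
  have s_gt : -1 < s := by linarith [pos_of_mul_pos_right hx.1 (by positivity)]
  rw [show 21654 * (2 * π / 86616 * (1 + s)) = π * s / 2 + π / 2 by ring, cos_add_pi_div_two]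
  rcases le_total (-1 / 2) s with near | far
  · have taylor := scaledLogDeriv_le_taylor (n := n) (by positivity)
      (by rw [hn']; linarith [pi_pos]) rfl hx.1 (mul_half_lt_pi hx.2)
    refine (mul_le_mul_of_nonneg_left ?_ hμ.le).trans (mul_quadratic_le_neg_sin hμ hμQ slope_upper
      (by rw [hn']; norm_num) (Y := (n * (2 * π / 86616 / 2)) ^ 2) ?_ near)
    · linarith
    · have : 2.485 ≤ n * (2 * π / 86616 / 2) := by rw [hn']; linarith [pi_gt_d6]
      calc (6.17 : ℝ) ≤ 2.485 ^ 2 := by norm_num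
        _ ≤ (n * (2 * π / 86616 / 2)) ^ 2 := by gcongr
  · refine le_trans ?_ (half_le_neg_sin s_gt.le far)
    have μn_le : μ * n ≤ 0.487 := by
      linarith [mul_le_mul_of_nonneg_left slope_lower hμ.le, pi_lt_d4]
    have sum_le : scaledLogDeriv n (2 * π / 86616 * (1 + s)) + 2.4 ≤ 1.001 * n := by
      have := scaledLogDeriv_le_natCast hx.1 (mul_half_lt_pi hx.2)
      rw [hn'] at this ⊢
      linarith
    linarith [mul_le_mul_of_nonneg_left sum_le hμ.le]

lemma integral_sin_half_mul_cos_21654_pos (hn : n = 68533) :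
    0 < ∫ x in (0 : ℝ)..π, sineProd n x * (sin (x / 2) * cos (21654 * x)) := by
  obtain ⟨-, slope_lower, slope_upper⟩ := scaledLogDeriv_at_86616 hn
  subst hn
  norm_num at slope_lower slope_upper
  obtain ⟨μ, hμ⟩ : ∃ μ, μ * scaledLogDerivSlope 68533 (2 * π / 86616) = π / 2 :=
    ⟨_, div_mul_cancel₀ _ (by linarith)⟩
  have μ_pos : 0 < μ := pos_of_mul_pos_left (hμ ▸ pi_div_two_pos) (by linarith)
  have μ_ge : 0.000001 ≤ μ := by
    by_contra! μ_lt
    have := mul_lt_mul μ_lt slope_upper (by linarith) (by norm_num)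
    linarith [pi_gt_three]
  exact integral_sin_half_mul_pos rfl (by fun_prop) (fun x => abs_cos_le_one _) (by linarith)
    (mul_integral_sin_half_le (c := 2.4) (by norm_num) μ_pos.le (by fun_prop)
      fun x hx => mul_scaledLogDeriv_add_le_cos rfl hx μ_pos hμ)

end FirstDifferenceBelowPeak

section RightOfCriticalAngle

variable {n N : ℕ} {u e x t : ℝ}

lemma pow_mul_sineProd_le_of_le (hu : 0 < u) (he : n * (e / 2) < π)
    (hN : scaledLogDeriv n u ≤ -N) (hux : u ≤ x) (hxe : x ≤ e) :
    e ^ N * sineProd n e ≤ x ^ N * sineProd n x := by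
  have deriv (y : ℝ) (hy : y ∈ Set.Ioo x e) : HasDerivAt (fun y => y ^ N * sineProd n y)
      (y ^ N * sineProd n y * (N + scaledLogDeriv n y) / y) y := by
    have y_pos : 0 < y := hu.trans_le (hux.trans hy.1.le)
    have half_lt : n * (y / 2) < π := lt_of_le_of_lt (by have := hy.2; gcongr) he
    refine ((hasDerivAt_pow N y).mul (hasDerivAt_sineProd n y_pos half_lt)).congr_deriv ?_
    rcases N with _ | k
    · simp
    · simp only [Nat.add_sub_cancel, pow_succ]
      field_simp
  have decrement := sub_le_mul_of_hasDerivAt_le (C := 0) hxe (by fun_prop) deriv fun y hy => by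
    have y_pos : 0 < y := hu.trans_le (hux.trans hy.1.le)
    have half_lt : n * (y / 2) < π := lt_of_le_of_lt (by have := hy.2; gcongr) he
    have S_pos := sineProd_pos (n := n) y_pos (by linarith)
    have := scaledLogDeriv_le_of_le hu (hux.trans hy.1.le) half_lt
    exact div_nonpos_of_nonpos_of_nonneg
      (mul_nonpos_of_nonneg_of_nonpos (by positivity) (by linarith)) y_pos.le
  linarith

lemma scaledLogDeriv_le_neg_thousand (hn : n = 68533) (ht : t = 2 * π / 86620) :
    scaledLogDeriv n (1.005 * t) ≤ -(1000 : ℕ) := by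
  obtain ⟨⟨-, value⟩, slope, -⟩ := scaledLogDeriv_at_86620 hn
  have t_pos : 0 < t := by rw [ht]; positivity
  have half_lt : n * (1.005 * t / 2) < π := by
    rw [hn, ht]
    norm_num
    linarith [pi_pos]
  have half_le : n * (t / 2) ≤ n * (1.005 * t / 2) := by gcongr; linarith
  have taylor := scaledLogDeriv_le_taylor (s := 0.005) t_pos (half_le.trans_lt half_lt)
    (by ring) (by positivity) half_lt
  have quadratic_nonneg : 0 ≤ (n * (t / 2)) ^ 2 * n / 9 * (0.005 : ℝ) ^ 2 := by positivity
  rw [← ht] at value slope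
  rw [hn] at taylor slope value quadratic_nonneg ⊢
  norm_num at *
  linarith

lemma mul_sineProd_le_sineProd (hn : n = 68533) (ht : t = 2 * π / 86620)
    (hx : x ∈ Set.Icc (1.005 * t) (1.01 * t)) :
    1200 * sineProd n (1.02 * t) ≤ sineProd n x := by
  have t_pos : 0 < t := by rw [ht]; positivity
  have x_pos : 0 < x := lt_of_lt_of_le (by positivity) hx.1
  have half_lt : n * (1.02 * t / 2) < π := by
    rw [hn, ht]
    norm_num
    linarith [pi_pos]
  have S_pos := sineProd_pos (n := n) (θ := 1.02 * t) (by positivity) (by linarith)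
  have decay := pow_mul_sineProd_le_of_le (by positivity) half_lt
    (scaledLogDeriv_le_neg_thousand hn ht) hx.1 (by linarith [hx.2])
  have growth : (1200 : ℝ) ≤ (102 / 101) ^ 1000 :=
    calc (1200 : ℝ) ≤ 2.6 ^ 10 := by norm_num
      _ ≤ ((102 / 101) ^ 100) ^ 10 := by gcongr; norm_num
      _ = (102 / 101) ^ 1000 := by rw [← pow_mul]
  generalize 1000 = N at *
  refine le_of_mul_le_mul_left ?_ (pow_pos x_pos N)
  calc x ^ N * (1200 * sineProd n (1.02 * t))
      ≤ x ^ N * ((102 / 101) ^ N * sineProd n (1.02 * t)) := by gcongr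
    _ = (x * (102 / 101)) ^ N * sineProd n (1.02 * t) := by rw [mul_pow]; ring
    _ ≤ (1.02 * t) ^ N * sineProd n (1.02 * t) := by
      have : x * (102 / 101) ≤ 1.02 * t := by linarith [hx.2]
      gcongr
    _ ≤ x ^ N * sineProd n x := decay

lemma mul_sineProd_le_integral_sin_half (hn : n = 68533) (ht : t = 2 * π / 86620) :
    0.005 * t * (1200 * sineProd n (1.02 * t) * (1.005 * t / π)) ≤
      ∫ x in (0 : ℝ)..(1.02 * t), sineProd n x * sin (x / 2) := by
  have t_pos : 0 < t := by rw [ht]; positivity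
  have : t < 0.001 := by rw [ht]; linarith [pi_lt_four]
  have := pi_gt_three
  have half_lt : n * (1.02 * t / 2) < π := by
    rw [hn, ht]
    norm_num
    linarith
  have S_pos := sineProd_pos (n := n) (θ := 1.02 * t) (by positivity) (by linarith)
  have pointwise (x : ℝ) (hx : x ∈ Set.Icc (1.005 * t) (1.01 * t)) :
      1200 * sineProd n (1.02 * t) * (1.005 * t / π) ≤ sineProd n x * sin (x / 2) := by
    have S_le := mul_sineProd_le_sineProd hn ht hx
    have sin_ge := div_pi_le_sin_half (x := x) (by linarith [hx.1]) (by linarith [hx.2])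
    exact mul_le_mul S_le (le_trans (by gcongr; exact hx.1) sin_ge) (by positivity)
      ((by positivity : (0 : ℝ) ≤ _).trans S_le)
  calc 0.005 * t * (1200 * sineProd n (1.02 * t) * (1.005 * t / π))
      = ∫ _ in (1.005 * t)..(1.01 * t), 1200 * sineProd n (1.02 * t) * (1.005 * t / π) := by
        rw [intervalIntegral.integral_const, smul_eq_mul]
        ring
    _ ≤ ∫ x in (1.005 * t)..(1.01 * t), sineProd n x * sin (x / 2) :=
        intervalIntegral.integral_mono_on (by linarith)
          (Continuous.intervalIntegrable (by fun_prop) _ _)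
          (Continuous.intervalIntegrable (by fun_prop) _ _) pointwise
    _ ≤ ∫ x in (0 : ℝ)..(1.02 * t), sineProd n x * sin (x / 2) :=
        intervalIntegral.integral_mono_interval (by positivity) (by linarith) (by linarith)
          (MeasureTheory.ae_restrict_of_forall_mem measurableSet_Ioc fun x hx => mul_nonneg
            (sineProd_nonneg hx.1.le (le_trans (by gcongr; exact hx.2) half_lt.le))
            (sin_nonneg_of_nonneg_of_le_pi (by linarith [hx.1]) (by linarith [hx.2])))
          (Continuous.intervalIntegrable (by fun_prop) _ _)

-- The mass on `[1.005 t, 1.01 t]` alone dominates the boundary term at `1.02 t`.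
lemma boundary_le_integral_sin_half (hn : n = 68533) (ht : t = 2 * π / 86620) :
    0.9 * (1.02 * t * (sin (1.02 * t / 2) * sineProd n (1.02 * t))) ≤
      0.25 * ∫ x in (0 : ℝ)..(1.02 * t), sineProd n x * sin (x / 2) := by
  have t_pos : 0 < t := by rw [ht]; positivity
  have S_pos := sineProd_pos (n := n) (θ := 1.02 * t) (by positivity) (by
    rw [hn, ht]
    norm_num
    linarith [pi_pos])
  calc 0.9 * (1.02 * t * (sin (1.02 * t / 2) * sineProd n (1.02 * t)))
      ≤ 0.9 * (1.02 * t * (1.02 * t / 2 * sineProd n (1.02 * t))) := by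
        gcongr
        exact sin_le (by positivity)
    _ = 0.46818 * (t ^ 2 * sineProd n (1.02 * t)) := by ring
    _ ≤ 1.5075 / π * (t ^ 2 * sineProd n (1.02 * t)) := by
        gcongr
        rw [le_div_iff₀ pi_pos]
        linarith [pi_lt_d2]
    _ = 0.25 * (0.005 * t * (1200 * sineProd n (1.02 * t) * (1.005 * t / π))) := by ring
    _ ≤ _ := by gcongr; exact mul_sineProd_le_integral_sin_half hn ht

end RightOfCriticalAngle

section FirstDifferenceAbovePeak

variable {n : ℕ} {x s t ν Q B R N b b' : ℝ}

lemma critical_kernel_bound_of_near (hs₀ : -0.2 ≤ s) (hs₁ : s ≤ 0.02) (hν : 0 < ν)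
    (hνQ : ν * Q = π / 2) (hN : 0 < N) (hQ : 3.229 * N ≤ Q) (hR : R ≤ 16.3 * N) (hB : 5.5 ≤ B)
    (hb : B - Q * s - R * (1 / 1.0404) / 2 * s ^ 2 ≤ b) :
    ν / 2 ≤ sin (π * s / 2) + ν * ((b + 1) * (1 - 5 * s) - 5 * (1 + s)) := by
  have curvature_le : R * (1 / 1.0404) / 2 ≤ 2.43 * Q := by norm_num at *; linarith
  have b_ge : 6.5 - Q * s - 2.43 * Q * s ^ 2 ≤ b + 1 := by
    linarith [mul_le_mul_of_nonneg_right curvature_le (sq_nonneg s)]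
  have scaled : ν * (6.5 * (1 - 5 * s)) + π / 2 * (-s + 2.57 * s ^ 2 + 12.15 * s ^ 3) ≤
      ν * ((b + 1) * (1 - 5 * s)) :=
    calc ν * (6.5 * (1 - 5 * s)) + π / 2 * (-s + 2.57 * s ^ 2 + 12.15 * s ^ 3)
        = ν * ((6.5 - Q * s - 2.43 * Q * s ^ 2) * (1 - 5 * s)) := by rw [← hνQ]; ring
      _ ≤ ν * ((b + 1) * (1 - 5 * s)) := by gcongr; linarith
  have linear_nonneg : 0 ≤ ν * (0.75 - 37.5 * s) := mul_nonneg hν.le (by linarith)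
  rcases le_total 0 s with s_nonneg | s_nonpos
  · have taylor := sub_cube_le_sin_of_le (x := π * s / 2) (by positivity) le_rfl
      (by linarith [mul_le_mul_of_nonneg_left (hs₁.trans (by norm_num : _ ≤ (1 : ℝ))) pi_pos.le])
    have cubic_le : (π * s / 2) ^ 3 / 6 ≤ π / 2 * (2.57 * s ^ 2) :=
      calc (π * s / 2) ^ 3 / 6 = π / 2 * (π ^ 2 * s / 24 * s ^ 2) := by ring
        _ ≤ π / 2 * (4 ^ 2 * 0.02 / 24 * s ^ 2) := by gcongr; exact pi_le_four
        _ ≤ π / 2 * (2.57 * s ^ 2) := by gcongr; norm_num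
    have : 0 ≤ π / 2 * (12.15 * s ^ 3) := by positivity
    linarith
  · have sin_ge := sin_le (x := -(π * s / 2))
      (by linarith [mul_nonneg pi_pos.le (neg_nonneg.2 s_nonpos)])
    rw [sin_neg] at sin_ge
    have : 0 ≤ π / 2 * ((2.57 + 12.15 * s) * s ^ 2) :=
      mul_nonneg pi_div_two_pos.le (mul_nonneg (by linarith) (sq_nonneg s))
    linarith [mul_nonneg hν.le (neg_nonneg.2 s_nonpos)]

lemma critical_kernel_bound_of_far (hs₀ : -1 < s) (hs₁ : s < -0.2) (hν : 0 < ν) (hν₁ : ν ≤ 0.001)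
    (hνQ : ν * Q = π / 2) (hN : 0 < N) (hQ₀ : 3.229 * N ≤ Q) (hQ₁ : Q ≤ 3.23 * N)
    (hR : R ≤ 16.3 * N) (hB : 5.5 ≤ B)
    (hb' : B - Q * -0.2 - R * (1 / 1.0404) / 2 * (-0.2) ^ 2 ≤ b')
    (hb : (1 - (1 + s) / 0.8) * N + (1 + s) / 0.8 * b' ≤ b) :
    ν / 2 ≤ sin (π * s / 2) + ν * ((b + 1) * (1 - 5 * s) - 5 * (1 + s)) := by
  have b'_ge : 0.3319 * N ≤ b' := by norm_num at *; linarith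
  have b_ge : N * (0.1648 - 0.8351 * s) ≤ b := by
    have := mul_le_mul_of_nonneg_left b'_ge (div_nonneg (by linarith : 0 ≤ 1 + s) (by norm_num :
      (0 : ℝ) ≤ 0.8))
    have := mul_nonneg hN.le (by linarith : 0 ≤ -s)
    norm_num at *
    linarith
  have νN_ge : 0.4862 ≤ ν * N := by linarith [mul_le_mul_of_nonneg_left hQ₁ hν.le, pi_gt_d4]
  have scaled : 0.4862 * ((0.1648 - 0.8351 * s) * (1 - 5 * s)) ≤ ν * (b * (1 - 5 * s)) :=
    calc 0.4862 * ((0.1648 - 0.8351 * s) * (1 - 5 * s))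
        ≤ ν * N * ((0.1648 - 0.8351 * s) * (1 - 5 * s)) :=
          mul_le_mul_of_nonneg_right νN_ge (mul_nonneg (by linarith) (by linarith))
      _ = ν * (N * (0.1648 - 0.8351 * s) * (1 - 5 * s)) := by ring
      _ ≤ ν * (b * (1 - 5 * s)) := by gcongr; linarith
  have sin_ge := sin_le (x := -(π * s / 2))
    (by linarith [mul_nonneg pi_pos.le (by linarith : 0 ≤ -s)])
  rw [sin_neg] at sin_ge
  have angle_le : π * -s ≤ 3.1416 * -s :=
    mul_le_mul_of_nonneg_right (by linarith [pi_lt_d6]) (by linarith)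
  have : 0 ≤ ν * (-0.2 - s) := mul_nonneg hν.le (by linarith)
  have : 0 ≤ (s + 0.188) ^ 2 := sq_nonneg _
  norm_num at *
  linarith

lemma critical_kernel_bound (hn : n = 68533) (hx : 0 < x) (hs : s ≤ 0.02)
    (hxs : x = 2 * π / 86620 * (1 + s)) (hν : 0 < ν) (hν₁ : ν ≤ 0.001)
    (hνQ : ν * scaledLogDerivSlope n (2 * π / 86620) = π / 2) :
    ν / 2 ≤ sin (π * s / 2) +
      ν * ((scaledLogDeriv n x + 1) * (1 - 5 * s) - 5 * (1 + s)) := by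
  obtain ⟨⟨value, -⟩, slope_lower, slope_upper⟩ := scaledLogDeriv_at_86620 hn
  obtain ⟨-, curvature⟩ := scaledLogDerivSlope_and_curvature_at_102_div_86620 hn
  have hn' : (n : ℝ) = 68533 := by exact_mod_cast hn
  have n_pos : (0 : ℝ) < n := by rw [hn']; norm_num
  have s_gt : -1 < s := by linarith [pos_of_mul_pos_right (hxs ▸ hx) (by positivity)]
  have ratio : (2 * π / 86620 / (1.02 * (2 * π / 86620))) ^ 2 = 1 / 1.0404 := by
    field_simp
    norm_num
  have taylor (r : ℝ) (hr : -1 < r) (hr' : r ≤ 0.02) := taylor_le_scaledLogDeriv (n := n)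
    (θ := 2 * π / 86620) (θ' := 2 * π / 86620 * (1 + r)) (T := 1.02 * (2 * π / 86620)) (s := r)
    (by positivity) rfl (mul_pos (by positivity) (by linarith))
    (by rw [hn']; linarith [pi_pos]) (by linarith [pi_pos])
    (by rw [mul_comm]; gcongr; linarith)
  rw [ratio] at taylor
  rcases le_or_gt (-0.2) s with near | far
  · rw [hxs]
    exact critical_kernel_bound_of_near near hs hν hνQ n_pos slope_lower curvature value
      (taylor s s_gt hs)
  · have chord := chord_le_scaledLogDeriv (n := n) (θ := 2 * π / 86620 * (1 + -0.2))
      (l := (1 + s) / 0.8) (by norm_num; positivity) (by rw [hn']; linarith [pi_pos])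
      (div_nonneg (by linarith) (by norm_num)) ((div_le_one (by norm_num)).2 (by linarith))
    rw [show (1 + s) / 0.8 * (2 * π / 86620 * (1 + -0.2)) = x by rw [hxs]; ring] at chord
    exact critical_kernel_bound_of_far s_gt far hν hν₁ hνQ n_pos slope_lower slope_upper curvature
      value (taylor (-0.2) (by norm_num) (by norm_num)) chord

lemma hasDerivAt_neg_mul_quadratic_mul_sin_half (ht : t ≠ 0) :
    HasDerivAt (fun x => -(ν * (x * (6 - 5 * (x / t)) * sin (x / 2))))
      (-(ν * ((6 - 10 * (x / t)) * sin (x / 2) + (6 - 5 * (x / t)) * (x / 2 * cos (x / 2)))))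
      x := by
  refine (((((hasDerivAt_id x).mul ((((hasDerivAt_id x).div_const t).const_mul 5).const_sub 6)).mul
    (((hasDerivAt_id x).div_const 2).sin)).const_mul ν).neg).congr_deriv ?_
  simp only [id, Pi.mul_apply]
  field_simp
  ring

lemma deriv_mul_sineProd_le_kernel (hn : n = 68533) (ht : t = 2 * π / 86620)
    (hx : x ∈ Set.Ioo 0 (1.02 * t)) (hν : 0 < ν) (hν₁ : ν ≤ 0.001)
    (hνQ : ν * scaledLogDerivSlope n t = π / 2) :
    -(ν * ((6 - 10 * (x / t)) * sin (x / 2) + (6 - 5 * (x / t)) * (x / 2 * cos (x / 2)))) *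
        sineProd n x +
      -(ν * (x * (6 - 5 * (x / t)) * sin (x / 2))) * (sineProd n x * scaledLogDeriv n x / x) ≤
    sineProd n x * (sin (x / 2) * sin (π * (x / t - 1) / 2)) -
      ν / 2 * (sineProd n x * sin (x / 2)) := by
  have x_pos := hx.1
  have t_pos : 0 < t := by rw [ht]; positivity
  have x_lt : x < 1 := by linarith [hx.2, pi_lt_four]
  have S_pos := sineProd_pos (n := n) x_pos (by rw [hn]; norm_num; linarith [hx.2, pi_pos])
  have ratio_lt : x / t < 1.02 := (div_lt_iff₀ t_pos).2 hx.2
  have kernel := critical_kernel_bound hn (s := x / t - 1) x_pos (by linarith)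
    (by rw [← ht]; field_simp; ring) hν hν₁ (by rwa [← ht])
  have sin_pos : 0 < sin (x / 2) :=
    sin_pos_of_pos_of_lt_pi (by linarith) (by linarith [pi_gt_three])
  have cos_pos : 0 < cos (x / 2) :=
    cos_pos_of_mem_Ioo ⟨by linarith [pi_gt_three], by linarith [pi_gt_three]⟩
  have cos_term_nonneg : 0 ≤ sineProd n x * (ν * ((6 - 5 * (x / t)) * (x / 2 * cos (x / 2)))) := by
    have : 0 ≤ 6 - 5 * (x / t) := by linarith
    positivity
  have logDeriv_term : -(ν * (x * (6 - 5 * (x / t)) * sin (x / 2))) *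
        (sineProd n x * scaledLogDeriv n x / x) =
      -(sineProd n x * (sin (x / 2) * (ν * (6 - 5 * (x / t)) * scaledLogDeriv n x))) := by
    generalize x / t = z
    field_simp
  rw [logDeriv_term]
  linarith [mul_le_mul_of_nonneg_left kernel (mul_pos S_pos sin_pos).le]

lemma mul_integral_sin_half_le_left (hn : n = 68533) (ht : t = 2 * π / 86620) (hν : 0 < ν)
    (hν₁ : ν ≤ 0.001) (hνQ : ν * scaledLogDerivSlope n t = π / 2) :
    0.25 * ν * ∫ x in (0 : ℝ)..(1.02 * t), sineProd n x * sin (x / 2) ≤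
      ∫ x in (0 : ℝ)..(1.02 * t), sineProd n x * (sin (x / 2) * sin (π * (x / t - 1) / 2)) := by
  have t_pos : 0 < t := by rw [ht]; positivity
  have parts := mul_sineProd_le_integral (n := n) (by omega) (by positivity)
    (by rw [hn, ht]; norm_num; linarith [pi_pos])
    (g := fun x => sineProd n x * (sin (x / 2) * sin (π * (x / t - 1) / 2)) -
      ν / 2 * (sineProd n x * sin (x / 2))) (by fun_prop) (by fun_prop)
    (fun x _ => hasDerivAt_neg_mul_quadratic_mul_sin_half (ν := ν) t_pos.ne')
    (fun x hx => deriv_mul_sineProd_le_kernel hn ht hx hν hν₁ hνQ)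
  rw [intervalIntegral.integral_sub (Continuous.intervalIntegrable (by fun_prop) _ _)
    (Continuous.intervalIntegrable (by fun_prop) _ _), intervalIntegral.integral_const_mul,
    mul_div_cancel_right₀ _ t_pos.ne'] at parts
  linarith [mul_le_mul_of_nonneg_left (boundary_le_integral_sin_half hn ht) hν.le]

lemma mul_integral_sin_half_le_right (hn : n = 68533) (ht : t = 2 * π / 86620) (hν : ν ≤ 0.001) :
    0.25 * ν * ∫ x in (1.02 * t)..(2 * π / n), sineProd n x * sin (x / 2) ≤
      ∫ x in (1.02 * t)..(2 * π / n),
        sineProd n x * (sin (x / 2) * sin (π * (x / t - 1) / 2)) := by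
  have t_pos : 0 < t := by rw [ht]; positivity
  have arc_ge : 1.02 * t ≤ 2 * π / n := by rw [hn, ht]; norm_num; linarith [pi_pos]
  have arc_le : 2 * π / n ≤ 1.5 * t := by rw [hn, ht]; norm_num; linarith [pi_pos]
  rw [← intervalIntegral.integral_const_mul]
  refine intervalIntegral.integral_mono_on arc_ge
    (Continuous.intervalIntegrable (by fun_prop) _ _)
    (Continuous.intervalIntegrable (by fun_prop) _ _) fun x hx => ?_
  have x_pos : 0 < x := by linarith [hx.1]
  have ratio_ge : 1.02 ≤ x / t := (le_div_iff₀ t_pos).2 hx.1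
  have ratio_le : x / t ≤ 1.5 := (div_le_iff₀ t_pos).2 (hx.2.trans arc_le)
  have jordan : x / t - 1 ≤ sin (π * (x / t - 1) / 2) :=
    calc x / t - 1 = 2 / π * (π * (x / t - 1) / 2) := by field_simp
      _ ≤ sin (π * (x / t - 1) / 2) := mul_le_sin
          (div_nonneg (mul_nonneg pi_pos.le (by linarith)) zero_le_two)
          (by linarith [mul_le_mul_of_nonneg_left (by linarith : x / t - 1 ≤ 1) pi_pos.le])
  have S_nonneg := sineProd_nonneg (n := n) x_pos.le (mul_half_le_pi hx.2)
  have sin_nonneg : 0 ≤ sin (x / 2) := sin_nonneg_of_nonneg_of_le_pi (by linarith)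
    (by linarith [hx.2, two_pi_div_le_of_eq hn, pi_gt_three])
  linarith [mul_le_mul_of_nonneg_left (by linarith : 0.25 * ν ≤ sin (π * (x / t - 1) / 2))
    (mul_nonneg S_nonneg sin_nonneg)]

lemma integral_sin_half_mul_neg_cos_21655_pos (hn : n = 68533) :
    0 < ∫ x in (0 : ℝ)..π, sineProd n x * -(sin (x / 2) * cos (21655 * x)) := by
  obtain ⟨-, slope_lower, slope_upper⟩ := scaledLogDeriv_at_86620 hn
  obtain ⟨t, ht⟩ : ∃ t, t = 2 * π / 86620 := ⟨_, rfl⟩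
  rw [← ht] at slope_lower slope_upper
  rw [show (n : ℝ) = 68533 by exact_mod_cast hn] at slope_lower slope_upper
  norm_num at slope_lower slope_upper
  obtain ⟨ν, hν⟩ : ∃ ν, ν * scaledLogDerivSlope n t = π / 2 :=
    ⟨_, div_mul_cancel₀ _ (by linarith)⟩
  have ν_pos : 0 < ν := pos_of_mul_pos_left (hν ▸ pi_div_two_pos) (by linarith)
  have ν_ge : 0.000001 ≤ ν := by
    by_contra! ν_lt
    have := mul_lt_mul ν_lt slope_upper (by linarith) (by norm_num)
    linarith [pi_gt_three]
  have ν_le : ν ≤ 0.001 := by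
    by_contra! ν_gt
    have := mul_lt_mul ν_gt slope_lower (by norm_num) ν_pos.le
    linarith [pi_lt_four]
  have kernel (x : ℝ) : -(sin (x / 2) * cos (21655 * x)) =
      sin (x / 2) * sin (π * (x / t - 1) / 2) := by
    rw [show 21655 * x = π * (x / t - 1) / 2 + π / 2 by rw [ht]; field_simp; ring,
      cos_add_pi_div_two]
    ring
  simp only [kernel]
  refine integral_sin_half_mul_pos hn (by fun_prop) (fun x => abs_sin_le_one _)
    (κ := 0.25 * ν) (by linarith) ?_
  rw [← intervalIntegral.integral_add_adjacent_intervals (b := 1.02 * t)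
    (Continuous.intervalIntegrable (by fun_prop) _ _)
    (Continuous.intervalIntegrable (by fun_prop) _ _),
    ← intervalIntegral.integral_add_adjacent_intervals (b := 1.02 * t)
    (f := fun x => sineProd n x * (sin (x / 2) * sin (π * (x / t - 1) / 2)))
    (Continuous.intervalIntegrable (by fun_prop) _ _)
    (Continuous.intervalIntegrable (by fun_prop) _ _), mul_add]
  exact add_le_add (mul_integral_sin_half_le_left hn ht ν_pos ν_le hν)
    (mul_integral_sin_half_le_right hn ht ν_le)

end FirstDifferenceAbovePeak

/-! ### Frequencies up to `34266 + 1 / 2` -/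

section ConcaveRange

variable {n : ℕ} {j k x : ℝ}

lemma sin_mul_nonneg (hn : n = 68533) (hj₀ : 0 ≤ j) (hj₁ : j ≤ 34266.5)
    (hx : x ∈ Set.Icc 0 (2 * π / n)) : 0 ≤ sin (j * x) := by
  refine sin_nonneg_of_nonneg_of_le_pi (mul_nonneg hj₀ hx.1) ?_
  calc j * x ≤ 34266.5 * (2 * π / n) := mul_le_mul hj₁ hx.2 hx.1 (by norm_num)
    _ = π := by rw [hn]; norm_num

lemma div_pi_le_sin_mul (hj₀ : 0.5 ≤ j) (hj₁ : j ≤ 34266.5)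
    (hx : x ∈ Set.Icc 0 (2 * π / 86616)) : x / π ≤ sin (j * x) := by
  have angle_ge : 0.5 * x ≤ j * x := mul_le_mul_of_nonneg_right hj₀ hx.1
  have angle_le : j * x ≤ 34266.5 * (2 * π / 86616) := mul_le_mul hj₁ hx.2 hx.1 (by norm_num)
  have jordan {y : ℝ} (hxy : 0.5 * x ≤ y) (hy : y ≤ π / 2) : x / π ≤ sin y :=
    calc x / π = 2 / π * (0.5 * x) := by ring
      _ ≤ 2 / π * y := by gcongr
      _ ≤ sin y := mul_le_sin (by linarith [hx.1]) hy
  rcases le_total (j * x) (π / 2) with acute | obtuse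
  · exact jordan angle_ge acute
  · rw [← sin_pi_sub]
    exact jordan (by linarith [hx.2, pi_pos]) (by linarith)

lemma sineTransform_pos (hn : n = 68533) (hj₀ : 0.5 ≤ j) (hj₁ : j ≤ 34266.5) :
    0 < sineTransform n j :=
  integral_pos_of_mul_integral_le hn (W := fun x => sin (j * x)) (by fun_prop) (by fun_prop)
    (fun x hx => (pow_le_of_le_one (div_nonneg hx.1 pi_pos.le)
      ((div_le_one pi_pos).2 (by linarith [hx.2, pi_pos])) three_ne_zero).trans
        (div_pi_le_sin_mul hj₀ hj₁ hx))
    (fun x hx => sin_mul_nonneg hn (by linarith) hj₁ hx) (A := 1) (κ := 1)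
    (fun x => abs_sin_le_one _) (by norm_num) (one_mul _).le

lemma sineTransform_add_half_sub (n : ℕ) (k : ℝ) :
    sineTransform n (k + 1 / 2) - sineTransform n (k - 1 / 2) =
      2 * ∫ x in (0 : ℝ)..π, sineProd n x * (sin (x / 2) * cos (k * x)) := by
  unfold sineTransform
  rw [← intervalIntegral.integral_const_mul,
    ← intervalIntegral.integral_sub (Continuous.intervalIntegrable (by fun_prop) _ _)
      (Continuous.intervalIntegrable (by fun_prop) _ _)]
  congr 1
  ext x
  rw [show (k + 1 / 2) * x = k * x + x / 2 by ring, show (k - 1 / 2) * x = k * x - x / 2 by ring,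
    sin_add, sin_sub]
  ring

lemma two_mul_sineTransform_sub_sub (n : ℕ) (j : ℝ) :
    2 * sineTransform n j - sineTransform n (j + 1) - sineTransform n (j - 1) =
      4 * ∫ x in (0 : ℝ)..π, sineProd n x * (sin (x / 2) ^ 2 * sin (j * x)) := by
  have upper := sineTransform_add_half_sub n (j + 1 / 2)
  have lower := sineTransform_add_half_sub n (j - 1 / 2)
  rw [show j + 1 / 2 + 1 / 2 = j + 1 by ring, show j + 1 / 2 - 1 / 2 = j by ring] at upper
  rw [show j - 1 / 2 + 1 / 2 = j by ring, show j - 1 / 2 - 1 / 2 = j - 1 by ring] at lower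
  calc 2 * sineTransform n j - sineTransform n (j + 1) - sineTransform n (j - 1)
      = 2 * ((∫ x in (0 : ℝ)..π, sineProd n x * (sin (x / 2) * cos ((j - 1 / 2) * x))) -
          ∫ x in (0 : ℝ)..π, sineProd n x * (sin (x / 2) * cos ((j + 1 / 2) * x))) := by
        linarith
    _ = 2 * ∫ x in (0 : ℝ)..π, 2 * (sineProd n x * (sin (x / 2) ^ 2 * sin (j * x))) := by
        rw [← intervalIntegral.integral_sub (Continuous.intervalIntegrable (by fun_prop) _ _)
          (Continuous.intervalIntegrable (by fun_prop) _ _)]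
        congr 2
        ext x
        rw [show (j - 1 / 2) * x = j * x - x / 2 by ring,
          show (j + 1 / 2) * x = j * x + x / 2 by ring, cos_sub, cos_add]
        ring
    _ = _ := by
        rw [intervalIntegral.integral_const_mul]
        ring

lemma sineTransform_add_one_add_sub_one_lt (hn : n = 68533) (hj₀ : 0.5 ≤ j) (hj₁ : j ≤ 34266.5) :
    sineTransform n (j + 1) + sineTransform n (j - 1) < 2 * sineTransform n j := by
  have integral_pos := integral_pos_of_mul_integral_le hn
    (V := fun x => sin (x / 2) ^ 2 * sin (j * x)) (W := fun x => sin (x / 2) ^ 2 * sin (j * x))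
    (by fun_prop) (by fun_prop) (fun x hx => by
      have ratio_nonneg : 0 ≤ x / π := div_nonneg hx.1 pi_pos.le
      have sin_half_ge := div_pi_le_sin_half hx.1 (by linarith [hx.2, pi_pos])
      calc (x / π) ^ 3 = (x / π) ^ 2 * (x / π) := by ring
        _ ≤ _ := mul_le_mul (pow_le_pow_left₀ ratio_nonneg sin_half_ge 2)
          (div_pi_le_sin_mul hj₀ hj₁ hx) ratio_nonneg (sq_nonneg _))
    (fun x hx => mul_nonneg (sq_nonneg _) (sin_mul_nonneg hn (by linarith) hj₁ hx))
    (A := 1) (κ := 1) (fun x => by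
      rw [abs_mul, abs_of_nonneg (sq_nonneg (sin (x / 2)))]
      exact mul_le_one₀ (sin_sq_le_one _) (abs_nonneg _) (abs_sin_le_one _))
    (by norm_num) (one_mul _).le
  linarith [two_mul_sineTransform_sub_sub n j]

lemma lt_succ_of_lt_succ_of_concave {u : ℕ → ℝ} {m k : ℕ}
    (hu : ∀ i < k, u (i + 2) + u i < 2 * u (i + 1)) (hk : u k < u (k + 1)) (hm : m ≤ k) :
    u m < u (m + 1) := by
  induction hm using Nat.decreasingInduction with
  | self => exact hk
  | of_succ i hi ih => linarith [hu i hi]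

lemma succ_lt_of_succ_lt_of_concave {u : ℕ → ℝ} {m k K : ℕ}
    (hu : ∀ i < K, u (i + 2) + u i < 2 * u (i + 1)) (hk : u (k + 1) < u k) (hm : k ≤ m)
    (hmK : m ≤ K) : u (m + 1) < u m := by
  induction m, hm using Nat.le_induction with
  | base => exact hk
  | succ i _ ih => linarith [hu i hmK, ih (by omega)]

lemma lt_peak_of_concave {u : ℕ → ℝ} {m k K : ℕ}
    (hu : ∀ i < K, u (i + 2) + u i < 2 * u (i + 1)) (hk : u k < u (k + 1))
    (hk' : u (k + 2) < u (k + 1)) (hkK : k < K) (hm : m ≤ K + 1) (hmk : m ≠ k + 1) :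
    u m < u (k + 1) := by
  rcases hmk.lt_or_gt with before | after
  · have increasing : StrictMonoOn u (Set.Iic (k + 1)) :=
      strictMonoOn_Iic_of_lt_succ fun i hi =>
        lt_succ_of_lt_succ_of_concave (fun i hi => hu i (hi.trans hkK)) hk (Nat.lt_succ_iff.1 hi)
    exact increasing (Set.mem_Iic.2 before.le) (Set.mem_Iic.2 le_rfl) before
  · induction m, after using Nat.le_induction with
    | base => exact hk'
    | succ i hi ih =>
      exact (succ_lt_of_succ_lt_of_concave hu hk' (by omega) (by omega)).trans
        (ih (by omega) (by omega))

lemma sineTransform_lt_of_ne_peak (hn : n = 68533) {m : ℕ} (hm : m ≤ 34266) (hm' : m ≠ 21654) :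
    sineTransform n (m + 1 / 2) < sineTransform n (21654 + 1 / 2) := by
  have increase := integral_sin_half_mul_cos_21654_pos hn
  have decrease := integral_sin_half_mul_neg_cos_21655_pos hn
  simp only [mul_neg, intervalIntegral.integral_neg] at decrease
  have lower := sineTransform_add_half_sub n 21654
  have upper := sineTransform_add_half_sub n 21655
  norm_num at lower upper
  have peak := lt_peak_of_concave (u := fun m => sineTransform n (m + 1 / 2)) (k := 21653)
    (K := 34266) (m := m) (fun i hi => ?_) (by norm_num; linarith) (by norm_num; linarith)
    (by norm_num) (by omega) hm'
  · norm_num at peak ⊢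
    exact peak
  · have i_le : (i : ℝ) + 1 ≤ 34266 := by exact_mod_cast hi
    have concave := sineTransform_add_one_add_sub_one_lt hn (j := i + 1 + 1 / 2)
      (by linarith [(Nat.cast_nonneg i : (0 : ℝ) ≤ i)]) (by linarith)
    push_cast
    convert concave using 3 <;> ring

end ConcaveRange

/-! ### Frequencies from `34266 + 1 / 2` on -/

section CriticalAngle

variable {n : ℕ} {τ u e x y : ℝ}

lemma continuousOn_scaledLogDeriv (hu : 0 < u) (he : n * (e / 2) < π) :
    ContinuousOn (scaledLogDeriv n) (Set.Icc u e) := by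
  refine continuousOn_finsetSum _ fun k hk =>
    continuousOn_mulCot.comp (f := fun θ : ℝ => ((k : ℝ) + 1) * (θ / 2)) (by fun_prop)
      fun θ hθ => ?_
  have angle := succ_mul_half_mem_Ioc hk (hu.trans_le hθ.1)
  exact ⟨angle.1.le, angle.2.trans_lt (lt_of_le_of_lt (by have := hθ.2; gcongr) he)⟩

lemma exists_scaledLogDeriv_eq_zero (hn : n = 68533) :
    ∃ τ ∈ Set.Icc (2 * π / 86620) (2 * π / 86616), scaledLogDeriv n τ = 0 := by
  obtain ⟨right_neg, -⟩ := scaledLogDeriv_at_86616 hn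
  obtain ⟨⟨left_pos, -⟩, -⟩ := scaledLogDeriv_at_86620 hn
  exact intermediate_value_Icc' (by linarith [pi_pos])
    (continuousOn_scaledLogDeriv (by positivity) (by rw [hn]; norm_num; linarith [pi_pos]))
    ⟨by linarith, by linarith⟩

lemma sub_one_mul_scaledLogDeriv_le (hτ : 0 < τ) (hτ' : n * (τ / 2) < π)
    (hB : scaledLogDeriv n τ = 0) (hx : 0 < x) (hx' : n * (x / 2) < π) :
    (x / τ - 1) * scaledLogDeriv n x ≤ -(n * (x / τ - 1) ^ 2) := by
  rcases le_total x τ with left | right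
  · have ratio_le : x / τ ≤ 1 := (div_le_one hτ).2 left
    have chord := chord_le_scaledLogDeriv hτ hτ' (by positivity) ratio_le
    rw [hB, div_mul_cancel₀ _ hτ.ne'] at chord
    linarith [mul_le_mul_of_nonneg_left chord (sub_nonneg.2 ratio_le)]
  · have ratio_ge : 1 ≤ x / τ := (one_le_div hτ).2 right
    have chord := chord_le_scaledLogDeriv hx hx' (by positivity) ((div_le_one hx).2 right)
    rw [div_mul_cancel₀ _ hx.ne', hB] at chord
    have scaled : n * (x / τ - 1) + scaledLogDeriv n x ≤ 0 :=
      calc n * (x / τ - 1) + scaledLogDeriv n x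
          = x / τ * ((1 - τ / x) * n + τ / x * scaledLogDeriv n x) := by field_simp
        _ ≤ x / τ * 0 := by gcongr
        _ = 0 := mul_zero _
    linarith [mul_le_mul_of_nonneg_left scaled (sub_nonneg.2 ratio_ge)]

lemma scaledLogDeriv_sub_le_of_near (hn : n = 68533) (hτ : 0 < τ)
    (hτT : τ ≤ 1.02 * (2 * π / 86620)) (hx : 0 < x) (hxy : x ≤ y)
    (hy : y ≤ 1.02 * (2 * π / 86620)) :
    scaledLogDeriv n x - scaledLogDeriv n y ≤ 3.6 * n * ((y - x) / τ) := by
  obtain ⟨slope, -⟩ := scaledLogDerivSlope_and_curvature_at_102_div_86620 hn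
  have lipschitz := scaledLogDeriv_sub_le (n := n) hx hxy hy
    (by rw [hn]; norm_num; linarith [pi_pos])
  refine lipschitz.trans (mul_le_mul slope ?_ (div_nonneg (by linarith) (by positivity))
    (by positivity))
  exact div_le_div_of_nonneg_left (by linarith) hτ hτT

lemma neg_sq_le_sub_one_mul_scaledLogDeriv (hn : n = 68533)
    (hτ : τ ∈ Set.Icc (2 * π / 86620) (2 * π / 86616)) (hB : scaledLogDeriv n τ = 0)
    (hx : x ∈ Set.Icc (0.99 * τ) (1.01 * τ)) :
    -(3.6 * n * (x / τ - 1) ^ 2) ≤ (x / τ - 1) * scaledLogDeriv n x := by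
  have := pi_pos
  have τ_pos : 0 < τ := lt_of_lt_of_le (by positivity) hτ.1
  have x_pos : 0 < x := lt_of_lt_of_le (by positivity) hx.1
  have τ_le : τ ≤ 1.02 * (2 * π / 86620) := by linarith [hτ.2]
  have x_le : x ≤ 1.02 * (2 * π / 86620) := by linarith [hx.2, hτ.2]
  rcases le_total x τ with left | right
  · have lipschitz := scaledLogDeriv_sub_le_of_near hn τ_pos τ_le x_pos left τ_le
    rw [hB, sub_div, div_self τ_pos.ne'] at lipschitz
    linarith [mul_le_mul_of_nonneg_left lipschitz (sub_nonneg.2 ((div_le_one τ_pos).2 left))]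
  · have lipschitz := scaledLogDeriv_sub_le_of_near hn τ_pos τ_le τ_pos right x_le
    rw [hB, sub_div, div_self τ_pos.ne'] at lipschitz
    linarith [mul_le_mul_of_nonneg_left lipschitz (sub_nonneg.2 ((one_le_div τ_pos).2 right))]

lemma critical_mul_half_lt_pi (hn : n = 68533) (hτ : τ ≤ 2 * π / 86616) :
    n * (1.01 * τ / 2) < π := by
  rw [hn]
  norm_num
  linarith [pi_pos]

lemma two_pi_div_le_mul_critical (hn : n = 68533) (hτ : 2 * π / 86620 ≤ τ) :
    2 * π / n ≤ 1.27 * τ := by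
  rw [hn]
  norm_num
  linarith [pi_pos]

end CriticalAngle

section Variance

variable {n : ℕ} {τ x z b : ℝ}

lemma integral_sineProd_mul_one_sub_sq_nonneg (hn : n = 68533)
    (hτ : τ ∈ Set.Icc (2 * π / 86620) (2 * π / 86616)) (hB : scaledLogDeriv n τ = 0) :
    0 ≤ ∫ x in (0 : ℝ)..(2 * π / n), sineProd n x * (1 - n / 1.27 * (x / τ - 1) ^ 2) := by
  have τ_pos : 0 < τ := lt_of_lt_of_le (by positivity) hτ.1
  have parts := mul_sineProd_le_integral (n := n) (e := 2 * π / n) (p := fun x => x - τ)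
    (p' := fun _ => 1) (g := fun x => sineProd n x * (1 - n / 1.27 * (x / τ - 1) ^ 2)) (by omega)
    (by positivity) (mul_half_le_pi le_rfl) (by fun_prop) (by fun_prop)
    (fun x _ => (hasDerivAt_id x).sub_const τ) fun x hx => by
      have x_pos := hx.1
      have half_lt := mul_half_lt_pi hx.2
      have S_pos := sineProd_pos x_pos (by linarith)
      have ratio_pos : 0 < x / τ := by positivity
      have ratio_le : x / τ ≤ 1.27 :=
        (div_le_iff₀ τ_pos).2 (hx.2.le.trans (two_pi_div_le_mul_critical hn hτ.1))
      have chord := sub_one_mul_scaledLogDeriv_le τ_pos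
        (by linarith [critical_mul_half_lt_pi hn hτ.2, mul_nonneg n.cast_nonneg τ_pos.le]) hB x_pos
        half_lt
      have quotient_le : (x / τ - 1) * scaledLogDeriv n x / (x / τ) ≤
          -(n / 1.27 * (x / τ - 1) ^ 2) := by
        rw [div_le_iff₀ ratio_pos]
        refine chord.trans ?_
        rw [neg_mul, neg_le_neg_iff]
        calc n / 1.27 * (x / τ - 1) ^ 2 * (x / τ)
            ≤ n / 1.27 * (x / τ - 1) ^ 2 * 1.27 := by gcongr
          _ = n * (x / τ - 1) ^ 2 := by ring
      calc 1 * sineProd n x + (x - τ) * (sineProd n x * scaledLogDeriv n x / x)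
          = sineProd n x * (1 + (x / τ - 1) * scaledLogDeriv n x / (x / τ)) := by field_simp
        _ ≤ sineProd n x * (1 + -(n / 1.27 * (x / τ - 1) ^ 2)) := by gcongr
        _ = sineProd n x * (1 - n / 1.27 * (x / τ - 1) ^ 2) := by ring
  rwa [sineProd_two_pi_div_self (by omega), mul_zero] at parts

lemma hasDerivAt_neg_mul_sub_cube (hτ : τ ≠ 0) :
    HasDerivAt (fun x => -(τ * ((x / τ - 1) - 10000 * (x / τ - 1) ^ 3)))
      (-(1 - 30000 * (x / τ - 1) ^ 2)) x := by
  have ratio : HasDerivAt (fun x => x / τ - 1) (1 / τ) x :=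
    ((hasDerivAt_id' x).div_const τ).sub_const 1
  refine (((ratio.sub ((ratio.fun_pow 3).const_mul 10000)).const_mul τ).neg).congr_deriv ?_
  norm_num
  field_simp
  ring

lemma one_sub_sq_mul_neg_div_le (hz : z ∈ Set.Icc 0.99 1.01)
    (hb : -(3.6 * 68533 * (z - 1) ^ 2) ≤ (z - 1) * b) :
    (1 - 10000 * (z - 1) ^ 2) * -((z - 1) * b) / z ≤ 270000 * (z - 1) ^ 2 := by
  have sq_le : (z - 1) ^ 2 ≤ 0.01 ^ 2 := sq_le_sq' (by linarith [hz.1]) (by linarith [hz.2])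
  have factor_nonneg : 0 ≤ 1 - 10000 * (z - 1) ^ 2 := by norm_num at sq_le; linarith
  rw [div_le_iff₀ (by linarith [hz.1])]
  calc (1 - 10000 * (z - 1) ^ 2) * -((z - 1) * b)
      ≤ (1 - 10000 * (z - 1) ^ 2) * (3.6 * 68533 * (z - 1) ^ 2) := by gcongr; linarith
    _ ≤ 1 * (3.6 * 68533 * (z - 1) ^ 2) := by gcongr; linarith [sq_nonneg (z - 1)]
    _ ≤ 270000 * (z - 1) ^ 2 * 0.99 := by linarith [sq_nonneg (z - 1)]
    _ ≤ 270000 * (z - 1) ^ 2 * z := by gcongr; exact hz.1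

lemma deriv_mul_sineProd_le_sq_sub_one (hn : n = 68533)
    (hτ : τ ∈ Set.Icc (2 * π / 86620) (2 * π / 86616)) (hB : scaledLogDeriv n τ = 0)
    (hx : x ∈ Set.Ioo (0.99 * τ) (1.01 * τ)) :
    -(1 - 30000 * (x / τ - 1) ^ 2) * sineProd n x +
      -(τ * ((x / τ - 1) - 10000 * (x / τ - 1) ^ 3)) *
        (sineProd n x * scaledLogDeriv n x / x) ≤
    sineProd n x * (300000 * (x / τ - 1) ^ 2 - 1) := by
  have τ_pos : 0 < τ := lt_of_lt_of_le (by positivity) hτ.1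
  have x_pos : 0 < x := lt_of_le_of_lt (by positivity) hx.1
  have half_le : n * (x / 2) ≤ n * (1.01 * τ / 2) := by have := hx.2.le; gcongr
  have S_pos := sineProd_pos (n := n) x_pos (by linarith [critical_mul_half_lt_pi hn hτ.2])
  have lower := neg_sq_le_sub_one_mul_scaledLogDeriv hn hτ hB (Set.Ioo_subset_Icc_self hx)
  rw [show (n : ℝ) = 68533 by exact_mod_cast hn] at lower
  have quotient_le := one_sub_sq_mul_neg_div_le
    ⟨(le_div_iff₀ τ_pos).2 hx.1.le, (div_le_iff₀ τ_pos).2 hx.2.le⟩ lower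
  calc -(1 - 30000 * (x / τ - 1) ^ 2) * sineProd n x +
        -(τ * ((x / τ - 1) - 10000 * (x / τ - 1) ^ 3)) * (sineProd n x * scaledLogDeriv n x / x)
      = sineProd n x * ((1 - 10000 * (x / τ - 1) ^ 2) * -((x / τ - 1) * scaledLogDeriv n x) /
          (x / τ) + 30000 * (x / τ - 1) ^ 2 - 1) := by field_simp; ring
    _ ≤ sineProd n x * (270000 * (x / τ - 1) ^ 2 + 30000 * (x / τ - 1) ^ 2 - 1) := by gcongr
    _ = sineProd n x * (300000 * (x / τ - 1) ^ 2 - 1) := by ring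

lemma sq_sub_one_nonneg_of_far (hτ : 0 < τ) (hx : x ≤ 0.99 * τ ∨ 1.01 * τ ≤ x) :
    0 ≤ 300000 * (x / τ - 1) ^ 2 - 1 := by
  have distance : 0.01 ≤ |x / τ - 1| := by
    rcases hx with left | right
    · exact le_abs.2 (Or.inr (by linarith [(div_le_iff₀ hτ).2 left]))
    · exact le_abs.2 (Or.inl (by linarith [(le_div_iff₀ hτ).2 right]))
  have : 0.01 ^ 2 ≤ (x / τ - 1) ^ 2 := by rw [← sq_abs (x / τ - 1)]; gcongr
  norm_num at this
  linarith

lemma integral_sineProd_mul_sq_sub_one_nonneg (hn : n = 68533)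
    (hτ : τ ∈ Set.Icc (2 * π / 86620) (2 * π / 86616)) (hB : scaledLogDeriv n τ = 0) :
    0 ≤ ∫ x in (0 : ℝ)..(2 * π / n), sineProd n x * (300000 * (x / τ - 1) ^ 2 - 1) := by
  have τ_pos : 0 < τ := lt_of_lt_of_le (by positivity) hτ.1
  have arc_ge : 1.01 * τ ≤ 2 * π / n := by rw [hn]; norm_num; linarith [hτ.2, pi_pos]
  have middle := mul_sineProd_sub_le_integral (n := n) (u := 0.99 * τ) (e := 1.01 * τ)
    (g := fun x => sineProd n x * (300000 * (x / τ - 1) ^ 2 - 1)) (by omega) (by positivity)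
    (by linarith) (critical_mul_half_lt_pi hn hτ.2).le (by fun_prop) (by fun_prop)
    (fun x _ => hasDerivAt_neg_mul_sub_cube τ_pos.ne')
    (fun x hx => deriv_mul_sineProd_le_sq_sub_one hn hτ hB hx)
  rw [mul_div_cancel_right₀ _ τ_pos.ne', mul_div_cancel_right₀ _ τ_pos.ne'] at middle
  norm_num at middle
  have outer (x : ℝ) (hx : x ∈ Set.Icc 0 (2 * π / n)) (far : x ≤ 0.99 * τ ∨ 1.01 * τ ≤ x) :
      0 ≤ sineProd n x * (300000 * (x / τ - 1) ^ 2 - 1) :=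
    mul_nonneg (sineProd_nonneg hx.1 (mul_half_le_pi hx.2)) (sq_sub_one_nonneg_of_far τ_pos far)
  have left : 0 ≤ ∫ x in (0 : ℝ)..(0.99 * τ), sineProd n x * (300000 * (x / τ - 1) ^ 2 - 1) :=
    intervalIntegral.integral_nonneg (by positivity) fun x hx =>
      outer x ⟨hx.1, by linarith [hx.2]⟩ (Or.inl hx.2)
  have right : 0 ≤ ∫ x in (1.01 * τ)..(2 * π / n),
      sineProd n x * (300000 * (x / τ - 1) ^ 2 - 1) :=
    intervalIntegral.integral_nonneg arc_ge fun x hx =>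
      outer x ⟨by linarith [hx.1], hx.2⟩ (Or.inr hx.1)
  rw [← intervalIntegral.integral_add_adjacent_intervals (b := 0.99 * τ)
      (Continuous.intervalIntegrable (by fun_prop) _ _)
      (Continuous.intervalIntegrable (by fun_prop) _ _),
    ← intervalIntegral.integral_add_adjacent_intervals (a := 0.99 * τ) (b := 1.01 * τ)
      (Continuous.intervalIntegrable (by fun_prop) _ _)
      (Continuous.intervalIntegrable (by fun_prop) _ _)]
  norm_num at left right ⊢
  linarith

end Variance

section TrigonometricComparisons

variable {a c x y h : ℝ}

lemma cos_sub_sub_le_cos_add (hc : 0 < c) :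
    cos y - c * y ^ 2 - (1 / 2 + 1 / (4 * c)) * h ^ 2 ≤ cos (y + h) := by
  have cosines : cos y - h ^ 2 / 2 ≤ cos y * cos h := by
    linarith [one_sub_sq_div_two_le_cos (x := h), neg_one_le_cos y,
      mul_nonneg (sub_nonneg.2 (cos_le_one y)) (sub_nonneg.2 (cos_le_one h))]
  have sines : sin y * sin h ≤ |y| * |h| :=
    calc sin y * sin h ≤ |sin y| * |sin h| := (le_abs_self _).trans_eq (abs_mul _ _)
      _ ≤ |y| * |h| := mul_le_mul abs_sin_le_abs abs_sin_le_abs (abs_nonneg _) (abs_nonneg _)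
  have mean : |y| * |h| ≤ c * y ^ 2 + 1 / (4 * c) * h ^ 2 := by
    have : 0 ≤ c * (|y| - |h| / (2 * c)) ^ 2 := by positivity
    rw [← sq_abs y, ← sq_abs h]
    refine le_of_sub_nonneg (this.trans_eq ?_)
    field_simp
    ring
  rw [cos_add]
  linarith

lemma mul_sq_le_cos_sub_cos (hx : |x| ≤ 1.571) : 0.05 * x ^ 2 ≤ cos x - cos (1.1 * x) := by
  wlog hx₀ : 0 ≤ x generalizing x
  · simpa using this (x := -x) (by rwa [abs_neg]) (by linarith)
  rw [abs_of_nonneg hx₀] at hx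
  have := pi_gt_d4
  have cube_le : x ^ 2 * x ≤ 1.571 ^ 2 * x := by gcongr
  norm_num at cube_le
  have sin_sum : 0.55 * x ≤ sin (1.05 * x) :=
    calc 0.55 * x ≤ 1.05 * x - (1.05 * x) ^ 3 / 6 := by ring_nf at cube_le ⊢; linarith
      _ ≤ sin (1.05 * x) := sin_ge_sub_cube (by positivity)
  have sin_difference : 0.049 * x ≤ sin (0.05 * x) :=
    calc 0.049 * x ≤ 0.05 * x - (0.05 * x) ^ 3 / 6 := by ring_nf at cube_le ⊢; linarith
      _ ≤ sin (0.05 * x) := sin_ge_sub_cube (by positivity)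
  have to_product : cos x - cos (1.1 * x) = 2 * sin (1.05 * x) * sin (0.05 * x) := by
    rw [cos_sub_cos, show (x + 1.1 * x) / 2 = 1.05 * x by ring,
      show (x - 1.1 * x) / 2 = -(0.05 * x) by ring, sin_neg]
    ring
  calc 0.05 * x ^ 2 ≤ 2 * (0.55 * x) * (0.049 * x) := by linarith [sq_nonneg x]
    _ ≤ 2 * sin (1.05 * x) * sin (0.05 * x) :=
        mul_le_mul (by linarith) sin_difference (by positivity) (by linarith)
    _ = cos x - cos (1.1 * x) := to_product.symm

lemma sin_mul_le (ha : 1 ≤ a) (hx : 0 ≤ x) (hax : a * x ≤ π) : sin (a * x) ≤ a * sin x := by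
  have a_pos : 0 < a := by linarith
  have concave := strictConcaveOn_sin_Icc.concaveOn.2 (x := a * x) ⟨by positivity, hax⟩
    (Set.left_mem_Icc.2 pi_pos.le) (show 0 ≤ 1 / a by positivity)
    (sub_nonneg.2 ((div_le_one a_pos).2 ha)) (by ring)
  simp only [smul_eq_mul, sin_zero, mul_zero, add_zero] at concave
  rwa [show 1 / a * (a * x) = x by field_simp, one_div_mul_eq_div, div_le_iff₀' a_pos] at concave

lemma abs_sin_mul_le (ha : 1.02 ≤ a) (hx : |x| ≤ 1.1 * (π / 2)) :
    |sin (a * x)| ≤ a * |sin x| := by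
  have := pi_pos
  wlog hx₀ : 0 ≤ x generalizing x
  · simpa using this (x := -x) (by rwa [abs_neg]) (by linarith)
  rw [abs_of_nonneg hx₀] at hx
  have : 0 < a := by linarith
  rw [abs_of_nonneg (sin_nonneg_of_nonneg_of_le_pi hx₀ (by linarith))]
  rcases le_or_gt (a * x) (π / 2) with small | large
  · rw [abs_of_nonneg (sin_nonneg_of_nonneg_of_le_pi (by positivity) (by linarith))]
    exact sin_mul_le (by linarith) hx₀ (by linarith)
  refine (abs_sin_le_one _).trans ?_
  rcases le_total x (π / 2) with acute | obtuse
  · calc 1 ≤ a * (2 / π * x) := by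
          rw [show a * (2 / π * x) = 2 * (a * x) / π by ring, le_div_iff₀ pi_pos]; linarith
      _ ≤ a * sin x := by gcongr; exact mul_le_sin hx₀ acute
  · have sq_le : (x - π / 2) ^ 2 ≤ 0.16 ^ 2 := by
      have := pi_lt_d4
      gcongr
      linarith
    have sin_ge := one_sub_sq_div_two_le_cos (x := x - π / 2)
    rw [cos_sub_pi_div_two] at sin_ge
    norm_num at sq_le
    calc (1 : ℝ) ≤ 1.02 * 0.987 := by norm_num
      _ ≤ a * sin x := by gcongr; linarith

end TrigonometricComparisons

section LargeFrequency

variable {n : ℕ} {τ j k x ε : ℝ}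

lemma cos_sub_sq_le_sin_peak (hτ : τ ∈ Set.Icc (2 * π / 86620) (2 * π / 86616))
    (hx : x ∈ Set.Icc 0 (1.27 * τ)) :
    cos (π / 2 * (x / τ - 1)) - 0.01 * (π / 2 * (x / τ - 1)) ^ 2 - 0.00000007 ≤
      sin ((21654 + 1 / 2) * x) := by
  have := pi_lt_d2
  have τ_pos : 0 < τ := lt_of_lt_of_le (by positivity) hτ.1
  have ratio_le : x / τ ≤ 1.27 := (div_le_iff₀ τ_pos).2 hx.2
  have ratio_nonneg : 0 ≤ x / τ := div_nonneg hx.1 τ_pos.le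
  have detuning : |(21654 + 1 / 2) * τ - π / 2| ≤ 0.000037 :=
    abs_le.2 ⟨by linarith [hτ.1, pi_pos], by linarith [hτ.2]⟩
  have shift_sq : (((21654 + 1 / 2) * τ - π / 2) * (x / τ)) ^ 2 ≤ (0.000037 * 1.27) ^ 2 := by
    rw [← sq_abs, abs_mul, abs_of_nonneg ratio_nonneg]
    gcongr
  have perturbed := cos_sub_sub_le_cos_add (c := 0.01) (y := π / 2 * (x / τ - 1))
    (h := ((21654 + 1 / 2) * τ - π / 2) * (x / τ)) (by norm_num)
  rw [show π / 2 * (x / τ - 1) + ((21654 + 1 / 2) * τ - π / 2) * (x / τ) =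
    (21654 + 1 / 2) * x - π / 2 by field_simp; ring, cos_sub_pi_div_two] at perturbed
  norm_num at shift_sq perturbed ⊢
  linarith

lemma abs_sin_mul_le_of_mid (hτ : 0 < τ) (hj : j * τ ∈ Set.Icc (π - 0.66) 3.62) :
    |sin (j * x)| ≤ 0.66 + 3.62 * |x / τ - 1| := by
  have jτ_nonneg : 0 ≤ j * τ := by linarith [hj.1, pi_gt_three]
  have at_τ : |sin (j * τ)| ≤ 0.66 := by
    rw [← sin_pi_sub]
    exact abs_sin_le_abs.trans (abs_le.2 ⟨by linarith [hj.2, pi_gt_three], by linarith [hj.1]⟩)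
  have lipschitz : |sin (j * x) - sin (j * τ)| ≤ 3.62 * |x / τ - 1| :=
    calc |sin (j * x) - sin (j * τ)|
        = 2 * |sin ((j * x - j * τ) / 2)| * |cos ((j * x + j * τ) / 2)| := by
          rw [sin_sub_sin, abs_mul, abs_mul, abs_two]
      _ ≤ 2 * |(j * x - j * τ) / 2| * 1 :=
          mul_le_mul (mul_le_mul_of_nonneg_left abs_sin_le_abs zero_le_two) (abs_cos_le_one _)
            (abs_nonneg _) (by positivity)
      _ = j * τ * |x / τ - 1| := by
          rw [show (j * x - j * τ) / 2 = j * τ * (x / τ - 1) / 2 by field_simp, abs_div, abs_mul,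
            abs_of_nonneg jτ_nonneg, abs_two]
          ring
      _ ≤ 3.62 * |x / τ - 1| := by gcongr; exact hj.2
  linarith [abs_sub_abs_le_abs_sub (sin (j * x)) (sin (j * τ))]

lemma abs_mul_le_of_abs_le_one (hε : |ε| ≤ 1) : |ε * x| ≤ |x| := by
  rw [abs_mul]
  exact mul_le_of_le_one_left (abs_nonneg _) hε

lemma sub_sq_le_sin_peak_sub_of_mid (hτ : τ ∈ Set.Icc (2 * π / 86620) (2 * π / 86616))
    (hx : x ∈ Set.Icc 0 (1.27 * τ)) (hj : 34266.5 ≤ j) (hjτ : j * τ ≤ 2.3 * (π / 2))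
    (hε : |ε| ≤ 1) :
    0.31 - 184 * (x / τ - 1) ^ 2 ≤ sin ((21654 + 1 / 2) * x) - ε * sin (j * x) := by
  have := pi_gt_d2
  have := pi_lt_d4
  have τ_pos : 0 < τ := lt_of_lt_of_le (by positivity) hτ.1
  have jτ_ge : 34266.5 * (2 * π / 86620) ≤ j * τ := by gcongr; exact hτ.1
  have square_le : (π / 2 * (x / τ - 1)) ^ 2 ≤ 2.5 * (x / τ - 1) ^ 2 := by
    rw [mul_pow]
    gcongr
    calc (π / 2) ^ 2 ≤ 1.571 ^ 2 := by gcongr; linarith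
      _ ≤ 2.5 := by norm_num
  have target := (le_abs_self _).trans ((abs_mul_le_of_abs_le_one hε).trans
    (abs_sin_mul_le_of_mid (j := j) (x := x) τ_pos ⟨by linarith, by linarith⟩))
  have mean : 3.62 * |x / τ - 1| ≤ 0.0181 + 181 * (x / τ - 1) ^ 2 := by
    rw [← sq_abs (x / τ - 1)]
    linarith [sq_nonneg (|x / τ - 1| - 0.01)]
  linarith [cos_sub_sq_le_sin_peak hτ hx, sq_nonneg (x / τ - 1),
    one_sub_sq_div_two_le_cos (x := π / 2 * (x / τ - 1))]

lemma sq_sub_le_sin_peak_sub_cos (hτ : τ ∈ Set.Icc (2 * π / 86620) (2 * π / 86616))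
    (hx : x ∈ Set.Icc 0 (1.27 * τ)) (hk : k * τ = 1.1 * (π / 2)) :
    0.098 * (x / τ - 1) ^ 2 - 0.00000007 ≤
      sin ((21654 + 1 / 2) * x) - cos (k * (x - τ)) := by
  have := pi_gt_d2
  have := pi_lt_d4
  have τ_pos : 0 < τ := lt_of_lt_of_le (by positivity) hτ.1
  have deviation_le : |x / τ - 1| ≤ 1 :=
    abs_le.2 ⟨by linarith [div_nonneg hx.1 τ_pos.le], by linarith [(div_le_iff₀ τ_pos).2 hx.2]⟩
  have phase : k * (x - τ) = 1.1 * (π / 2 * (x / τ - 1)) := by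
    rw [← mul_assoc, ← hk]
    field_simp
  have gap := mul_sq_le_cos_sub_cos (x := π / 2 * (x / τ - 1)) <|
    calc |π / 2 * (x / τ - 1)| = π / 2 * |x / τ - 1| := by
          rw [abs_mul, abs_of_pos pi_div_two_pos]
      _ ≤ 1.571 * 1 := by gcongr; linarith
      _ = 1.571 := mul_one _
  have square_ge : 2.46 * (x / τ - 1) ^ 2 ≤ (π / 2 * (x / τ - 1)) ^ 2 := by
    rw [mul_pow]
    gcongr
    calc (2.46 : ℝ) ≤ 1.57 ^ 2 := by norm_num
      _ ≤ (π / 2) ^ 2 := by gcongr; linarith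
  rw [phase]
  linarith [cos_sub_sq_le_sin_peak hτ hx, sq_nonneg (x / τ - 1)]

lemma abs_cos_sub_cos_div_le (hj : 0 < j) (hk : 0 < k) (hjk : 1.02 ≤ j / (2 * k))
    (hx : |k * (x - τ)| ≤ 1.1 * (π / 2)) :
    |(cos (j * τ) - cos (j * x)) / j| ≤ |sin (k * (x - τ)) / k| := by
  have half_angle := abs_sin_mul_le hjk hx
  rw [show j / (2 * k) * (k * (x - τ)) = (j * x - j * τ) / 2 by field_simp] at half_angle
  rw [abs_div, abs_div, abs_of_pos hj, abs_of_pos hk, div_le_iff₀ hj]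
  calc |cos (j * τ) - cos (j * x)|
      = 2 * |sin ((j * τ + j * x) / 2)| * |sin ((j * x - j * τ) / 2)| := by
        rw [abs_sub_comm, cos_sub_cos, abs_mul, abs_mul, abs_neg, abs_two, add_comm (j * x)]
    _ ≤ 2 * 1 * (j / (2 * k) * |sin (k * (x - τ))|) := by
        gcongr
        exact abs_sin_le_one _
    _ = |sin (k * (x - τ))| / k * j := by field_simp

lemma comparison_mul_scaledLogDeriv_nonpos (hτ : 0 < τ) (hτ' : n * (τ / 2) < π)
    (hB : scaledLogDeriv n τ = 0) (hj : 0 < j) (hk : 0 < k) (hjk : 1.02 ≤ j / (2 * k))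
    (hkτ : k * τ ≤ 1.1 * (π / 2)) (hε : |ε| ≤ 1) (hx : x ∈ Set.Ioo 0 (2 * τ))
    (hx' : n * (x / 2) < π) :
    (sin (k * (x - τ)) / k - ε * ((cos (j * τ) - cos (j * x)) / j)) * scaledLogDeriv n x ≤ 0 := by
  have phase_le : |k * (x - τ)| ≤ 1.1 * (π / 2) := by
    rw [abs_mul, abs_of_pos hk]
    have : |x - τ| ≤ τ := abs_le.2 ⟨by linarith [hx.1], by linarith [hx.2]⟩
    exact le_trans (by gcongr) hkτ
  have bound := (abs_mul_le_of_abs_le_one hε).trans (abs_cos_sub_cos_div_le hj hk hjk phase_le)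
  rcases le_total x τ with left | right
  · have sin_nonpos : sin (k * (x - τ)) / k ≤ 0 :=
      div_nonpos_of_nonpos_of_nonneg (sin_nonpos_of_nonpos_of_neg_pi_le
        (mul_nonpos_of_nonneg_of_nonpos hk.le (sub_nonpos.2 left))
        (by linarith [neg_le_of_abs_le phase_le, pi_pos])) hk.le
    rw [abs_of_nonpos sin_nonpos] at bound
    exact mul_nonpos_of_nonpos_of_nonneg (by linarith [neg_le_of_abs_le bound])
      (hB.symm.trans_le (scaledLogDeriv_le_of_le hx.1 left hτ'))
  · have sin_nonneg : 0 ≤ sin (k * (x - τ)) / k :=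
      div_nonneg (sin_nonneg_of_nonneg_of_le_pi (mul_nonneg hk.le (sub_nonneg.2 right))
        (by linarith [le_of_abs_le phase_le, pi_pos])) hk.le
    rw [abs_of_nonneg sin_nonneg] at bound
    exact mul_nonpos_of_nonneg_of_nonpos (by linarith [le_of_abs_le bound])
      ((scaledLogDeriv_le_of_le hτ right hx').trans_eq hB)

lemma hasDerivAt_comparison (hj : j ≠ 0) (hk : k ≠ 0) :
    HasDerivAt (fun x => sin (k * (x - τ)) / k - ε * ((cos (j * τ) - cos (j * x)) / j))
      (cos (k * (x - τ)) - ε * sin (j * x)) x := by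
  have wide := ((((hasDerivAt_id' x).sub_const τ).const_mul k).sin).div_const k
  have target := ((((hasDerivAt_id' x).const_mul j).cos.const_sub (cos (j * τ))).div_const
    j).const_mul ε
  exact (wide.sub target).congr_deriv (by field_simp)

lemma integral_sineProd_mul_cos_sub_nonneg (hn : n = 68533)
    (hτ : τ ∈ Set.Icc (2 * π / 86620) (2 * π / 86616)) (hB : scaledLogDeriv n τ = 0)
    (hk : k * τ = 1.1 * (π / 2)) (hj : 2.3 * (π / 2) ≤ j * τ) (hε : |ε| ≤ 1) :
    0 ≤ ∫ x in (0 : ℝ)..(2 * π / n), sineProd n x * (cos (k * (x - τ)) - ε * sin (j * x)) := by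
  have := pi_pos
  have τ_pos : 0 < τ := lt_of_lt_of_le (by positivity) hτ.1
  have k_pos : 0 < k := (mul_pos_iff_of_pos_right τ_pos).1 (by linarith)
  have j_pos : 0 < j := (mul_pos_iff_of_pos_right τ_pos).1 (by linarith)
  have hjk : 1.02 ≤ j / (2 * k) := by
    rw [le_div_iff₀ (by positivity)]
    exact le_of_mul_le_mul_right (by linarith) τ_pos
  have parts := mul_sineProd_le_integral (n := n) (e := 2 * π / n)
    (g := fun x => sineProd n x * (cos (k * (x - τ)) - ε * sin (j * x))) (by omega)
    (by positivity) (mul_half_le_pi le_rfl) (by fun_prop) (by fun_prop)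
    (fun x _ => hasDerivAt_comparison (τ := τ) (ε := ε) j_pos.ne' k_pos.ne') fun x hx => by
      have half_lt := mul_half_lt_pi hx.2
      have S_pos := sineProd_pos hx.1 (by linarith)
      have sign := comparison_mul_scaledLogDeriv_nonpos τ_pos
        (by linarith [critical_mul_half_lt_pi hn hτ.2, mul_nonneg n.cast_nonneg τ_pos.le]) hB j_pos
        k_pos hjk hk.le hε ⟨hx.1, by linarith [hx.2, two_pi_div_le_mul_critical hn hτ.1]⟩ half_lt
      have weighted := mul_nonpos_of_nonpos_of_nonneg sign (div_pos S_pos hx.1).le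
      rw [mul_assoc, mul_div_left_comm (scaledLogDeriv n x), ← mul_div_assoc (sineProd n x)]
        at weighted
      rw [mul_comm (sineProd n x) (_ - _)]
      exact add_le_of_nonpos_right weighted
  rwa [sineProd_two_pi_div_self (by omega), mul_zero] at parts

lemma mul_integral_le_integral_peak_sub_of_mid (hn : n = 68533)
    (hτ : τ ∈ Set.Icc (2 * π / 86620) (2 * π / 86616)) (hB : scaledLogDeriv n τ = 0)
    (hj : 34266.5 ≤ j) (hjτ : j * τ ≤ 2.3 * (π / 2)) (hε : |ε| ≤ 1) :
    0.3 * ∫ x in (0 : ℝ)..(2 * π / n), sineProd n x * 1 ≤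
      ∫ x in (0 : ℝ)..(2 * π / n),
        sineProd n x * (sin ((21654 + 1 / 2) * x) - ε * sin (j * x)) := by
  have variance := integral_sineProd_mul_one_sub_sq_nonneg hn hτ hB
  have comparison : ∫ x in (0 : ℝ)..(2 * π / n), (0.3 * (sineProd n x * 1) +
        0.01 * (sineProd n x * (1 - n / 1.27 * (x / τ - 1) ^ 2))) ≤
      ∫ x in (0 : ℝ)..(2 * π / n),
        sineProd n x * (sin ((21654 + 1 / 2) * x) - ε * sin (j * x)) := by
    refine intervalIntegral.integral_mono_on (by positivity)
      (Continuous.intervalIntegrable (by fun_prop) _ _)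
      (Continuous.intervalIntegrable (by fun_prop) _ _) fun x hx => ?_
    have S_nonneg := sineProd_nonneg hx.1 (mul_half_le_pi hx.2)
    have pointwise := sub_sq_le_sin_peak_sub_of_mid hτ
      ⟨hx.1, hx.2.trans (two_pi_div_le_mul_critical hn hτ.1)⟩ hj hjτ hε
    calc 0.3 * (sineProd n x * 1) + 0.01 * (sineProd n x * (1 - n / 1.27 * (x / τ - 1) ^ 2))
        = sineProd n x * (0.31 - 685.33 / 1.27 * (x / τ - 1) ^ 2) := by
          rw [show (n : ℝ) = 68533 by exact_mod_cast hn]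
          ring
      _ ≤ sineProd n x * (sin ((21654 + 1 / 2) * x) - ε * sin (j * x)) := by
          refine mul_le_mul_of_nonneg_left ?_ S_nonneg
          linarith [sq_nonneg (x / τ - 1)]
  rw [intervalIntegral.integral_add (Continuous.intervalIntegrable (by fun_prop) _ _)
    (Continuous.intervalIntegrable (by fun_prop) _ _), intervalIntegral.integral_const_mul,
    intervalIntegral.integral_const_mul] at comparison
  linarith

lemma mul_integral_le_integral_peak_sub_of_far (hn : n = 68533)
    (hτ : τ ∈ Set.Icc (2 * π / 86620) (2 * π / 86616)) (hB : scaledLogDeriv n τ = 0)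
    (hjτ : 2.3 * (π / 2) ≤ j * τ) (hε : |ε| ≤ 1) :
    0.0000001 * ∫ x in (0 : ℝ)..(2 * π / n), sineProd n x * 1 ≤
      ∫ x in (0 : ℝ)..(2 * π / n),
        sineProd n x * (sin ((21654 + 1 / 2) * x) - ε * sin (j * x)) := by
  have τ_pos : 0 < τ := lt_of_lt_of_le (by positivity) hτ.1
  obtain ⟨k, hk⟩ : ∃ k, k * τ = 1.1 * (π / 2) := ⟨_, div_mul_cancel₀ _ τ_pos.ne'⟩
  have variance := integral_sineProd_mul_sq_sub_one_nonneg hn hτ hB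
  have wide := integral_sineProd_mul_cos_sub_nonneg hn hτ hB hk hjτ hε
  have comparison : ∫ x in (0 : ℝ)..(2 * π / n), (0.0000001 * (sineProd n x * 1) +
        (0.0000002 * (sineProd n x * (300000 * (x / τ - 1) ^ 2 - 1)) +
          sineProd n x * (cos (k * (x - τ)) - ε * sin (j * x)))) ≤
      ∫ x in (0 : ℝ)..(2 * π / n),
        sineProd n x * (sin ((21654 + 1 / 2) * x) - ε * sin (j * x)) := by
    refine intervalIntegral.integral_mono_on (by positivity)
      (Continuous.intervalIntegrable (by fun_prop) _ _)
      (Continuous.intervalIntegrable (by fun_prop) _ _) fun x hx => ?_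
    have S_nonneg := sineProd_nonneg hx.1 (mul_half_le_pi hx.2)
    have gap := sq_sub_le_sin_peak_sub_cos hτ
      ⟨hx.1, hx.2.trans (two_pi_div_le_mul_critical hn hτ.1)⟩ hk
    calc 0.0000001 * (sineProd n x * 1) +
          (0.0000002 * (sineProd n x * (300000 * (x / τ - 1) ^ 2 - 1)) +
            sineProd n x * (cos (k * (x - τ)) - ε * sin (j * x)))
        = sineProd n x * (0.06 * (x / τ - 1) ^ 2 - 0.0000001 +
            (cos (k * (x - τ)) - ε * sin (j * x))) := by ring
      _ ≤ sineProd n x * (sin ((21654 + 1 / 2) * x) - ε * sin (j * x)) := by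
          gcongr
          linarith [sq_nonneg (x / τ - 1)]
  rw [intervalIntegral.integral_add (Continuous.intervalIntegrable (by fun_prop) _ _)
    (Continuous.intervalIntegrable (by fun_prop) _ _),
    intervalIntegral.integral_add (Continuous.intervalIntegrable (by fun_prop) _ _)
    (Continuous.intervalIntegrable (by fun_prop) _ _), intervalIntegral.integral_const_mul,
    intervalIntegral.integral_const_mul] at comparison
  linarith

lemma mul_integral_le_integral_peak_sub (hn : n = 68533) (hj : 34266.5 ≤ j) (hε : |ε| ≤ 1) :
    0.0000001 * ∫ x in (0 : ℝ)..(2 * π / n), sineProd n x * 1 ≤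
      ∫ x in (0 : ℝ)..(2 * π / n),
        sineProd n x * (sin ((21654 + 1 / 2) * x) - ε * sin (j * x)) := by
  obtain ⟨τ, hτ, hB⟩ := exists_scaledLogDeriv_eq_zero hn
  rcases le_total (j * τ) (2.3 * (π / 2)) with mid | far
  · have mass_nonneg : 0 ≤ ∫ x in (0 : ℝ)..(2 * π / n), sineProd n x * 1 :=
      intervalIntegral.integral_nonneg (by positivity) fun x hx => by
        rw [mul_one]
        exact sineProd_nonneg hx.1 (mul_half_le_pi hx.2)
    linarith [mul_integral_le_integral_peak_sub_of_mid hn hτ hB hj mid hε]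
  · exact mul_integral_le_integral_peak_sub_of_far hn hτ hB far hε

lemma mul_sineTransform_lt_peak (hn : n = 68533) (hj : 34266.5 ≤ j) (hε : |ε| ≤ 1) :
    ε * sineTransform n j < sineTransform n (21654 + 1 / 2) := by
  have difference_pos := integral_pos_of_mul_integral_le (n := n)
    (V := fun x => sin ((21654 + 1 / 2) * x) - ε * sin (j * x)) (W := fun _ => 1) (A := 2)
    (κ := 0.0000001) hn (by fun_prop) (by fun_prop)
    (fun x hx => pow_le_one₀ (div_nonneg hx.1 pi_pos.le)
      ((div_le_one pi_pos).2 (by linarith [hx.2, pi_pos])))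
    (fun _ _ => zero_le_one)
    (fun x => by
      have := abs_sub (sin ((21654 + 1 / 2) * x)) (ε * sin (j * x))
      have := (abs_mul_le_of_abs_le_one (x := sin (j * x)) hε).trans (abs_sin_le_one _)
      linarith [abs_sin_le_one ((21654 + 1 / 2) * x)])
    (by norm_num) (mul_integral_le_integral_peak_sub hn hj hε)
  refine lt_of_sub_pos (difference_pos.trans_eq ?_)
  unfold sineTransform
  rw [← intervalIntegral.integral_const_mul, ← intervalIntegral.integral_sub
    (Continuous.intervalIntegrable (by fun_prop) _ _)
    (Continuous.intervalIntegrable (by fun_prop) _ _)]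
  congr 1 with x
  ring

lemma abs_sineTransform_lt_peak (hn : n = 68533) (hj : 34266.5 ≤ j) :
    |sineTransform n j| < sineTransform n (21654 + 1 / 2) := by
  exact abs_lt.2 ⟨by linarith [mul_sineTransform_lt_peak hn hj (ε := -1) (by norm_num)],
    by linarith [mul_sineTransform_lt_peak hn hj (ε := 1) (by norm_num)]⟩

end LargeFrequency

/-! ### The largest coefficient -/

section Coefficients

variable {n i m : ℕ}

lemma sineTransform_neg (n : ℕ) (x : ℝ) : sineTransform n (-x) = -sineTransform n x := by
  simp only [sineTransform, neg_mul, sin_neg, mul_neg, intervalIntegral.integral_neg]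

lemma abs_sineTransform_lt_of_ne_peak (hn : n = 68533) (hm : m ≠ 21654) :
    |sineTransform n (m + 1 / 2)| < sineTransform n (21654 + 1 / 2) := by
  rcases le_or_gt m 34266 with low | high
  · have low_cast : (m : ℝ) ≤ 34266 := by exact_mod_cast low
    have positive := sineTransform_pos (j := m + 1 / 2) hn
      (by linarith [(m.cast_nonneg : (0 : ℝ) ≤ m)]) (by linarith)
    rw [abs_of_pos positive]
    exact sineTransform_lt_of_ne_peak hn low hm
  · have high_cast : (34267 : ℝ) ≤ m := by exact_mod_cast high
    exact abs_sineTransform_lt_peak hn (by linarith)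

lemma natAbs_a_mul_pi_eq_abs_sineTransform (hn : n = 68533) (hi : i ≤ n * (n + 1) / 2)
    (him : i + m = 1174210155 ∨ i = 1174210156 + m) :
    ((a n i).natAbs : ℝ) * π = |sineTransform n (m + 1 / 2)| := by
  rw [Nat.cast_natAbs, Int.cast_abs]
  nth_rw 1 [← abs_of_pos pi_pos]
  rw [← abs_mul, a_mul_pi_eq_sineTransform (by omega) hi,
    show (n : ℝ) = 68533 by exact_mod_cast hn]
  rcases him with before | after
  · have : (i : ℝ) + m = 1174210155 := by exact_mod_cast before
    congr 2
    norm_num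
    linarith
  · have : (i : ℝ) = 1174210156 + m := by exact_mod_cast after
    rw [← abs_neg, ← sineTransform_neg]
    congr 2
    norm_num
    linarith

lemma natAbs_a_peak_mul_pi (hn : n = 68533) :
    ((a n 1174188501).natAbs : ℝ) * π = sineTransform n (21654 + 1 / 2) := by
  rw [natAbs_a_mul_pi_eq_abs_sineTransform (m := 21654) hn (by rw [hn]; norm_num) (by norm_num),
    Nat.cast_ofNat, abs_of_pos (sineTransform_pos hn (by norm_num) (by norm_num))]

lemma natAbs_a_lt_peak (hn : n = 68533) (hi : i ≤ n * (n + 1) / 2)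
    (him : i + m = 1174210155 ∨ i = 1174210156 + m) (hm : m ≠ 21654) :
    (a n i).natAbs < (a n 1174188501).natAbs := by
  have scaled : ((a n i).natAbs : ℝ) * π < ((a n 1174188501).natAbs : ℝ) * π := by
    rw [natAbs_a_peak_mul_pi hn, natAbs_a_mul_pi_eq_abs_sineTransform hn hi him]
    exact abs_sineTransform_lt_of_ne_peak hn hm
  exact_mod_cast lt_of_mul_lt_mul_right scaled pi_pos.le

lemma natAbs_a_lt_peak_of_lt (hn : n = 68533) (hi : i < 1174188501) :
    (a n i).natAbs < (a n 1174188501).natAbs :=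
  natAbs_a_lt_peak (m := 1174210155 - i) hn (by rw [hn]; omega) (by omega) (by omega)

lemma natAbs_a_le_peak (hn : n = 68533) (hi : i ≤ n * (n + 1) / 2) :
    (a n i).natAbs ≤ (a n 1174188501).natAbs := by
  obtain ⟨m, him⟩ : ∃ m, i + m = 1174210155 ∨ i = 1174210156 + m :=
    ⟨1174210155 - i + (i - 1174210156), by omega⟩
  rcases eq_or_ne m 21654 with rfl | hm
  · have scaled : ((a n i).natAbs : ℝ) * π = ((a n 1174188501).natAbs : ℝ) * π := by
      rw [natAbs_a_mul_pi_eq_abs_sineTransform hn hi him,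
        natAbs_a_mul_pi_eq_abs_sineTransform (m := 21654) hn (by rw [hn]; norm_num) (by norm_num)]
    exact_mod_cast (mul_right_cancel₀ pi_ne_zero scaled).le
  · exact (natAbs_a_lt_peak hn hi him hm).le

lemma L_eq_of_natAbs_le_of_natAbs_lt {i₀ : ℕ} (hi₀ : i₀ ≤ n * (n + 1) / 2)
    (hle : ∀ i ≤ n * (n + 1) / 2, (a n i).natAbs ≤ (a n i₀).natAbs)
    (hlt : ∀ i < i₀, (a n i).natAbs < (a n i₀).natAbs) : L n = i₀ := by
  have maximum : M n = (a n i₀).natAbs :=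
    le_antisymm (Finset.sup_le fun i hi => hle i (Nat.lt_succ_iff.1 (mem_range.1 hi)))
      (Finset.le_sup (f := fun i => (a n i).natAbs) (mem_range.2 (Nat.lt_succ_of_le hi₀)))
  have least : IsLeast {i | (a n i).natAbs = M n} i₀ :=
    ⟨maximum.symm, fun i hi => not_lt.1 fun smaller => (hlt i smaller).ne (hi.trans maximum)⟩
  exact least.csInf_eq

end Coefficients

end SineProduct

/-- `L(68533) = (68533·68534 - 2·3735)/4 - 19787`, where `68533 = 5909 + 62624`. -/
theorem stmt_18 : L 68533 = (68533 * 68534 - 2 * 3735) / 4 - 19787 := by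
  rw [SineProduct.L_eq_of_natAbs_le_of_natAbs_lt (i₀ := 1174188501) (by norm_num)
    (fun _ => SineProduct.natAbs_a_le_peak rfl) (fun _ => SineProduct.natAbs_a_lt_peak_of_lt rfl)]
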